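/- (Interior Carleman estimate for the Schrödinger operator; Lemma 2 of the paper for compactly supported functions.) Let the coefficients satisfy a_{ℓj} = a_{jℓ} ∈ C¹(Q̄) real with uniform ellipticity, b_ℓ ∈ L^∞(Q) and c ∈ L^∞(Q) complex-valued, and let P(t,x,D)z = i∂_t z − Σ_{ℓ,j=1}^n ∂_{x_ℓ}(a_{ℓj}(t,x)∂_{x_j} z) + Σ_{ℓ=1}^n b_ℓ(t,x)∂_{x_ℓ} z + c(t,x) z. Let ψ ∈ C²(Q̄) be real-valued with ∇_xψ ≠ 0 on Q̄, satisfying: 4 Σ_{m,m̃,k,ℓ} a_{mk}a_{m̃ℓ} ξ_m ξ_{m̃} ∂²_{x_kx_ℓ}ψ − 2 Σ_{m,k} a_{mk} ∂_{x_m}ψ a_{(k)}(t,x,ξ',ξ') + 4 Σ_{m,k} a_{mk} ξ_m a_{(k)}(t,x,ξ',∇ψ) > 0 for all (t,x) ∈ Q̄ and ξ' ∈ ℝⁿ∖{0} with a(t,x,∇ψ,ξ') = 0. Then there exists λ̂ > 0 such that for every λ ≥ λ̂ there exist τ₀ > 0 and C > 0 such that for every τ ≥ τ₀ and every z ∈ C_c^∞((0,T)×Ω;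 ℂ): ∫_Q (τφ|∇_x z|² + τ³φ³|z|²) e^{2τα} dx dt ≤ C ∫_Q |P(t,x,D)z|² e^{2τα} dx dt. -/

import Mathlib

open Real

/-- Partial derivative along the `k`-th coordinate of a function on `ℝⁿ`. -/
noncomputable def pd {n : ℕ} {E : Type*} [NormedAddCommGroup E] [NormedSpace ℝ E]
    (k : Fin n) (F : (Fin n → ℝ) → E) (x : Fin n → ℝ) : E :=
  fderiv ℝ F x (Pi.single k 1)

/-- The quadratic form `a(t,x,u,v) = Σ_{k,j} a_{kj}(t,x) u_k v_j`. -/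
noncomputable def aF {n : ℕ} (a : Fin n → Fin n → ℝ → (Fin n → ℝ) → ℝ)
    (t : ℝ) (x u v : Fin n → ℝ) : ℝ :=
  ∑ k, ∑ j, a k j t x * u k * v j

/-- The derived quadratic form `a_{(p)}(t,x,u,v) = Σ_{k,j} ∂_{x_p} a_{kj}(t,x) u_k v_j`. -/
noncomputable def aD {n : ℕ} (a : Fin n → Fin n → ℝ → (Fin n → ℝ) → ℝ)
    (p : Fin n) (t : ℝ) (x u v : Fin n → ℝ) : ℝ :=
  ∑ k, ∑ j, pd p (fun y => a k j t y) x * u k * v j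

/-- Spatial gradient. -/
noncomputable def gradx {n : ℕ} (ψ : ℝ → (Fin n → ℝ) → ℝ) (t : ℝ) (x : Fin n → ℝ) :
    Fin n → ℝ :=
  fun k => pd k (ψ t) x

/-- Spatial Hessian entry `∂²_{x_k x_ℓ} ψ`. -/
noncomputable def hessx {n : ℕ} (ψ : ℝ → (Fin n → ℝ) → ℝ) (t : ℝ) (x : Fin n → ℝ)
    (k l : Fin n) : ℝ :=
  pd l (fun y => pd k (ψ t) y) x

/-- The symbol `q_Ψ(t,x,ξ',τ)`. -/
noncomputable def qSym {n : ℕ} (a : Fin n → Fin n → ℝ → (Fin n → ℝ) → ℝ)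
    (Ψ : ℝ → (Fin n → ℝ) → ℝ) (t : ℝ) (x ξ : Fin n → ℝ) (τ : ℝ) : ℝ :=
  4 * ∑ m, ∑ m', ∑ k, ∑ l, a m k t x * a m' l t x
      * (ξ m * ξ m' + τ ^ 2 * gradx Ψ t x m * gradx Ψ t x m') * hessx Ψ t x k l
  - 2 * ∑ m, ∑ k, a m k t x * gradx Ψ t x m
      * (aD a k t x ξ ξ - τ ^ 2 * aD a k t x (gradx Ψ t x) (gradx Ψ t x))
  + 4 * ∑ m, ∑ k, a m k t x * ξ m * aD a k t x ξ (gradx Ψ t x)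

open MeasureTheory

/-- The Schrödinger operator
`P z = i∂_t z − Σ_{ℓ,j} ∂_{x_ℓ}(a_{ℓj}∂_{x_j} z) + Σ_ℓ b_ℓ ∂_{x_ℓ} z + c z`. -/
noncomputable def SchOp {n : ℕ} (a : Fin n → Fin n → ℝ → (Fin n → ℝ) → ℝ)
    (b : Fin n → ℝ → (Fin n → ℝ) → ℂ) (c : ℝ → (Fin n → ℝ) → ℂ)
    (z : ℝ × (Fin n → ℝ) → ℂ) (p : ℝ × (Fin n → ℝ)) : ℂ :=
  Complex.I * deriv (fun s => z (s, p.2)) p.1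
  - ∑ l, ∑ j, pd l (fun y => ((a l j p.1 y : ℝ) : ℂ) * pd j (fun y' => z (p.1, y')) y) p.2
  + ∑ l, b l p.1 p.2 * pd l (fun y => z (p.1, y)) p.2
  + c p.1 p.2 * z p

/-!
Conjugating `i ∂ₜ - div (A ∇·)` with `e^η`, where `η = (τ / t) f` and `f = e^{λψ} - const`, splits
it into the symmetric part `i ∂ₜ - div (A ∇·) - ⟪A ∇η, ∇η⟫` and the skew-symmetric part
`2 X·∇ + div X - i ∂ₜη` with `X = A ∇η`. Twice their pointwise product is at most the square of the
conjugated operator. After integration by parts the product becomes a density whose leading terms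
are the commutator form of `X`, of size `τ / t`, applied to the gradient, and
`⟪X, ∇⟪A ∇η, ∇η⟫⟫`, of size `(τ / t)³`, times the squared modulus. Both are coercive for large `λ`:
the exponential adds to the commutator form of `A ∇ψ` a large multiple of `⟪A ∇ψ, ξ⟫²`, which
upgrades positivity on the hyperplane `⟪A ∇ψ, ξ⟫ = 0` to positivity for all `ξ`. All other terms,
among them those with `b` and `c`, are absorbed for large `τ`.

Integrating by parts requires `∇ div X`, but `A ∇η` is only `C¹`. The field `X` is therefore taken
to be a spatial mollification of `A ∇η` at scale `N t / τ`: its divergence is `C¹` with gradient of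
size `(τ / t)² / N`, which is absorbed for large `N`, while `X - A ∇η` is bounded uniformly in `τ`.
-/

open Set Filter Topology
open scoped InnerProductSpace

noncomputable section

section GradientDivergence

variable {E V : Type*} [NormedAddCommGroup E] [NormedSpace ℝ E]
  [NormedAddCommGroup V] [InnerProductSpace ℝ V]

/-- The divergence of a `V`-valued field in the directions `e v`, `v : V`: the trace of
`v ↦ ∂_{e v} X`. -/
def divAlong (e : V →L[ℝ] E) (X : E → V) (p : E) : ℝ :=
  LinearMap.trace ℝ V (((fderiv ℝ X p).comp e : V →L[ℝ] V) : V →ₗ[ℝ] V)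

variable {e : V →L[ℝ] E} {f g : E → ℝ} {X Y : E → V} {p : E}

lemma divAlong_eq_sum_inner {ι : Type*} [Fintype ι] (b : OrthonormalBasis ι ℝ V) :
    divAlong e X p = ∑ i, ⟪b i, fderiv ℝ X p (e (b i))⟫_ℝ :=
  LinearMap.trace_eq_sum_inner _ b

lemma divAlong_sub (hX : DifferentiableAt ℝ X p) (hY : DifferentiableAt ℝ Y p) :
    divAlong e (fun q => X q - Y q) p = divAlong e X p - divAlong e Y p := by
  simp [divAlong, fderiv_fun_sub hX hY, ContinuousLinearMap.sub_comp]

lemma divAlong_congr (h : X =ᶠ[𝓝 p] Y) : divAlong e X p = divAlong e Y p := by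
  simp only [divAlong, h.fderiv_eq]

variable [FiniteDimensional ℝ V]

/-- The gradient of `f` in the directions `e v`, `v : V`: the vector of `V` that represents the
linear form `v ↦ ∂_{e v} f`. -/
def gradAlong (e : V →L[ℝ] E) (f : E → ℝ) (p : E) : V :=
  ∑ i, fderiv ℝ f p (e (stdOrthonormalBasis ℝ V i)) • stdOrthonormalBasis ℝ V i

lemma inner_gradAlong (v : V) : ⟪gradAlong e f p, v⟫_ℝ = fderiv ℝ f p (e v) := by
  conv_rhs => rw [← (stdOrthonormalBasis ℝ V).sum_repr' v]
  simp only [gradAlong, sum_inner, inner_smul_left, map_sum, map_smul, smul_eq_mul]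
  exact Finset.sum_congr rfl fun i _ => by simp [mul_comm]

lemma gradAlong_eq_of_forall_fderiv {w : V} (h : ∀ v, fderiv ℝ f p (e v) = ⟪w, v⟫_ℝ) :
    gradAlong e f p = w :=
  ext_inner_right ℝ fun v => by rw [inner_gradAlong, h]

lemma gradAlong_congr (h : f =ᶠ[𝓝 p] g) : gradAlong e f p = gradAlong e g p := by
  simp only [gradAlong, h.fderiv_eq]

lemma gradAlong_mul (hf : DifferentiableAt ℝ f p) (hg : DifferentiableAt ℝ g p) :
    gradAlong e (fun q => f q * g q) p = f p • gradAlong e g p + g p • gradAlong e f p :=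
  gradAlong_eq_of_forall_fderiv fun v => by
    simp [fderiv_fun_mul hf hg, inner_add_left, inner_smul_left, inner_gradAlong]

lemma contDiffAt_gradAlong {n : ℕ∞} (hf : ContDiffAt ℝ (n + 1) f p) :
    ContDiffAt ℝ n (gradAlong e f) p :=
  ContDiffAt.sum fun _ _ =>
    ((hf.fderiv_right le_rfl).clm_apply contDiffAt_const).smul contDiffAt_const

lemma inner_fderiv_gradAlong (hf : ContDiffAt ℝ 2 f p) (x : E) (v : V) :
    ⟪fderiv ℝ (gradAlong e f) p x, v⟫_ℝ = fderiv ℝ (fderiv ℝ f) p x (e v) := by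
  have hgrad : DifferentiableAt ℝ (gradAlong e f) p :=
    (contDiffAt_gradAlong (n := 1) hf).differentiableAt (by norm_num)
  have hfderiv : DifferentiableAt ℝ (fderiv ℝ f) p :=
    (hf.fderiv_right (m := 1) le_rfl).differentiableAt (by norm_num)
  have h := congrArg (fun L : E →L[ℝ] ℝ => L x) (congrArg (fun F => fderiv ℝ F p)
    (funext fun q => inner_gradAlong (e := e) (f := f) (p := q) v))
  simpa [fderiv_inner_apply ℝ hgrad (differentiableAt_const v),
    fderiv_clm_apply hfderiv (differentiableAt_const (e v))] using h

lemma inner_fderiv_gradAlong_comm (hf : ContDiffAt ℝ 2 f p) (v w : V) :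
    ⟪fderiv ℝ (gradAlong e f) p (e v), w⟫_ℝ = ⟪fderiv ℝ (gradAlong e f) p (e w), v⟫_ℝ := by
  rw [inner_fderiv_gradAlong hf, inner_fderiv_gradAlong hf,
    (hf.isSymmSndFDerivAt (by simp)).eq]

lemma fderiv_gradAlong_apply (hf : ContDiffAt ℝ 2 f p) (x : E) :
    fderiv ℝ (gradAlong e f) p x = gradAlong e (fun q => fderiv ℝ f q x) p := by
  have hfderiv : DifferentiableAt ℝ (fderiv ℝ f) p :=
    (hf.fderiv_right (m := 1) le_rfl).differentiableAt (by norm_num)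
  refine (gradAlong_eq_of_forall_fderiv fun v => ?_).symm
  rw [inner_fderiv_gradAlong hf, (hf.isSymmSndFDerivAt (by simp)).eq,
    fderiv_clm_apply hfderiv (differentiableAt_const x)]
  simp

lemma divAlong_smul (hf : DifferentiableAt ℝ f p) (hX : DifferentiableAt ℝ X p) :
    divAlong e (fun q => f q • X q) p = f p * divAlong e X p + ⟪gradAlong e f p, X p⟫_ℝ := by
  simp only [divAlong_eq_sum_inner (stdOrthonormalBasis ℝ V), fderiv_fun_smul hf hX]
  simp only [_root_.add_apply, _root_.smul_apply,
    ContinuousLinearMap.smulRight_apply, inner_add_right, inner_smul_right,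
    Finset.sum_add_distrib, Finset.mul_sum, gradAlong, sum_inner, inner_smul_left]
  simp

end GradientDivergence

section NullIntegrals

lemma contDiff_of_isClosed_of_eq_zero {E : Type*} [NormedAddCommGroup E] [NormedSpace ℝ E]
    {f : E → ℝ} {S : Set E} {n : ℕ∞} (hS : IsClosed S)
    (hf : ∀ p ∈ S, ContDiffAt ℝ n f p) (hf₀ : ∀ p ∉ S, f p = 0) : ContDiff ℝ n f := by
  refine contDiff_iff_contDiffAt.2 fun p => (em (p ∈ S)).elim (hf p) fun hp => ?_
  exact contDiffAt_const.congr_of_eventuallyEq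
    (eventually_of_mem (hS.isOpen_compl.mem_nhds hp) hf₀)

variable {E V : Type*} [MeasurableSpace E] {μ : Measure E} {S : Set E} {c d : E → ℝ}

/-- `d` is integrable on `S` with integral zero. The divergence terms that an integration by parts
discards have this property. -/
def IntegratesToZeroOn (μ : Measure E) (S : Set E) (d : E → ℝ) : Prop :=
  IntegrableOn d S μ ∧ ∫ p in S, d p ∂μ = 0

namespace IntegratesToZeroOn

lemma add (hc : IntegratesToZeroOn μ S c) (hd : IntegratesToZeroOn μ S d) :
    IntegratesToZeroOn μ S (fun p => c p + d p) :=
  ⟨hc.1.add hd.1, by rw [integral_add hc.1 hd.1, hc.2, hd.2, add_zero]⟩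

lemma sub (hc : IntegratesToZeroOn μ S c) (hd : IntegratesToZeroOn μ S d) :
    IntegratesToZeroOn μ S (fun p => c p - d p) :=
  ⟨hc.1.sub hd.1, by rw [integral_sub hc.1 hd.1, hc.2, hd.2, sub_zero]⟩

lemma congr (hc : IntegratesToZeroOn μ S c) (hS : MeasurableSet S) (h : EqOn c d S) :
    IntegratesToZeroOn μ S d :=
  ⟨hc.1.congr_fun h hS, (setIntegral_congr_fun hS h).symm.trans hc.2⟩

end IntegratesToZeroOn

variable [NormedAddCommGroup E] [NormedSpace ℝ E] [FiniteDimensional ℝ E] [BorelSpace E]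
  [μ.IsAddHaarMeasure] {f : E → ℝ}

lemma integratesToZeroOn_fderiv_apply (hS : IsCompact S) (hf : ∀ p ∈ S, ContDiffAt ℝ 1 f p)
    (hf₀ : ∀ p ∉ S, f p = 0) (v : E) :
    IntegratesToZeroOn μ S (fun p => fderiv ℝ f p v) := by
  have hsupp : tsupport f ⊆ S :=
    closure_minimal (fun p hp => not_imp_comm.1 (hf₀ p) hp) hS.isClosed
  have hfC : ContDiff ℝ 1 f := contDiff_of_isClosed_of_eq_zero hS.isClosed hf hf₀
  have hfc : HasCompactSupport f := HasCompactSupport.intro hS hf₀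
  have hcont : Continuous fun p => fderiv ℝ f p v :=
    (hfC.continuous_fderiv (by norm_num)).clm_apply continuous_const
  have hint : Integrable (fun p => fderiv ℝ f p v) μ :=
    hcont.integrable_of_hasCompactSupport (hfc.fderiv_apply ℝ v)
  refine ⟨hint.integrableOn, ?_⟩
  rw [setIntegral_eq_integral_of_forall_compl_eq_zero fun p hp => by
    rw [fderiv_of_notMem_tsupport ℝ fun h => hp (hsupp h)]; rfl]
  simpa using integral_mul_fderiv_eq_neg_fderiv_mul_of_integrable (μ := μ) (f := fun _ => 1)
    (g := f) (v := v) (by simp) (by simpa using hint)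
    (by simpa using hfC.continuous.integrable_of_hasCompactSupport hfc)
    (fun _ _ => differentiableAt_const 1) (fun _ _ => hfC.differentiable (by norm_num) _)

variable [NormedAddCommGroup V] [InnerProductSpace ℝ V] [FiniteDimensional ℝ V]

lemma integratesToZeroOn_divAlong {e : V →L[ℝ] E} {X : E → V} (hS : IsCompact S)
    (hX : ∀ p ∈ S, ContDiffAt ℝ 1 X p) (hX₀ : ∀ p ∉ S, X p = 0) :
    IntegratesToZeroOn μ S (divAlong e X) := by
  let b := stdOrthonormalBasis ℝ V
  have hcomp : ∀ i, IntegratesToZeroOn μ S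
      (fun p => fderiv ℝ (fun q => ⟪b i, X q⟫_ℝ) p (e (b i))) := fun i =>
    integratesToZeroOn_fderiv_apply hS (fun p hp => contDiffAt_const.inner ℝ (hX p hp))
      (fun p hp => by simp [hX₀ p hp]) _
  have hsum : IntegratesToZeroOn μ S
      (fun p => ∑ i, fderiv ℝ (fun q => ⟪b i, X q⟫_ℝ) p (e (b i))) :=
    ⟨integrable_finsetSum _ fun i _ => (hcomp i).1, by
      rw [integral_finsetSum _ fun i _ => (hcomp i).1, Finset.sum_eq_zero fun i _ => (hcomp i).2]⟩
  refine hsum.congr hS.measurableSet fun p hp => ?_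
  have hXp : DifferentiableAt ℝ X p := (hX p hp).differentiableAt (by norm_num)
  simp [divAlong_eq_sum_inner b, fderiv_inner_apply ℝ (differentiableAt_const _) hXp]

end NullIntegrals

section EnergyIdentity

variable {E V : Type*} [NormedAddCommGroup E] [NormedSpace ℝ E]
  [NormedAddCommGroup V] [InnerProductSpace ℝ V]

/-- The quadratic form `ξ ↦ 2⟪∂_{Aξ} X, ξ⟫ - ⟪(∂_X A) ξ, ξ⟫` produced by the commutator of
`div (A ∇·)` with the first-order operator `2 X·∇ + div X`. For `X = A ∇ψ` it is half of the
form in the pseudoconvexity condition on `ψ`. -/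
def virialForm (e : V →L[ℝ] E) (A : E → V →L[ℝ] V) (X : E → V) (p : E) (ξ : V) : ℝ :=
  2 * ⟪fderiv ℝ X p (e (A p ξ)), ξ⟫_ℝ - ⟪fderiv ℝ A p (e (X p)) ξ, ξ⟫_ℝ

lemma fderiv_inner_clm_apply_self {A : E → V →L[ℝ] V} {U : E → V} {p : E}
    (hsymm : ∀ x y, ⟪A p x, y⟫_ℝ = ⟪x, A p y⟫_ℝ)
    (hA : DifferentiableAt ℝ A p) (hU : DifferentiableAt ℝ U p) (x : E) :
    fderiv ℝ (fun q => ⟪A q (U q), U q⟫_ℝ) p x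
      = ⟪fderiv ℝ A p x (U p), U p⟫_ℝ + 2 * ⟪fderiv ℝ U p x, A p (U p)⟫_ℝ := by
  rw [fderiv_inner_apply ℝ (hA.clm_apply hU) hU, fderiv_clm_apply hA hU]
  simp only [_root_.add_apply, ContinuousLinearMap.comp_apply, ContinuousLinearMap.flip_apply,
    inner_add_left, hsymm]
  rw [← hsymm (U p), real_inner_comm (fderiv ℝ U p x)]
  ring

variable [FiniteDimensional ℝ V]

/-- The second-order operator `u ↦ div (A ∇u)`. -/
def divGrad (e : V →L[ℝ] E) (A : E → V →L[ℝ] V) (u : E → ℝ) (p : E) : ℝ :=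
  divAlong e (fun q => A q (gradAlong e u q)) p

/-- The skew-adjoint first-order operator `u ↦ 2 X·∇u + (div X) u`. -/
def skewField (e : V →L[ℝ] E) (X : E → V) (u : E → ℝ) (p : E) : ℝ :=
  2 * ⟪X p, gradAlong e u p⟫_ℝ + divAlong e X p * u p

/-- The current `u ∇v - v ∇u` of the complex-valued function `u + i v`. -/
def current (e : V →L[ℝ] E) (u v : E → ℝ) (p : E) : V :=
  u p • gradAlong e v p - v p • gradAlong e u p

variable {e₀ : E} {e : V →L[ℝ] E} {A : E → V →L[ℝ] V} {X : E → V} {D h u v : E → ℝ} {p : E}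

lemma differentiableAt_gradAlong (hu : ContDiffAt ℝ 2 u p) :
    DifferentiableAt ℝ (gradAlong e u) p :=
  (contDiffAt_gradAlong (n := 1) hu).differentiableAt (by norm_num)

lemma fderiv_skewField_apply (hX : DifferentiableAt ℝ X p)
    (hdiv : DifferentiableAt ℝ (divAlong e X) p) (hu : ContDiffAt ℝ 2 u p) (w : V) :
    fderiv ℝ (skewField e X u) p (e w) = 2 * ⟪fderiv ℝ X p (e w), gradAlong e u p⟫_ℝ
      + 2 * ⟪fderiv ℝ (gradAlong e u) p (e (X p)), w⟫_ℝ
      + ⟪gradAlong e (divAlong e X) p, w⟫_ℝ * u p + divAlong e X p * ⟪gradAlong e u p, w⟫_ℝ := by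
  have hgrad := differentiableAt_gradAlong (e := e) hu
  have hu₁ : DifferentiableAt ℝ u p := hu.differentiableAt (by norm_num)
  unfold skewField
  rw [fderiv_fun_add ((hX.inner ℝ hgrad).const_mul 2) (hdiv.fun_mul hu₁),
    fderiv_const_mul (hX.inner ℝ hgrad), fderiv_fun_mul hdiv hu₁]
  simp only [_root_.add_apply, _root_.smul_apply, smul_eq_mul, fderiv_inner_apply ℝ hX hgrad,
    inner_gradAlong]
  rw [real_inner_comm (fderiv ℝ (gradAlong e u) p (e w)), inner_fderiv_gradAlong_comm hu]
  ring

lemma neg_divGrad_mul_skewField (hsymm : ∀ x y, ⟪A p x, y⟫_ℝ = ⟪x, A p y⟫_ℝ)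
    (hA : DifferentiableAt ℝ A p) (hX : DifferentiableAt ℝ X p)
    (hdiv : DifferentiableAt ℝ (divAlong e X) p) (hu : ContDiffAt ℝ 2 u p) :
    -divGrad e A u p * skewField e X u p
      = virialForm e A X p (gradAlong e u p)
        + u p * ⟪A p (gradAlong e u p), gradAlong e (divAlong e X) p⟫_ℝ
        + (divAlong e (fun q => ⟪A q (gradAlong e u q), gradAlong e u q⟫_ℝ • X q) p
          - divAlong e (fun q => skewField e X u q • A q (gradAlong e u q)) p) := by
  have hgrad := differentiableAt_gradAlong (e := e) hu
  have hu₁ : DifferentiableAt ℝ u p := hu.differentiableAt (by norm_num)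
  have hflux := hA.clm_apply hgrad
  have hskew : DifferentiableAt ℝ (skewField e X u) p :=
    ((hX.inner ℝ hgrad).const_mul 2).add (hdiv.mul hu₁)
  rw [divAlong_smul (hflux.inner ℝ hgrad) hX, divAlong_smul hskew hflux,
    inner_gradAlong (f := fun q => ⟪A q (gradAlong e u q), gradAlong e u q⟫_ℝ),
    inner_gradAlong (f := skewField e X u), fderiv_inner_clm_apply_self hsymm hA hgrad,
    fderiv_skewField_apply hX hdiv hu, virialForm, divGrad, skewField,
    real_inner_comm (gradAlong e (divAlong e X) p), real_inner_comm (gradAlong e u p) (X p),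
    real_inner_comm (gradAlong e u p) (A p (gradAlong e u p))]
  ring

lemma neg_mul_skewField_self (hD : DifferentiableAt ℝ D p) (hX : DifferentiableAt ℝ X p)
    (hu : DifferentiableAt ℝ u p) :
    -(D p * u p) * skewField e X u p
      = ⟪X p, gradAlong e D p⟫_ℝ * u p ^ 2 - divAlong e (fun q => (D q * u q ^ 2) • X q) p := by
  have hgrad : gradAlong e (fun q => D q * u q ^ 2) p
      = (2 * D p * u p) • gradAlong e u p + u p ^ 2 • gradAlong e D p := by
    simp only [pow_two]
    rw [gradAlong_mul hD (hu.fun_mul hu), gradAlong_mul hu hu]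
    module
  rw [divAlong_smul (hD.fun_mul (hu.fun_pow 2)) hX, hgrad, skewField, inner_add_left,
    real_inner_smul_left, real_inner_smul_left, real_inner_comm (X p), real_inner_comm (X p)]
  ring

lemma neg_fderiv_mul_skewField_add (hX : DifferentiableAt ℝ X p) (hu : ContDiffAt ℝ 2 u p)
    (hv : ContDiffAt ℝ 2 v p) :
    -fderiv ℝ v p e₀ * skewField e X u p + fderiv ℝ u p e₀ * skewField e X v p
      = -⟪fderiv ℝ X p e₀, current e u v p⟫_ℝ
        + (fderiv ℝ (fun q => ⟪X q, current e u v q⟫_ℝ) p e₀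
          - divAlong e (fun q => (u q * fderiv ℝ v q e₀ - v q * fderiv ℝ u q e₀) • X q) p) := by
  have hgu := differentiableAt_gradAlong (e := e) hu
  have hgv := differentiableAt_gradAlong (e := e) hv
  have hu₁ : DifferentiableAt ℝ u p := hu.differentiableAt (by norm_num)
  have hv₁ : DifferentiableAt ℝ v p := hv.differentiableAt (by norm_num)
  have hut : DifferentiableAt ℝ (fun q => fderiv ℝ u q e₀) p :=
    ((hu.fderiv_right (m := 1) le_rfl).differentiableAt (by norm_num)).clm_apply
      (differentiableAt_const e₀)
  have hvt : DifferentiableAt ℝ (fun q => fderiv ℝ v q e₀) p :=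
    ((hv.fderiv_right (m := 1) le_rfl).differentiableAt (by norm_num)).clm_apply
      (differentiableAt_const e₀)
  have hcurrent : DifferentiableAt ℝ (current e u v) p := (hu₁.smul hgv).sub (hv₁.smul hgu)
  have hcurrent_e₀ : fderiv ℝ (current e u v) p e₀
      = u p • gradAlong e (fun q => fderiv ℝ v q e₀) p + fderiv ℝ u p e₀ • gradAlong e v p
        - (v p • gradAlong e (fun q => fderiv ℝ u q e₀) p
          + fderiv ℝ v p e₀ • gradAlong e u p) := by
    unfold current
    rw [fderiv_fun_sub (hu₁.fun_smul hgv) (hv₁.fun_smul hgu), fderiv_fun_smul hu₁ hgv,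
      fderiv_fun_smul hv₁ hgu]
    simp [fderiv_gradAlong_apply hu, fderiv_gradAlong_apply hv]
  simp only [sub_smul]
  rw [divAlong_sub ((hu₁.fun_mul hvt).fun_smul hX) ((hv₁.fun_mul hut).fun_smul hX),
    divAlong_smul (hu₁.fun_mul hvt) hX, divAlong_smul (hv₁.fun_mul hut) hX,
    gradAlong_mul hu₁ hvt, gradAlong_mul hv₁ hut, fderiv_inner_apply ℝ hX hcurrent, hcurrent_e₀]
  simp only [skewField, inner_add_right, inner_sub_right, real_inner_smul_right,
    real_inner_comm (X p)]
  ring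

lemma divAlong_clm_current (hsymm : ∀ x y, ⟪A p x, y⟫_ℝ = ⟪x, A p y⟫_ℝ)
    (hA : DifferentiableAt ℝ A p) (hu : ContDiffAt ℝ 2 u p) (hv : ContDiffAt ℝ 2 v p) :
    divAlong e (fun q => A q (current e u v q)) p
      = u p * divGrad e A v p - v p * divGrad e A u p := by
  have hflux_u := hA.clm_apply (differentiableAt_gradAlong (e := e) hu)
  have hflux_v := hA.clm_apply (differentiableAt_gradAlong (e := e) hv)
  have hu₁ : DifferentiableAt ℝ u p := hu.differentiableAt (by norm_num)
  have hv₁ : DifferentiableAt ℝ v p := hv.differentiableAt (by norm_num)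
  simp only [current, map_sub, map_smul]
  rw [divAlong_sub (hu₁.fun_smul hflux_v) (hv₁.fun_smul hflux_u), divAlong_smul hu₁ hflux_v,
    divAlong_smul hv₁ hflux_u, ← hsymm, real_inner_comm, divGrad, divGrad]
  ring

lemma transport_identity (hsymm : ∀ x y, ⟪A p x, y⟫_ℝ = ⟪x, A p y⟫_ℝ)
    (hA : DifferentiableAt ℝ A p) (hh : DifferentiableAt ℝ h p) (hu : ContDiffAt ℝ 2 u p)
    (hv : ContDiffAt ℝ 2 v p) :
    (-fderiv ℝ v p e₀ - divGrad e A u p) * (h p * v p)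
        - (fderiv ℝ u p e₀ - divGrad e A v p) * (h p * u p)
      = fderiv ℝ h p e₀ * (u p ^ 2 + v p ^ 2) / 2
        - ⟪A p (gradAlong e h p), current e u v p⟫_ℝ
        + (divAlong e (fun q => h q • A q (current e u v q)) p
          - fderiv ℝ (fun q => h q * ((u q ^ 2 + v q ^ 2) / 2)) p e₀) := by
  have hu₁ : DifferentiableAt ℝ u p := hu.differentiableAt (by norm_num)
  have hv₁ : DifferentiableAt ℝ v p := hv.differentiableAt (by norm_num)
  have hcurrent : DifferentiableAt ℝ (current e u v) p :=
    (hu₁.smul (differentiableAt_gradAlong hv)).sub (hv₁.smul (differentiableAt_gradAlong hu))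
  have hmass : HasFDerivAt (fun q => (u q ^ 2 + v q ^ 2) / 2)
      (u p • fderiv ℝ u p + v p • fderiv ℝ v p) p := by
    simp only [div_eq_mul_inv]
    refine (((hu₁.hasFDerivAt.pow 2).fun_add (hv₁.hasFDerivAt.pow 2)).mul_const 2⁻¹).congr_fderiv ?_
    simp only [Nat.reduceSub, pow_one, nsmul_eq_mul, Nat.cast_ofNat]
    module
  rw [divAlong_smul hh (hA.clm_apply hcurrent), divAlong_clm_current hsymm hA hu hv, ← hsymm,
    fderiv_fun_mul hh hmass.differentiableAt, hmass.fderiv]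
  simp only [_root_.add_apply, _root_.smul_apply, smul_eq_mul]
  ring

end EnergyIdentity

section IntegratedEnergyIdentity

variable {E V : Type*} [NormedAddCommGroup E] [NormedSpace ℝ E]
  [NormedAddCommGroup V] [InnerProductSpace ℝ V] [FiniteDimensional ℝ V]

/-- The pointwise product, in `ℂ = ℝ²`, of the symmetric part `i ∂ₜ - div (A ∇·) - D` and the
skew-symmetric part `2 X·∇ + div X - i h` of a conjugated operator, applied to `u + i v`. Here
`∂ₜ` is the derivative in the direction `e₀`. -/
def crossTerm (e₀ : E) (e : V →L[ℝ] E) (A : E → V →L[ℝ] V) (X : E → V) (D h u v : E → ℝ)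
    (p : E) : ℝ :=
  (-fderiv ℝ v p e₀ - divGrad e A u p - D p * u p) * (skewField e X u p + h p * v p)
    + (fderiv ℝ u p e₀ - divGrad e A v p - D p * v p) * (skewField e X v p - h p * u p)

/-- The density that `crossTerm` becomes after integration by parts. -/
def energyDensity (e₀ : E) (e : V →L[ℝ] E) (A : E → V →L[ℝ] V) (X : E → V) (D h u v : E → ℝ)
    (p : E) : ℝ :=
  virialForm e A X p (gradAlong e u p) + virialForm e A X p (gradAlong e v p)
    + ⟪X p, gradAlong e D p⟫_ℝ * (u p ^ 2 + v p ^ 2)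
    + u p * ⟪A p (gradAlong e u p), gradAlong e (divAlong e X) p⟫_ℝ
    + v p * ⟪A p (gradAlong e v p), gradAlong e (divAlong e X) p⟫_ℝ
    - ⟪fderiv ℝ X p e₀, current e u v p⟫_ℝ
    + fderiv ℝ h p e₀ * (u p ^ 2 + v p ^ 2) / 2
    - ⟪A p (gradAlong e h p), current e u v p⟫_ℝ

variable {e₀ : E} {e : V →L[ℝ] E} {A : E → V →L[ℝ] V} {X : E → V} {D h u v : E → ℝ} {p : E}
  {S : Set E}

lemma crossTerm_sub_energyDensity_eq (hsymm : ∀ x y, ⟪A p x, y⟫_ℝ = ⟪x, A p y⟫_ℝ)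
    (hA : DifferentiableAt ℝ A p) (hX : DifferentiableAt ℝ X p)
    (hdiv : DifferentiableAt ℝ (divAlong e X) p) (hD : DifferentiableAt ℝ D p)
    (hh : DifferentiableAt ℝ h p) (hu : ContDiffAt ℝ 2 u p) (hv : ContDiffAt ℝ 2 v p) :
    crossTerm e₀ e A X D h u v p - energyDensity e₀ e A X D h u v p
      = (divAlong e (fun q => ⟪A q (gradAlong e u q), gradAlong e u q⟫_ℝ • X q) p
          - divAlong e (fun q => skewField e X u q • A q (gradAlong e u q)) p)
        + (divAlong e (fun q => ⟪A q (gradAlong e v q), gradAlong e v q⟫_ℝ • X q) p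
          - divAlong e (fun q => skewField e X v q • A q (gradAlong e v q)) p)
        - divAlong e (fun q => (D q * u q ^ 2) • X q) p
        - divAlong e (fun q => (D q * v q ^ 2) • X q) p
        + (fderiv ℝ (fun q => ⟪X q, current e u v q⟫_ℝ) p e₀
          - divAlong e (fun q => (u q * fderiv ℝ v q e₀ - v q * fderiv ℝ u q e₀) • X q) p)
        + (divAlong e (fun q => h q • A q (current e u v q)) p
          - fderiv ℝ (fun q => h q * ((u q ^ 2 + v q ^ 2) / 2)) p e₀) := by
  have hu₁ : DifferentiableAt ℝ u p := hu.differentiableAt (by norm_num)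
  have hv₁ : DifferentiableAt ℝ v p := hv.differentiableAt (by norm_num)
  unfold crossTerm energyDensity
  linear_combination neg_divGrad_mul_skewField hsymm hA hX hdiv hu
    + neg_divGrad_mul_skewField hsymm hA hX hdiv hv
    + neg_mul_skewField_self (e := e) hD hX hu₁ + neg_mul_skewField_self (e := e) hD hX hv₁
    + neg_fderiv_mul_skewField_add (e₀ := e₀) (e := e) hX hu hv
    + transport_identity (e₀ := e₀) (e := e) hsymm hA hh hu hv

lemma gradAlong_eq_zero_of_notMem_tsupport (hp : p ∉ tsupport u) : gradAlong e u p = 0 :=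
  gradAlong_eq_of_forall_fderiv fun v => by
    rw [fderiv_of_notMem_tsupport ℝ hp, inner_zero_left]; rfl

lemma contDiff_gradAlong {n : ℕ∞} (hu : ContDiff ℝ (n + 1) u) :
    ContDiff ℝ n (gradAlong e u) :=
  contDiff_iff_contDiffAt.2 fun _ => contDiffAt_gradAlong hu.contDiffAt

variable [FiniteDimensional ℝ E] [MeasurableSpace E] [BorelSpace E] {μ : Measure E}
  [μ.IsAddHaarMeasure]

lemma integratesToZeroOn_virial_divergence (hS : IsCompact S) (hA : ContDiff ℝ 1 A)
    (hX : ∀ p ∈ S, ContDiffAt ℝ 1 X p) (hdiv : ∀ p ∈ S, ContDiffAt ℝ 1 (divAlong e X) p)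
    (hu : ContDiff ℝ 2 u) (huS : tsupport u ⊆ S) :
    IntegratesToZeroOn μ S fun p =>
      divAlong e (fun q => ⟪A q (gradAlong e u q), gradAlong e u q⟫_ℝ • X q) p
        - divAlong e (fun q => skewField e X u q • A q (gradAlong e u q)) p := by
  have hgrad : ContDiff ℝ 1 (gradAlong e u) := contDiff_gradAlong hu
  have hflux : ContDiff ℝ 1 fun q => A q (gradAlong e u q) := hA.clm_apply hgrad
  have hu₁ : ContDiff ℝ 1 u := hu.of_le one_le_two
  have hskew : ∀ p ∈ S, ContDiffAt ℝ 1 (skewField e X u) p := fun p hp =>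
    (contDiffAt_const.mul ((hX p hp).inner ℝ hgrad.contDiffAt)).add
      ((hdiv p hp).mul hu₁.contDiffAt)
  refine (integratesToZeroOn_divAlong hS (fun p hp => ?_) fun p hp => ?_).sub
    (integratesToZeroOn_divAlong hS (fun p hp => ?_) fun p hp => ?_)
  · exact (hflux.inner ℝ hgrad).contDiffAt.smul (hX p hp)
  · simp [gradAlong_eq_zero_of_notMem_tsupport (notMem_subset huS hp)]
  · exact (hskew p hp).smul hflux.contDiffAt
  · simp [gradAlong_eq_zero_of_notMem_tsupport (notMem_subset huS hp)]

lemma integratesToZeroOn_potential_divergence (hS : IsCompact S)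
    (hX : ∀ p ∈ S, ContDiffAt ℝ 1 X p) (hD : ∀ p ∈ S, ContDiffAt ℝ 1 D p)
    (hu : ContDiff ℝ 1 u) (huS : tsupport u ⊆ S) :
    IntegratesToZeroOn μ S (divAlong e fun q => (D q * u q ^ 2) • X q) :=
  integratesToZeroOn_divAlong hS
    (fun p hp => ((hD p hp).mul (hu.contDiffAt.pow 2)).smul (hX p hp))
    fun p hp => by simp [image_eq_zero_of_notMem_tsupport (notMem_subset huS hp)]

lemma integratesToZeroOn_current_divergence (hS : IsCompact S)
    (hX : ∀ p ∈ S, ContDiffAt ℝ 1 X p) (hu : ContDiff ℝ 2 u) (hv : ContDiff ℝ 2 v)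
    (huS : tsupport u ⊆ S) (hvS : tsupport v ⊆ S) :
    IntegratesToZeroOn μ S fun p =>
      fderiv ℝ (fun q => ⟪X q, current e u v q⟫_ℝ) p e₀
        - divAlong e (fun q => (u q * fderiv ℝ v q e₀ - v q * fderiv ℝ u q e₀) • X q) p := by
  have hu₁ : ContDiff ℝ 1 u := hu.of_le one_le_two
  have hv₁ : ContDiff ℝ 1 v := hv.of_le one_le_two
  have hut : ContDiff ℝ 1 fun q => fderiv ℝ u q e₀ :=
    (hu.fderiv_right le_rfl).clm_apply contDiff_const
  have hvt : ContDiff ℝ 1 fun q => fderiv ℝ v q e₀ :=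
    (hv.fderiv_right le_rfl).clm_apply contDiff_const
  have hcurrent : ContDiff ℝ 1 (current e u v) :=
    (hu₁.smul (contDiff_gradAlong hv)).sub (hv₁.smul (contDiff_gradAlong hu))
  refine (integratesToZeroOn_fderiv_apply hS (fun p hp => ?_) (fun p hp => ?_) e₀).sub
    (integratesToZeroOn_divAlong hS (fun p hp => ?_) fun p hp => ?_)
  · exact (hX p hp).inner ℝ hcurrent.contDiffAt
  · simp [current, image_eq_zero_of_notMem_tsupport (notMem_subset huS hp),
      image_eq_zero_of_notMem_tsupport (notMem_subset hvS hp)]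
  · exact ((hu₁.mul hvt).sub (hv₁.mul hut)).contDiffAt.smul (hX p hp)
  · simp [image_eq_zero_of_notMem_tsupport (notMem_subset huS hp),
      image_eq_zero_of_notMem_tsupport (notMem_subset hvS hp)]

lemma integratesToZeroOn_transport_divergence (hS : IsCompact S) (hA : ContDiff ℝ 1 A)
    (hh : ∀ p ∈ S, ContDiffAt ℝ 1 h p) (hu : ContDiff ℝ 2 u) (hv : ContDiff ℝ 2 v)
    (huS : tsupport u ⊆ S) (hvS : tsupport v ⊆ S) :
    IntegratesToZeroOn μ S fun p =>
      divAlong e (fun q => h q • A q (current e u v q)) p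
        - fderiv ℝ (fun q => h q * ((u q ^ 2 + v q ^ 2) / 2)) p e₀ := by
  have hu₁ : ContDiff ℝ 1 u := hu.of_le one_le_two
  have hv₁ : ContDiff ℝ 1 v := hv.of_le one_le_two
  have hcurrent : ContDiff ℝ 1 (current e u v) :=
    (hu₁.smul (contDiff_gradAlong hv)).sub (hv₁.smul (contDiff_gradAlong hu))
  refine (integratesToZeroOn_divAlong hS (fun p hp => ?_) fun p hp => ?_).sub
    (integratesToZeroOn_fderiv_apply hS (fun p hp => ?_) (fun p hp => ?_) e₀)
  · exact (hh p hp).smul (hA.clm_apply hcurrent).contDiffAt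
  · simp [current, image_eq_zero_of_notMem_tsupport (notMem_subset huS hp),
      image_eq_zero_of_notMem_tsupport (notMem_subset hvS hp)]
  · exact (hh p hp).mul (((hu₁.pow 2).add (hv₁.pow 2)).div_const 2).contDiffAt
  · simp [image_eq_zero_of_notMem_tsupport (notMem_subset huS hp),
      image_eq_zero_of_notMem_tsupport (notMem_subset hvS hp)]

theorem integratesToZeroOn_crossTerm_sub_energyDensity (hS : IsCompact S)
    (hsymm : ∀ p x y, ⟪A p x, y⟫_ℝ = ⟪x, A p y⟫_ℝ) (hA : ContDiff ℝ 1 A)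
    (hX : ∀ p ∈ S, ContDiffAt ℝ 1 X p) (hdiv : ∀ p ∈ S, ContDiffAt ℝ 1 (divAlong e X) p)
    (hD : ∀ p ∈ S, ContDiffAt ℝ 1 D p) (hh : ∀ p ∈ S, ContDiffAt ℝ 1 h p)
    (hu : ContDiff ℝ 2 u) (hv : ContDiff ℝ 2 v) (huS : tsupport u ⊆ S) (hvS : tsupport v ⊆ S) :
    IntegratesToZeroOn μ S fun p =>
      crossTerm e₀ e A X D h u v p - energyDensity e₀ e A X D h u v p := by
  have hu₁ : ContDiff ℝ 1 u := hu.of_le one_le_two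
  have hv₁ : ContDiff ℝ 1 v := hv.of_le one_le_two
  refine IntegratesToZeroOn.congr
    ((((((integratesToZeroOn_virial_divergence hS hA hX hdiv hu huS).add
      (integratesToZeroOn_virial_divergence hS hA hX hdiv hv hvS)).sub
      (integratesToZeroOn_potential_divergence hS hX hD hu₁ huS)).sub
      (integratesToZeroOn_potential_divergence hS hX hD hv₁ hvS)).add
      (integratesToZeroOn_current_divergence hS hX hu hv huS hvS)).add
      (integratesToZeroOn_transport_divergence hS hA hh hu hv huS hvS))
    hS.measurableSet fun p hp => (crossTerm_sub_energyDensity_eq (hsymm p) ?_ ?_ ?_ ?_ ?_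
      hu.contDiffAt hv.contDiffAt).symm
  · exact hA.differentiable one_ne_zero p
  · exact (hX p hp).differentiableAt one_ne_zero
  · exact (hdiv p hp).differentiableAt one_ne_zero
  · exact (hD p hp).differentiableAt one_ne_zero
  · exact (hh p hp).differentiableAt one_ne_zero

end IntegratedEnergyIdentity

section Conjugation

variable {E V : Type*} [NormedAddCommGroup E] [NormedSpace ℝ E]
  [NormedAddCommGroup V] [InnerProductSpace ℝ V] [FiniteDimensional ℝ V]
  {e : V →L[ℝ] E} {A : E → V →L[ℝ] V} {η z : E → ℝ} {p : E}

lemma exp_mul_fderiv_apply (hη : DifferentiableAt ℝ η p) (hz : DifferentiableAt ℝ z p) (x : E) :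
    exp (η p) * fderiv ℝ z p x
      = fderiv ℝ (fun q => exp (η q) * z q) p x - fderiv ℝ η p x * (exp (η p) * z p) := by
  rw [fderiv_fun_mul hη.exp hz, fderiv_exp hη]
  simp only [_root_.add_apply, _root_.smul_apply, smul_eq_mul]
  ring

lemma exp_smul_gradAlong (hη : DifferentiableAt ℝ η p) (hz : DifferentiableAt ℝ z p) :
    exp (η p) • gradAlong e z p
      = gradAlong e (fun q => exp (η q) * z q) p - (exp (η p) * z p) • gradAlong e η p :=
  ext_inner_right ℝ fun v => by
    simp only [inner_sub_left, real_inner_smul_left, inner_gradAlong, exp_mul_fderiv_apply hη hz]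
    ring

lemma exp_mul_divGrad (hsymm : ∀ x y, ⟪A p x, y⟫_ℝ = ⟪x, A p y⟫_ℝ) (hA : DifferentiableAt ℝ A p)
    (hη : ContDiffAt ℝ 2 η p) (hz : ContDiffAt ℝ 2 z p) :
    exp (η p) * divGrad e A z p
      = divGrad e A (fun q => exp (η q) * z q) p
        - skewField e (fun q => A q (gradAlong e η q)) (fun q => exp (η q) * z q) p
        + ⟪A p (gradAlong e η p), gradAlong e η p⟫_ℝ * (exp (η p) * z p) := by
  have hη₁ : DifferentiableAt ℝ η p := hη.differentiableAt two_ne_zero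
  have hz₁ : DifferentiableAt ℝ z p := hz.differentiableAt two_ne_zero
  have hfield : DifferentiableAt ℝ (fun q => A q (gradAlong e η q)) p :=
    hA.clm_apply (differentiableAt_gradAlong hη)
  have hflux : DifferentiableAt ℝ (fun q => A q (gradAlong e (fun q => exp (η q) * z q) q)) p :=
    hA.clm_apply (differentiableAt_gradAlong (hη.exp.mul hz))
  have hw : DifferentiableAt ℝ (fun q => exp (η q) * z q) p := hη₁.exp.fun_mul hz₁
  have hconj : (fun q => exp (η q) • A q (gradAlong e z q)) =ᶠ[𝓝 p] fun q =>
      A q (gradAlong e (fun q => exp (η q) * z q) q)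
        - (exp (η q) * z q) • A q (gradAlong e η q) := by
    filter_upwards [hη.eventually (by simp), hz.eventually (by simp)] with q hηq hzq
    rw [← map_smul, exp_smul_gradAlong (hηq.differentiableAt two_ne_zero)
      (hzq.differentiableAt two_ne_zero), map_sub, map_smul]
  have hdiv : divAlong e (fun q => exp (η q) • A q (gradAlong e z q)) p
      = divAlong e (fun q => A q (gradAlong e (fun q => exp (η q) * z q) q)
        - (exp (η q) * z q) • A q (gradAlong e η q)) p := divAlong_congr hconj
  have hgrad_exp : gradAlong e (fun q => exp (η q)) p = exp (η p) • gradAlong e η p :=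
    gradAlong_eq_of_forall_fderiv fun v => by
      simp [fderiv_exp hη₁, real_inner_smul_left, inner_gradAlong]
  rw [divAlong_smul hη₁.exp (hA.clm_apply (differentiableAt_gradAlong hz)),
    divAlong_sub hflux (hw.fun_smul hfield), divAlong_smul hw hfield, hgrad_exp,
    real_inner_smul_left, ← real_inner_smul_right, ← map_smul, exp_smul_gradAlong hη₁ hz₁,
    map_sub, inner_sub_right, map_smul, real_inner_smul_right,
    ← hsymm (gradAlong e η p) (gradAlong e (fun q => exp (η q) * z q) p),
    real_inner_comm (A p (gradAlong e η p)) (gradAlong e η p),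
    real_inner_comm (A p (gradAlong e η p))] at hdiv
  simp only [divGrad, skewField]
  linear_combination hdiv

end Conjugation

section LowerBound

variable {E V : Type*} [NormedAddCommGroup E] [NormedSpace ℝ E]
  [NormedAddCommGroup V] [InnerProductSpace ℝ V] [FiniteDimensional ℝ V]

/-- The energy `s |∇z|² + s³ |z|²` of `z = z₁ + i z₂` controlled by the Carleman estimate. -/
def weightedEnergy (e : V →L[ℝ] E) (s z₁ z₂ : E → ℝ) (p : E) : ℝ :=
  s p * (‖gradAlong e z₁ p‖ ^ 2 + ‖gradAlong e z₂ p‖ ^ 2) + s p ^ 3 * (z₁ p ^ 2 + z₂ p ^ 2)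

/-- The field `X` is a multiplier for the weight `e^η` at large parameter `s`, on the set `S`: its
virial form and its pairing with the conjugated potential are coercive with constant `κ`, all lower
order coefficients of `energyDensity` are of relative size `θ`, and `X` differs from `A ∇η` by a
quantity of lower order. The last point allows `X` to have one more derivative than `A ∇η`. -/
structure IsCarlemanMultiplier (e₀ : E) (e : V →L[ℝ] E) (A : E → V →L[ℝ] V) (η : E → ℝ)
    (X : E → V) (s : E → ℝ) (C R κ θ : ℝ) (S : Set E) : Prop where
  contDiffAt_weight : ∀ p ∈ S, ContDiffAt ℝ 2 η p
  contDiffAt_field : ∀ p ∈ S, ContDiffAt ℝ 1 X p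
  contDiffAt_div : ∀ p ∈ S, ContDiffAt ℝ 1 (divAlong e X) p
  norm_coeff_le : ∀ p ∈ S, ‖A p‖ ≤ C
  norm_gradAlong_weight_le : ∀ p ∈ S, ‖gradAlong e η p‖ ≤ C * s p
  norm_field_sub_le : ∀ p ∈ S, ‖X p - A p (gradAlong e η p)‖ ≤ R
  abs_div_sub_le : ∀ p ∈ S, |divAlong e X p - divGrad e A η p| ≤ R * s p
  le_virialForm : ∀ p ∈ S, ∀ ξ, κ * s p * ‖ξ‖ ^ 2 ≤ virialForm e A X p ξ
  le_inner_gradAlong : ∀ p ∈ S, κ * s p ^ 3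
    ≤ ⟪X p, gradAlong e (fun q => ⟪A q (gradAlong e η q), gradAlong e η q⟫_ℝ) p⟫_ℝ
  norm_gradAlong_div_le : ∀ p ∈ S, ‖gradAlong e (divAlong e X) p‖ ≤ θ * s p ^ 2
  norm_fderiv_field_le : ∀ p ∈ S, ‖fderiv ℝ X p e₀‖ ≤ θ * s p ^ 2
  norm_gradAlong_fderiv_le : ∀ p ∈ S, ‖gradAlong e (fun q => fderiv ℝ η q e₀) p‖ ≤ θ * s p ^ 2
  abs_fderiv_fderiv_le : ∀ p ∈ S, |fderiv ℝ (fun q => fderiv ℝ η q e₀) p e₀| ≤ θ * s p ^ 3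

variable {e₀ : E} {e : V →L[ℝ] E} {A : E → V →L[ℝ] V} {X : E → V} {η D h s u v : E → ℝ} {p : E}
  {C R κ θ : ℝ} {S : Set E}

lemma sq_mul_abs_mul_le {s : ℝ} (hs : 0 ≤ s) (x y : ℝ) :
    s ^ 2 * (|x| * |y|) ≤ (s * y ^ 2 + s ^ 3 * x ^ 2) / 2 := by
  have h : 0 ≤ s * (|y| - s * |x|) ^ 2 := by positivity
  rw [← sq_abs x, ← sq_abs y]
  linarith

lemma norm_current_mul_sq_le (hs : 0 ≤ s p) :
    s p ^ 2 * ‖current e u v p‖ ≤ weightedEnergy e s u v p / 2 := by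
  have huv := sq_mul_abs_mul_le hs (u p) ‖gradAlong e v p‖
  have hvu := sq_mul_abs_mul_le hs (v p) ‖gradAlong e u p‖
  rw [abs_norm] at huv hvu
  calc s p ^ 2 * ‖current e u v p‖
      ≤ s p ^ 2 * (|u p| * ‖gradAlong e v p‖ + |v p| * ‖gradAlong e u p‖) := by
        gcongr
        simpa only [current, norm_smul, norm_eq_abs] using
          norm_sub_le (u p • gradAlong e v p) (v p • gradAlong e u p)
    _ ≤ weightedEnergy e s u v p / 2 := by
        unfold weightedEnergy; linarith

lemma weightedEnergy_nonneg (hs : 0 ≤ s p) : 0 ≤ weightedEnergy e s u v p := by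
  unfold weightedEnergy; positivity

namespace IsCarlemanMultiplier

lemma nonneg (hX : IsCarlemanMultiplier e₀ e A η X s C R κ θ S) (hp : p ∈ S) : 0 ≤ C :=
  (norm_nonneg _).trans (hX.norm_coeff_le p hp)

lemma lower_order_le (hX : IsCarlemanMultiplier e₀ e A η X s C R κ θ S) (hp : p ∈ S)
    (hs : 0 ≤ s p) (hθ : 0 ≤ θ) :
    |u p * ⟪A p (gradAlong e u p), gradAlong e (divAlong e X) p⟫_ℝ|
      ≤ C * θ * (s p * ‖gradAlong e u p‖ ^ 2 + s p ^ 3 * u p ^ 2) / 2 := by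
  have hC := hX.nonneg hp
  have hsq := sq_mul_abs_mul_le hs (u p) ‖gradAlong e u p‖
  rw [abs_norm] at hsq
  calc |u p * ⟪A p (gradAlong e u p), gradAlong e (divAlong e X) p⟫_ℝ|
      ≤ |u p| * (‖A p (gradAlong e u p)‖ * ‖gradAlong e (divAlong e X) p‖) := by
        rw [abs_mul]; gcongr; exact abs_real_inner_le_norm _ _
    _ ≤ |u p| * (C * ‖gradAlong e u p‖ * (θ * s p ^ 2)) := by
        gcongr
        · exact (A p).le_of_opNorm_le (hX.norm_coeff_le p hp) _
        · exact hX.norm_gradAlong_div_le p hp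
    _ = C * θ * (s p ^ 2 * (|u p| * ‖gradAlong e u p‖)) := by ring
    _ ≤ C * θ * ((s p * ‖gradAlong e u p‖ ^ 2 + s p ^ 3 * u p ^ 2) / 2) := by gcongr
    _ = _ := by ring

lemma half_mul_weightedEnergy_le (hX : IsCarlemanMultiplier e₀ e A η X s C R κ θ S) (hp : p ∈ S)
    (hs : 0 ≤ s p) (hθ : 0 ≤ θ) (hκ : (C + 1) * θ ≤ κ / 2) :
    κ / 2 * weightedEnergy e s u v p
      ≤ energyDensity e₀ e A X (fun q => ⟪A q (gradAlong e η q), gradAlong e η q⟫_ℝ)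
        (fun q => fderiv ℝ η q e₀) u v p := by
  have hC := hX.nonneg hp
  have hN : 0 ≤ weightedEnergy e s u v p := weightedEnergy_nonneg hs
  have hJ := norm_current_mul_sq_le (e := e) (u := u) (v := v) hs
  have hJX : ⟪fderiv ℝ X p e₀, current e u v p⟫_ℝ ≤ θ * (weightedEnergy e s u v p / 2) :=
    calc _ ≤ ‖fderiv ℝ X p e₀‖ * ‖current e u v p‖ := real_inner_le_norm _ _
      _ ≤ θ * s p ^ 2 * ‖current e u v p‖ := by gcongr; exact hX.norm_fderiv_field_le p hp
      _ ≤ _ := by rw [mul_assoc]; gcongr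
  have hJh : ⟪A p (gradAlong e (fun q => fderiv ℝ η q e₀) p), current e u v p⟫_ℝ
      ≤ C * θ * (weightedEnergy e s u v p / 2) :=
    calc _ ≤ ‖A p (gradAlong e (fun q => fderiv ℝ η q e₀) p)‖ * ‖current e u v p‖ :=
          real_inner_le_norm _ _
      _ ≤ C * (θ * s p ^ 2) * ‖current e u v p‖ := by
          gcongr
          exact ((A p).le_of_opNorm_le (hX.norm_coeff_le p hp) _).trans
            (by gcongr; exact hX.norm_gradAlong_fderiv_le p hp)
      _ = C * θ * (s p ^ 2 * ‖current e u v p‖) := by ring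
      _ ≤ _ := by gcongr
  have hht : -(θ * s p ^ 3) * (u p ^ 2 + v p ^ 2) / 2
      ≤ fderiv ℝ (fun q => fderiv ℝ η q e₀) p e₀ * (u p ^ 2 + v p ^ 2) / 2 := by
    gcongr; exact (abs_le.1 (hX.abs_fderiv_fderiv_le p hp)).1
  have hpot := mul_le_mul_of_nonneg_right (hX.le_inner_gradAlong p hp)
    (by positivity : 0 ≤ u p ^ 2 + v p ^ 2)
  have hgrad : 0 ≤ θ * (s p * (‖gradAlong e u p‖ ^ 2 + ‖gradAlong e v p‖ ^ 2)) := by positivity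
  have hsmall := mul_le_mul_of_nonneg_right hκ hN
  have hu := (abs_le.1 (hX.lower_order_le (u := u) hp hs hθ)).1
  have hv := (abs_le.1 (hX.lower_order_le (u := v) hp hs hθ)).1
  have hQu := hX.le_virialForm p hp (gradAlong e u p)
  have hQv := hX.le_virialForm p hp (gradAlong e v p)
  unfold energyDensity
  unfold weightedEnergy at *
  linarith

end IsCarlemanMultiplier

end LowerBound

section CarlemanOfMultiplier

variable {E V : Type*} [NormedAddCommGroup E] [NormedSpace ℝ E]
  [NormedAddCommGroup V] [InnerProductSpace ℝ V] [FiniteDimensional ℝ V]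
  {e₀ : E} {e : V →L[ℝ] E} {A : E → V →L[ℝ] V} {X : E → V} {η D h s u v w z z₁ z₂ F : E → ℝ}
  {p : E} {B C R κ θ : ℝ} {S : Set E}

lemma four_mul_crossTerm_le : 4 * crossTerm e₀ e A X D h u v p
    ≤ (-fderiv ℝ v p e₀ - divGrad e A u p - D p * u p + skewField e X u p + h p * v p) ^ 2
      + (fderiv ℝ u p e₀ - divGrad e A v p - D p * v p + skewField e X v p - h p * u p) ^ 2 := by
  unfold crossTerm
  linarith [
    sq_nonneg (-fderiv ℝ v p e₀ - divGrad e A u p - D p * u p - (skewField e X u p + h p * v p)),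
    sq_nonneg (fderiv ℝ u p e₀ - divGrad e A v p - D p * v p - (skewField e X v p - h p * u p))]

/-- The part of the cross term of the conjugated function `e^η (z₁ + i z₂)` that integrates to
zero. -/
def conjugatedDefect (e₀ : E) (e : V →L[ℝ] E) (A : E → V →L[ℝ] V) (η : E → ℝ) (X : E → V)
    (z₁ z₂ : E → ℝ) (p : E) : ℝ :=
  crossTerm e₀ e A X (fun q => ⟪A q (gradAlong e η q), gradAlong e η q⟫_ℝ)
      (fun q => fderiv ℝ η q e₀) (fun q => exp (η q) * z₁ q) (fun q => exp (η q) * z₂ q) p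
    - energyDensity e₀ e A X (fun q => ⟪A q (gradAlong e η q), gradAlong e η q⟫_ℝ)
      (fun q => fderiv ℝ η q e₀) (fun q => exp (η q) * z₁ q) (fun q => exp (η q) * z₂ q) p

namespace IsCarlemanMultiplier

lemma sq_skewField_sub_le (hX : IsCarlemanMultiplier e₀ e A η X s C R κ θ S) (hp : p ∈ S) :
    (skewField e X u p - skewField e (fun q => A q (gradAlong e η q)) u p) ^ 2
      ≤ 8 * R ^ 2 * (‖gradAlong e u p‖ ^ 2 + s p ^ 2 * u p ^ 2) := by
  have hR : 0 ≤ R := (norm_nonneg _).trans (hX.norm_field_sub_le p hp)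
  have hsplit : skewField e X u p - skewField e (fun q => A q (gradAlong e η q)) u p
      = 2 * ⟪X p - A p (gradAlong e η p), gradAlong e u p⟫_ℝ
        + (divAlong e X p - divGrad e A η p) * u p := by
    simp only [skewField, divGrad, inner_sub_left]; ring
  have hinner : ⟪X p - A p (gradAlong e η p), gradAlong e u p⟫_ℝ ^ 2
      ≤ (R * ‖gradAlong e u p‖) ^ 2 :=
    sq_le_sq.2 <| by
      rw [abs_of_nonneg (by positivity : 0 ≤ R * ‖gradAlong e u p‖)]
      exact (abs_real_inner_le_norm _ _).trans (by gcongr; exact hX.norm_field_sub_le p hp)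
  have hdiv : (divAlong e X p - divGrad e A η p) ^ 2 ≤ (R * s p) ^ 2 :=
    sq_le_sq' (abs_le.1 (hX.abs_div_sub_le p hp)).1 (abs_le.1 (hX.abs_div_sub_le p hp)).2
  have hdiv_mul := mul_le_mul_of_nonneg_right hdiv (sq_nonneg (u p))
  have hpos : 0 ≤ R ^ 2 * (s p ^ 2 * u p ^ 2) := by positivity
  rw [hsplit]
  linarith [sq_nonneg (2 * ⟪X p - A p (gradAlong e η p), gradAlong e u p⟫_ℝ
    - (divAlong e X p - divGrad e A η p) * u p)]

lemma exp_mul_norm_gradAlong_sq_le (hX : IsCarlemanMultiplier e₀ e A η X s C R κ θ S) (hp : p ∈ S)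
    (hz : DifferentiableAt ℝ z p) :
    exp (2 * η p) * ‖gradAlong e z p‖ ^ 2
      ≤ 2 * ‖gradAlong e (fun q => exp (η q) * z q) p‖ ^ 2
        + 2 * C ^ 2 * s p ^ 2 * (exp (η p) * z p) ^ 2 := by
  have hη : DifferentiableAt ℝ η p := (hX.contDiffAt_weight p hp).differentiableAt two_ne_zero
  have hCs : ‖gradAlong e η p‖ ^ 2 ≤ (C * s p) ^ 2 := by
    gcongr; exact hX.norm_gradAlong_weight_le p hp
  calc exp (2 * η p) * ‖gradAlong e z p‖ ^ 2
      = ‖gradAlong e (fun q => exp (η q) * z q) p - (exp (η p) * z p) • gradAlong e η p‖ ^ 2 := by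
        rw [← exp_smul_gradAlong (e := e) hη hz, norm_smul, mul_pow, norm_eq_abs, sq_abs,
          ← exp_nat_mul]
        norm_num
    _ ≤ (‖gradAlong e (fun q => exp (η q) * z q) p‖
          + ‖(exp (η p) * z p) • gradAlong e η p‖) ^ 2 := by
        gcongr; exact norm_sub_le _ _
    _ ≤ 2 * (‖gradAlong e (fun q => exp (η q) * z q) p‖ ^ 2
          + ‖(exp (η p) * z p) • gradAlong e η p‖ ^ 2) := add_sq_le
    _ ≤ _ := by
        rw [norm_smul, mul_pow, norm_eq_abs, sq_abs]
        linarith [mul_le_mul_of_nonneg_left hCs (sq_nonneg (exp (η p) * z p))]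

lemma exp_mul_weightedEnergy_le (hX : IsCarlemanMultiplier e₀ e A η X s C R κ θ S) (hp : p ∈ S)
    (hs : 0 ≤ s p) (hz₁ : DifferentiableAt ℝ z₁ p) (hz₂ : DifferentiableAt ℝ z₂ p) :
    weightedEnergy e s z₁ z₂ p * exp (2 * η p) ≤ (2 + 2 * C ^ 2)
      * weightedEnergy e s (fun q => exp (η q) * z₁ q) (fun q => exp (η q) * z₂ q) p := by
  have h₁ := mul_le_mul_of_nonneg_left (hX.exp_mul_norm_gradAlong_sq_le hp hz₁) hs
  have h₂ := mul_le_mul_of_nonneg_left (hX.exp_mul_norm_gradAlong_sq_le hp hz₂) hs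
  have hgrad : 0 ≤ C ^ 2 * (s p * (‖gradAlong e (fun q => exp (η q) * z₁ q) p‖ ^ 2
      + ‖gradAlong e (fun q => exp (η q) * z₂ q) p‖ ^ 2)) := by positivity
  have hmass : 0 ≤ s p ^ 3 * ((exp (η p) * z₁ p) ^ 2 + (exp (η p) * z₂ p) ^ 2) := by positivity
  have hexp : exp (2 * η p) = exp (η p) ^ 2 := by rw [← exp_nat_mul]; norm_num
  rw [hexp] at h₁ h₂ ⊢
  simp only [weightedEnergy]
  linarith

lemma exp_mul_lower_order_le (hX : IsCarlemanMultiplier e₀ e A η X s C R κ θ S) (hp : p ∈ S)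
    (hs : 1 ≤ s p) (hz : DifferentiableAt ℝ z p) :
    exp (2 * η p) * (‖gradAlong e z p‖ ^ 2 + z p ^ 2) ≤ (3 + 2 * C ^ 2)
      * (‖gradAlong e (fun q => exp (η q) * z q) p‖ ^ 2 + s p ^ 2 * (exp (η p) * z p) ^ 2) := by
  have hgrad := hX.exp_mul_norm_gradAlong_sq_le hp hz
  have hexp : exp (2 * η p) = exp (η p) ^ 2 := by rw [← exp_nat_mul]; norm_num
  have hmass : (exp (η p) * z p) ^ 2 ≤ s p ^ 2 * (exp (η p) * z p) ^ 2 :=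
    le_mul_of_one_le_left (sq_nonneg _) (one_le_pow₀ hs)
  have hpos : 0 ≤ (1 + 2 * C ^ 2) * ‖gradAlong e (fun q => exp (η q) * z q) p‖ ^ 2 := by positivity
  have hpos' : 0 ≤ s p ^ 2 * (exp (η p) * z p) ^ 2 := by positivity
  rw [hexp] at hgrad ⊢
  linarith

lemma crossTerm_le (hX : IsCarlemanMultiplier e₀ e A η X s C R κ θ S) (hp : p ∈ S)
    (hsymm : ∀ x y, ⟪A p x, y⟫_ℝ = ⟪x, A p y⟫_ℝ) (hA : DifferentiableAt ℝ A p)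
    (hz₁ : ContDiffAt ℝ 2 z₁ p) (hz₂ : ContDiffAt ℝ 2 z₂ p) :
    2 * crossTerm e₀ e A X (fun q => ⟪A q (gradAlong e η q), gradAlong e η q⟫_ℝ)
        (fun q => fderiv ℝ η q e₀) (fun q => exp (η q) * z₁ q) (fun q => exp (η q) * z₂ q) p
      ≤ exp (2 * η p) * ((-fderiv ℝ z₂ p e₀ - divGrad e A z₁ p) ^ 2
          + (fderiv ℝ z₁ p e₀ - divGrad e A z₂ p) ^ 2)
        + 8 * R ^ 2 * (‖gradAlong e (fun q => exp (η q) * z₁ q) p‖ ^ 2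
            + s p ^ 2 * (exp (η p) * z₁ p) ^ 2)
        + 8 * R ^ 2 * (‖gradAlong e (fun q => exp (η q) * z₂ q) p‖ ^ 2
            + s p ^ 2 * (exp (η p) * z₂ p) ^ 2) := by
  have hη := hX.contDiffAt_weight p hp
  have hη₁ : DifferentiableAt ℝ η p := hη.differentiableAt two_ne_zero
  have hcross := four_mul_crossTerm_le (e₀ := e₀) (e := e) (A := A) (X := X) (p := p)
    (D := fun q => ⟪A q (gradAlong e η q), gradAlong e η q⟫_ℝ) (h := fun q => fderiv ℝ η q e₀)
    (u := fun q => exp (η q) * z₁ q) (v := fun q => exp (η q) * z₂ q)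
  have hdiv₁ := exp_mul_divGrad (e := e) hsymm hA hη hz₁
  have hdiv₂ := exp_mul_divGrad (e := e) hsymm hA hη hz₂
  have ht₁ := exp_mul_fderiv_apply hη₁ (hz₁.differentiableAt two_ne_zero) e₀
  have ht₂ := exp_mul_fderiv_apply hη₁ (hz₂.differentiableAt two_ne_zero) e₀
  have herr₁ := hX.sq_skewField_sub_le (u := fun q => exp (η q) * z₁ q) hp
  have herr₂ := hX.sq_skewField_sub_le (u := fun q => exp (η q) * z₂ q) hp
  set W : E → V := fun q => A q (gradAlong e η q)
  set u : E → ℝ := fun q => exp (η q) * z₁ q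
  set v : E → ℝ := fun q => exp (η q) * z₂ q
  have hre : -fderiv ℝ v p e₀ - divGrad e A u p
        - ⟪A p (gradAlong e η p), gradAlong e η p⟫_ℝ * (exp (η p) * z₁ p)
      + skewField e X u p + fderiv ℝ η p e₀ * (exp (η p) * z₂ p)
      = exp (η p) * (-fderiv ℝ z₂ p e₀ - divGrad e A z₁ p)
        + (skewField e X u p - skewField e W u p) := by linear_combination hdiv₁ + ht₂
  have him : fderiv ℝ u p e₀ - divGrad e A v p
        - ⟪A p (gradAlong e η p), gradAlong e η p⟫_ℝ * (exp (η p) * z₂ p)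
      + skewField e X v p - fderiv ℝ η p e₀ * (exp (η p) * z₁ p)
      = exp (η p) * (fderiv ℝ z₁ p e₀ - divGrad e A z₂ p)
        + (skewField e X v p - skewField e W v p) := by linear_combination hdiv₂ - ht₁
  have hexp : exp (2 * η p) = exp (η p) ^ 2 := by rw [← exp_nat_mul]; norm_num
  rw [hre, him] at hcross
  rw [hexp]
  linarith [add_sq_le (a := exp (η p) * (-fderiv ℝ z₂ p e₀ - divGrad e A z₁ p))
      (b := skewField e X u p - skewField e W u p),
    add_sq_le (a := exp (η p) * (fderiv ℝ z₁ p e₀ - divGrad e A z₂ p))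
      (b := skewField e X v p - skewField e W v p)]

lemma quarter_mul_weightedEnergy_le (hX : IsCarlemanMultiplier e₀ e A η X s C R κ θ S) (hp : p ∈ S)
    (hsymm : ∀ x y, ⟪A p x, y⟫_ℝ = ⟪x, A p y⟫_ℝ) (hA : DifferentiableAt ℝ A p)
    (hθ : 0 ≤ θ) (hκ : (C + 1) * θ ≤ κ / 2) (hB : 0 ≤ B) (hs : 1 ≤ s p)
    (hsκ : 16 * R ^ 2 + 2 * B * (3 + 2 * C ^ 2) ≤ κ * s p)
    (hz₁ : ContDiffAt ℝ 2 z₁ p) (hz₂ : ContDiffAt ℝ 2 z₂ p)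
    (hF : (-fderiv ℝ z₂ p e₀ - divGrad e A z₁ p) ^ 2 + (fderiv ℝ z₁ p e₀ - divGrad e A z₂ p) ^ 2
      ≤ 2 * F p
        + B * (‖gradAlong e z₁ p‖ ^ 2 + ‖gradAlong e z₂ p‖ ^ 2 + z₁ p ^ 2 + z₂ p ^ 2)) :
    κ / 4 * weightedEnergy e s (fun q => exp (η q) * z₁ q) (fun q => exp (η q) * z₂ q) p
      ≤ F p * exp (2 * η p) - conjugatedDefect e₀ e A η X z₁ z₂ p := by
  have hlow := hX.half_mul_weightedEnergy_le (u := fun q => exp (η q) * z₁ q)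
    (v := fun q => exp (η q) * z₂ q) hp (zero_le_one.trans hs) hθ hκ
  have hcross := hX.crossTerm_le hp hsymm hA hz₁ hz₂
  have hlower := mul_le_mul_of_nonneg_left
    (add_le_add (hX.exp_mul_lower_order_le hp hs (hz₁.differentiableAt two_ne_zero))
      (hX.exp_mul_lower_order_le hp hs (hz₂.differentiableAt two_ne_zero))) hB
  have hsource := mul_le_mul_of_nonneg_left hF (exp_pos (2 * η p)).le
  set u : E → ℝ := fun q => exp (η q) * z₁ q
  set v : E → ℝ := fun q => exp (η q) * z₂ q
  have hup : exp (η p) * z₁ p = u p := rfl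
  have hvp : exp (η p) * z₂ p = v p := rfl
  rw [hup, hvp] at hcross hlower
  have habsorb := mul_le_mul_of_nonneg_right hsκ
    (by positivity : 0 ≤ ‖gradAlong e u p‖ ^ 2 + ‖gradAlong e v p‖ ^ 2
      + s p ^ 2 * (u p ^ 2 + v p ^ 2))
  unfold conjugatedDefect
  unfold weightedEnergy at hlow ⊢
  linarith

end IsCarlemanMultiplier

variable [FiniteDimensional ℝ E] [MeasurableSpace E] [BorelSpace E] {μ : Measure E}
  [μ.IsAddHaarMeasure]

namespace IsCarlemanMultiplier

lemma integratesToZeroOn_conjugatedDefect (hX : IsCarlemanMultiplier e₀ e A η X s C R κ θ S)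
    (hS : IsCompact S) (hsymm : ∀ p x y, ⟪A p x, y⟫_ℝ = ⟪x, A p y⟫_ℝ) (hA : ContDiff ℝ 1 A)
    (hz₁ : ContDiff ℝ 2 z₁) (hz₂ : ContDiff ℝ 2 z₂)
    (hz₁S : tsupport z₁ ⊆ S) (hz₂S : tsupport z₂ ⊆ S) :
    IntegratesToZeroOn μ S (conjugatedDefect e₀ e A η X z₁ z₂) := by
  have hconj : ∀ {z : E → ℝ}, ContDiff ℝ 2 z → tsupport z ⊆ S →
      ContDiff ℝ 2 (fun q => exp (η q) * z q) := fun hz hzS =>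
    contDiff_of_isClosed_of_eq_zero hS.isClosed
      (fun p hp => (hX.contDiffAt_weight p hp).exp.mul hz.contDiffAt)
      fun p hp => by simp [image_eq_zero_of_notMem_tsupport (notMem_subset hzS hp)]
  have hgrad : ∀ p ∈ S, ContDiffAt ℝ 1 (gradAlong e η) p := fun p hp =>
    contDiffAt_gradAlong (hX.contDiffAt_weight p hp)
  exact integratesToZeroOn_crossTerm_sub_energyDensity hS hsymm hA hX.contDiffAt_field
    hX.contDiffAt_div (fun p hp => (hA.contDiffAt.clm_apply (hgrad p hp)).inner ℝ (hgrad p hp))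
    (fun p hp => ((hX.contDiffAt_weight p hp).fderiv_right (m := 1) le_rfl).clm_apply
      contDiffAt_const)
    (hconj hz₁ hz₁S) (hconj hz₂ hz₂S) ((tsupport_mul_subset_right).trans hz₁S)
    ((tsupport_mul_subset_right).trans hz₂S)

theorem setIntegral_weightedEnergy_le (hX : IsCarlemanMultiplier e₀ e A η X s C R κ θ S)
    (hS : IsCompact S) (hsymm : ∀ p x y, ⟪A p x, y⟫_ℝ = ⟪x, A p y⟫_ℝ) (hA : ContDiff ℝ 1 A)
    (hκ₀ : 0 < κ) (hθ : 0 ≤ θ) (hκ : (C + 1) * θ ≤ κ / 2) (hB : 0 ≤ B) (hs : ∀ p ∈ S, 1 ≤ s p)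
    (hsκ : ∀ p ∈ S, 16 * R ^ 2 + 2 * B * (3 + 2 * C ^ 2) ≤ κ * s p)
    (hz₁ : ContDiff ℝ 2 z₁) (hz₂ : ContDiff ℝ 2 z₂)
    (hz₁S : tsupport z₁ ⊆ S) (hz₂S : tsupport z₂ ⊆ S)
    (hFint : IntegrableOn (fun p => F p * exp (2 * η p)) S μ)
    (hF : ∀ p ∈ S,
      (-fderiv ℝ z₂ p e₀ - divGrad e A z₁ p) ^ 2 + (fderiv ℝ z₁ p e₀ - divGrad e A z₂ p) ^ 2
        ≤ 2 * F p
          + B * (‖gradAlong e z₁ p‖ ^ 2 + ‖gradAlong e z₂ p‖ ^ 2 + z₁ p ^ 2 + z₂ p ^ 2)) :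
    ∫ p in S, weightedEnergy e s z₁ z₂ p * exp (2 * η p) ∂μ
      ≤ 4 * (2 + 2 * C ^ 2) / κ * ∫ p in S, F p * exp (2 * η p) ∂μ := by
  have hnull := hX.integratesToZeroOn_conjugatedDefect (μ := μ) hS hsymm hA hz₁ hz₂ hz₁S hz₂S
  have hpointwise : ∀ p ∈ S, weightedEnergy e s z₁ z₂ p * exp (2 * η p)
      ≤ 4 * (2 + 2 * C ^ 2) / κ
        * (F p * exp (2 * η p) - conjugatedDefect e₀ e A η X z₁ z₂ p) := fun p hp => by
    have hback := hX.exp_mul_weightedEnergy_le hp (zero_le_one.trans (hs p hp))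
      (hz₁.differentiable two_ne_zero p) (hz₂.differentiable two_ne_zero p)
    have hest := hX.quarter_mul_weightedEnergy_le hp (hsymm p) (hA.differentiable one_ne_zero p)
      hθ hκ hB (hs p hp) (hsκ p hp) hz₁.contDiffAt hz₂.contDiffAt (hF p hp)
    refine hback.trans ?_
    rw [div_mul_eq_mul_div, le_div_iff₀ hκ₀]
    linarith [mul_le_mul_of_nonneg_left hest (by positivity : 0 ≤ 4 * (2 + 2 * C ^ 2))]
  calc ∫ p in S, weightedEnergy e s z₁ z₂ p * exp (2 * η p) ∂μ
      ≤ ∫ p in S, 4 * (2 + 2 * C ^ 2) / κ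
          * (F p * exp (2 * η p) - conjugatedDefect e₀ e A η X z₁ z₂ p) ∂μ := by
        refine integral_mono_of_nonneg ?_ ((hFint.sub hnull.1).const_mul _) ?_
        · exact ae_restrict_of_forall_mem hS.measurableSet fun p hp => mul_nonneg
            (weightedEnergy_nonneg (zero_le_one.trans (hs p hp))) (exp_pos _).le
        · exact ae_restrict_of_forall_mem hS.measurableSet hpointwise
    _ = 4 * (2 + 2 * C ^ 2) / κ * ∫ p in S, F p * exp (2 * η p) ∂μ := by
        rw [integral_const_mul, integral_sub hFint hnull.1, hnull.2, sub_zero]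

end IsCarlemanMultiplier

end CarlemanOfMultiplier

section Regularization

section ParametricIntegral

variable {P Y Z : Type*} [NormedAddCommGroup P] [NormedSpace ℝ P] [LocallyCompactSpace P]
  [NormedAddCommGroup Y] [NormedSpace ℝ Y] [MeasurableSpace Y] [BorelSpace Y]
  [SecondCountableTopology Y] {μ : Measure Y} [IsLocallyFiniteMeasure μ]
  [NormedAddCommGroup Z] [NormedSpace ℝ Z] {Φ : P × Y → Z} {K : Set Y}

lemma hasFDerivAt_setIntegral (hΦ : ContDiff ℝ 1 Φ) (hK : IsCompact K) (p : P) :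
    HasFDerivAt (fun q => ∫ y in K, Φ (q, y) ∂μ)
      (∫ y in K, (fderiv ℝ Φ (p, y)).comp (.inl ℝ P Y) ∂μ) p := by
  have hfderiv : Continuous fun q : P × Y => (fderiv ℝ Φ q).comp (.inl ℝ P Y) :=
    (hΦ.continuous_fderiv one_ne_zero).clm_comp continuous_const
  obtain ⟨N, hN, hpN⟩ := exists_compact_mem_nhds p
  obtain ⟨C, hC⟩ := (hN.prod hK).exists_bound_of_continuousOn hfderiv.continuousOn
  refine hasFDerivAt_integral_of_dominated_of_fderiv_le (bound := fun _ => C)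
    (F' := fun q y => (fderiv ℝ Φ (q, y)).comp (.inl ℝ P Y)) hpN ?_ ?_ ?_ ?_ ?_ ?_
  · exact .of_forall fun q => (hΦ.continuous.comp (.prodMk_right q)).aestronglyMeasurable
  · exact (hΦ.continuous.comp (.prodMk_right p)).continuousOn.integrableOn_compact hK
  · exact (hfderiv.comp (.prodMk_right p)).aestronglyMeasurable
  · exact ae_restrict_of_forall_mem hK.measurableSet fun y hy q hq => hC (q, y) ⟨hq, hy⟩
  · exact integrableOn_const hK.measure_ne_top
  · exact .of_forall fun y q _ => (hΦ.differentiable one_ne_zero (q, y)).hasFDerivAt.comp q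
      (hasFDerivAt_prodMk_left q y)

lemma contDiff_one_setIntegral (hΦ : ContDiff ℝ 1 Φ) (hK : IsCompact K) :
    ContDiff ℝ 1 fun q => ∫ y in K, Φ (q, y) ∂μ := by
  rw [contDiff_one_iff_fderiv]
  refine ⟨fun p => (hasFDerivAt_setIntegral hΦ hK p).differentiableAt, ?_⟩
  simp only [funext fun p => (hasFDerivAt_setIntegral (μ := μ) hΦ hK p).fderiv]
  exact continuous_parametric_integral_of_continuous
    (f := fun p y => (fderiv ℝ Φ (p, y)).comp (.inl ℝ P Y))
    ((hΦ.continuous_fderiv one_ne_zero).clm_comp continuous_const) hK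

lemma divAlong_setIntegral {V : Type*} [NormedAddCommGroup V] [InnerProductSpace ℝ V]
    [FiniteDimensional ℝ V] {e : V →L[ℝ] P} {Φ : P × Y → V} (hΦ : ContDiff ℝ 1 Φ)
    (hK : IsCompact K) (p : P) :
    divAlong e (fun q => ∫ y in K, Φ (q, y) ∂μ) p
      = ∫ y in K, divAlong e (fun q => Φ (q, y)) p ∂μ := by
  let b := stdOrthonormalBasis ℝ V
  let trace : (P →L[ℝ] V) →L[ℝ] ℝ :=
    ∑ i, (innerSL ℝ (b i)).comp (ContinuousLinearMap.apply ℝ V (e (b i)))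
  have htrace : ∀ X : P → V, divAlong e X p = trace (fderiv ℝ X p) := fun X => by
    simp [divAlong_eq_sum_inner b, trace]
  have hslice : ∀ y, fderiv ℝ (fun q => Φ (q, y)) p = (fderiv ℝ Φ (p, y)).comp (.inl ℝ P Y) :=
    fun y => ((hΦ.differentiable one_ne_zero (p, y)).hasFDerivAt.comp p
      (hasFDerivAt_prodMk_left p y)).fderiv
  have hcont : Continuous fun y => (fderiv ℝ Φ (p, y)).comp (.inl ℝ P Y) :=
    ((hΦ.continuous_fderiv one_ne_zero).comp (.prodMk_right p)).clm_comp continuous_const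
  simp only [htrace, hslice, (hasFDerivAt_setIntegral (μ := μ) hΦ hK p).fderiv]
  exact (trace.integral_comp_comm (hcont.continuousOn.integrableOn_compact hK)).symm

end ParametricIntegral

variable {E V : Type*} [NormedAddCommGroup E] [NormedSpace ℝ E]
  [NormedAddCommGroup V] [InnerProductSpace ℝ V] [FiniteDimensional ℝ V] {W : E → V}
  {ρ : V → ℝ}

lemma mul_divAlong_smul_comp_add {e : V →L[ℝ] E} (hW : ContDiff ℝ 1 W) (hρ : ContDiff ℝ 1 ρ)
    (ε : ℝ) (p : E) (y : V) :
    ε * divAlong e (fun q => ρ y • W (q + ε • e y)) p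
      = divAlong (.id ℝ V) (fun x => ρ x • W (p + ε • e x)) y
        - ⟪gradAlong (.id ℝ V) ρ y, W (p + ε • e y)⟫_ℝ := by
  have hW' := (hW.differentiable one_ne_zero (p + ε • e y)).hasFDerivAt
  have hq : HasFDerivAt (fun q => W (q + ε • e y)) (fderiv ℝ W (p + ε • e y)) p :=
    hW'.comp p ((hasFDerivAt_id p).add_const (ε • e y))
  have hx : HasFDerivAt (fun x => W (p + ε • e x)) ((fderiv ℝ W (p + ε • e y)).comp (ε • e)) y :=
    hW'.comp y ((e.hasFDerivAt.const_smul ε).const_add p)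
  have hgrad : gradAlong e (fun _ : E => ρ y) p = 0 :=
    gradAlong_eq_of_forall_fderiv fun v => by simp
  rw [divAlong_smul (hρ.differentiable one_ne_zero y) hx.differentiableAt,
    divAlong_smul (f := fun _ => ρ y) (differentiableAt_const _) hq.differentiableAt, hgrad,
    inner_zero_left, add_zero, add_sub_cancel_right]
  simp only [divAlong_eq_sum_inner (stdOrthonormalBasis ℝ V), hq.fderiv, hx.fderiv,
    ContinuousLinearMap.comp_apply, ContinuousLinearMap.id_apply, _root_.smul_apply, map_smul,
    inner_smul_right, Finset.mul_sum]
  exact Finset.sum_congr rfl fun i _ => mul_left_comm _ _ _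

variable [FiniteDimensional ℝ E]

/-- Mollification of `W` at scale `ε` in the directions `e v`: although `W` is only `C¹`, the
divergence of its mollification is `C¹`, at the price of a factor `ε⁻¹`. -/
theorem exists_contDiff_regularization (e : V →L[ℝ] E) (hW : ContDiff ℝ 1 W) :
    ∃ (M : ℝ × E → V) (G : ℝ × E → ℝ), ContDiff ℝ 1 M ∧ ContDiff ℝ 1 G ∧ (∀ p, M (0, p) = W p) ∧
      ∀ ε p, ε * divAlong e (fun q => M (ε, q)) p = G (ε, p) := by
  let _ : MeasurableSpace V := borel V
  have : BorelSpace V := ⟨rfl⟩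
  let bump : ContDiffBump (0 : V) := default
  let ρ : V → ℝ := bump.normed volume
  let K : Set V := Metric.closedBall 0 bump.rOut
  have hK : IsCompact K := isCompact_closedBall _ _
  have hρ : ContDiff ℝ 2 ρ := bump.contDiff_normed (n := 2)
  have hρ₀ : ∀ y ∉ K, ρ y = 0 := fun y hy => image_eq_zero_of_notMem_tsupport <| by
    rwa [bump.tsupport_normed_eq]
  have hshift : ContDiff ℝ 1 fun q : (ℝ × E) × V => W (q.1.2 + q.1.1 • e q.2) :=
    hW.comp (by fun_prop)
  refine ⟨fun q => ∫ y in K, ρ y • W (q.2 + q.1 • e y),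
    fun q => ∫ y in K, -⟪gradAlong (.id ℝ V) ρ y, W (q.2 + q.1 • e y)⟫_ℝ, ?_, ?_, fun p => ?_,
    fun ε p => ?_⟩
  · exact contDiff_one_setIntegral
      (Φ := fun q : (ℝ × E) × V => ρ q.2 • W (q.1.2 + q.1.1 • e q.2))
      (((hρ.of_le one_le_two).comp contDiff_snd).smul hshift) hK
  · exact contDiff_one_setIntegral
      (Φ := fun q : (ℝ × E) × V => -⟪gradAlong (.id ℝ V) ρ q.2, W (q.1.2 + q.1.1 • e q.2)⟫_ℝ)
      ((((contDiff_gradAlong (n := 1) hρ).comp contDiff_snd).inner ℝ hshift).neg) hK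
  · have hmass : ∫ y in K, ρ y = 1 := by
      rw [setIntegral_eq_integral_of_forall_compl_eq_zero hρ₀, bump.integral_normed]
    simp [integral_smul_const, hmass]
  · have hΦ : ContDiff ℝ 1 fun q : E × V => ρ q.2 • W (q.1 + ε • e q.2) :=
      ((hρ.of_le one_le_two).comp contDiff_snd).smul (hW.comp (by fun_prop))
    have hnull : IntegratesToZeroOn volume K
        (divAlong (.id ℝ V) fun x => ρ x • W (p + ε • e x)) :=
      integratesToZeroOn_divAlong hK
        (fun y _ => (hΦ.comp (contDiff_prodMk_right p)).contDiffAt)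
        fun y hy => by simp [hρ₀ y hy]
    have hgrad : IntegrableOn (fun y => ⟪gradAlong (.id ℝ V) ρ y, W (p + ε • e y)⟫_ℝ) K :=
      ((contDiff_gradAlong (n := 1) hρ).continuous.inner
        (hW.continuous.comp (by fun_prop))).continuousOn.integrableOn_compact hK
    rw [divAlong_setIntegral hΦ hK, ← integral_const_mul]
    simp only [mul_divAlong_smul_comp_add hW (hρ.of_le one_le_two)]
    rw [integral_sub hnull.1 hgrad, hnull.2, zero_sub, integral_neg]

end Regularization

section RegularizedField

lemma eventually_forall_le_of_pos {Z : Type*} [TopologicalSpace Z] {g : ℝ × Z → ℝ} {K : Set Z}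
    (hg : Continuous g) (hK : IsCompact K) (hpos : ∀ z ∈ K, 0 < g (0, z)) :
    ∃ κ > 0, ∀ᶠ ε in 𝓝 0, ∀ z ∈ K, κ ≤ g (ε, z) := by
  obtain ⟨κ, hκ, hκg⟩ := hK.exists_forall_le' (f := fun z => g (0, z))
    (hg.comp (.prodMk_right 0)).continuousOn hpos
  refine ⟨κ / 2, half_pos hκ, hK.eventually_forall_of_forall_eventually fun z hz => ?_⟩
  exact (hg.continuousAt.eventually (lt_mem_nhds ((half_lt_self hκ).trans_le (hκg z hz)))).mono
    fun _ h => h.le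

lemma hasFDerivAt_slice_right {P E Y : Type*} [NormedAddCommGroup P] [NormedSpace ℝ P]
    [NormedAddCommGroup E] [NormedSpace ℝ E] [NormedAddCommGroup Y] [NormedSpace ℝ Y]
    {Φ : P × E → Y} (hΦ : ContDiff ℝ 1 Φ) (r : P) (p : E) :
    HasFDerivAt (fun q => Φ (r, q)) ((fderiv ℝ Φ (r, p)).comp (.inr ℝ P E)) p :=
  (hΦ.differentiable one_ne_zero (r, p)).hasFDerivAt.comp p (hasFDerivAt_prodMk_right r p)

variable {E V : Type*} [NormedAddCommGroup E] [NormedSpace ℝ E]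
  [NormedAddCommGroup V] [InnerProductSpace ℝ V] {e : V →L[ℝ] E} {A : E → V →L[ℝ] V} {X : E → V}
  {f : E → ℝ} {K : Set E} {M : ℝ × E → V} {G : ℝ × E → ℝ} {p : E}

lemma virialForm_smul (c : ℝ) (ξ : V) :
    virialForm e A X p (c • ξ) = c ^ 2 * virialForm e A X p ξ := by
  simp only [virialForm, map_smul, real_inner_smul_left, real_inner_smul_right]
  ring

lemma mul_norm_sq_le_virialForm {κ : ℝ}
    (h : ∀ ξ ∈ Metric.sphere (0 : V) 1, κ ≤ virialForm e A X p ξ) (ξ : V) :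
    κ * ‖ξ‖ ^ 2 ≤ virialForm e A X p ξ := by
  rcases eq_or_ne ξ 0 with rfl | hξ
  · simp [virialForm]
  have hunit : ‖ξ‖⁻¹ • ξ ∈ Metric.sphere (0 : V) 1 := by simp [norm_smul, hξ]
  calc κ * ‖ξ‖ ^ 2 ≤ virialForm e A X p (‖ξ‖⁻¹ • ξ) * ‖ξ‖ ^ 2 := by gcongr; exact h _ hunit
    _ = virialForm e A X p ξ := by
      rw [virialForm_smul]
      have := norm_ne_zero_iff.2 hξ
      field_simp

lemma continuous_virialForm_slice (hA : ContDiff ℝ 1 A) (hM : ContDiff ℝ 1 M) :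
    Continuous fun q : ℝ × E × V => virialForm e A (fun x => M (q.1, x)) q.2.1 q.2.2 := by
  simp only [virialForm, fun ε p => (hasFDerivAt_slice_right hM ε p).fderiv]
  have hMc := hM.continuous
  have hAc := hA.continuous
  have h₁ : Continuous fun q : ℝ × E × V =>
      fderiv ℝ M (q.1, q.2.1) (0, e (A q.2.1 q.2.2)) :=
    (hM.continuous_fderiv_apply one_ne_zero).comp (by fun_prop :
      Continuous fun q : ℝ × E × V => ((q.1, q.2.1), ((0 : ℝ), e (A q.2.1 q.2.2))))
  have h₂ : Continuous fun q : ℝ × E × V => fderiv ℝ A q.2.1 (e (M (q.1, q.2.1))) :=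
    (hA.continuous_fderiv_apply one_ne_zero).comp (by fun_prop :
      Continuous fun q : ℝ × E × V => (q.2.1, e (M (q.1, q.2.1))))
  exact (continuous_const.mul (h₁.inner continuous_snd.snd)).sub
    ((h₂.clm_apply continuous_snd.snd).inner continuous_snd.snd)

variable [FiniteDimensional ℝ V]

/-- Strong pseudoconvexity of the weight `f` on `K` for `div (A ∇·)`: the commutator form of
`X = A ∇f` is positive definite, and `⟪A ∇f, ∇f⟫` increases along `A ∇f`. The two conditions
control the gradient and the zeroth-order part of the Carleman estimate. -/
structure IsStronglyPseudoconvexOn (e : V →L[ℝ] E) (A : E → V →L[ℝ] V) (f : E → ℝ) (K : Set E) :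
    Prop where
  virialForm_pos : ∀ p ∈ K, ∀ ξ ≠ 0, 0 < virialForm e A (fun q => A q (gradAlong e f q)) p ξ
  inner_pos : ∀ p ∈ K, 0 < ⟪A p (gradAlong e f p),
    gradAlong e (fun q => ⟪A q (gradAlong e f q), gradAlong e f q⟫_ℝ) p⟫_ℝ

/-- The family of fields `M (ε, ·)`, `0 ≤ ε ≤ δ`, regularizes `A ∇f`: it starts at `A ∇f`, obeys
bounds and coercivity uniformly in `ε` on `K`, and `G (ε, ·)`, which is `ε` times its divergence,
is `C¹`. -/
structure IsRegularizedField (e : V →L[ℝ] E) (A : E → V →L[ℝ] V) (f : E → ℝ) (K : Set E)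
    (M : ℝ × E → V) (G : ℝ × E → ℝ) (C κ δ : ℝ) : Prop where
  contDiff : ContDiff ℝ 1 M
  contDiff_div : ContDiff ℝ 1 G
  zero_left : ∀ p, M (0, p) = A p (gradAlong e f p)
  mul_divAlong : ∀ ε p, ε * divAlong e (fun q => M (ε, q)) p = G (ε, p)
  norm_le : ∀ ε ∈ Icc 0 δ, ∀ p ∈ K, ‖M (ε, p)‖ ≤ C
  norm_fderiv_le : ∀ ε ∈ Icc 0 δ, ∀ p ∈ K, ‖fderiv ℝ M (ε, p)‖ ≤ C
  abs_divAlong_le : ∀ ε ∈ Icc 0 δ, ∀ p ∈ K, |divAlong e (fun q => M (ε, q)) p| ≤ C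
  norm_gradAlong_div_le : ∀ ε ∈ Icc 0 δ, ∀ p ∈ K, ‖gradAlong e (fun q => G (ε, q)) p‖ ≤ C
  le_virialForm : ∀ ε ∈ Icc 0 δ, ∀ p ∈ K, ∀ ξ,
    κ * ‖ξ‖ ^ 2 ≤ virialForm e A (fun q => M (ε, q)) p ξ
  le_inner_gradAlong : ∀ ε ∈ Icc 0 δ, ∀ p ∈ K,
    κ ≤ ⟪M (ε, p), gradAlong e (fun q => ⟪A q (gradAlong e f q), gradAlong e f q⟫_ℝ) p⟫_ℝ

lemma continuous_gradAlong (hf : ContDiff ℝ 1 f) : Continuous (gradAlong e f) :=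
  (contDiff_gradAlong (n := 0) (by simpa using hf)).continuous

lemma continuous_divAlong_slice (hM : ContDiff ℝ 1 M) :
    Continuous fun q : ℝ × E => divAlong e (fun x => M (q.1, x)) q.2 := by
  simp only [divAlong_eq_sum_inner (stdOrthonormalBasis ℝ V),
    fun ε p => (hasFDerivAt_slice_right hM ε p).fderiv]
  exact continuous_finsetSum _ fun i _ => continuous_const.inner
    (((hM.continuous_fderiv one_ne_zero).clm_comp continuous_const).clm_apply continuous_const)

lemma continuous_gradAlong_slice (hG : ContDiff ℝ 1 G) :
    Continuous fun q : ℝ × E => gradAlong e (fun x => G (q.1, x)) q.2 := by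
  simp only [gradAlong, fun ε p => (hasFDerivAt_slice_right hG ε p).fderiv]
  exact continuous_finsetSum _ fun i _ =>
    (((hG.continuous_fderiv one_ne_zero).clm_comp continuous_const).clm_apply
      continuous_const).smul continuous_const

variable [FiniteDimensional ℝ E]

theorem exists_isRegularizedField (hK : IsCompact K) (hA : ContDiff ℝ 1 A) (hf : ContDiff ℝ 2 f)
    (hpsc : IsStronglyPseudoconvexOn e A f K) :
    ∃ M G C κ δ, 0 < κ ∧ 0 < δ ∧ IsRegularizedField e A f K M G C κ δ := by
  have hgrad : ContDiff ℝ 1 (gradAlong e f) := contDiff_gradAlong hf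
  obtain ⟨M, G, hM, hG, hM₀, hdiv⟩ :=
    exists_contDiff_regularization e (hA.clm_apply hgrad)
  obtain ⟨κ₁, hκ₁, hvirial⟩ := eventually_forall_le_of_pos
    (continuous_virialForm_slice (e := e) hA hM) (hK.prod (isCompact_sphere (0 : V) 1))
    fun q hq => by
      simpa only [hM₀] using
        hpsc.virialForm_pos q.1 hq.1 q.2 (Metric.ne_of_mem_sphere hq.2 one_ne_zero)
  obtain ⟨κ₂, hκ₂, hinner⟩ := eventually_forall_le_of_pos (hM.continuous.inner
    ((continuous_gradAlong ((hA.clm_apply hgrad).inner ℝ hgrad)).comp continuous_snd)) hK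
    fun p hp => by simpa only [hM₀, Function.comp_apply] using hpsc.inner_pos p hp
  obtain ⟨δ, hδ, hball⟩ := Metric.eventually_nhds_iff_ball.1 (hvirial.and hinner)
  have hδ_mem : ∀ ε ∈ Icc 0 (δ / 2), ε ∈ Metric.ball 0 δ := fun ε hε => by
    rw [mem_ball_zero_iff, norm_eq_abs, abs_of_nonneg hε.1]
    linarith [hε.2]
  obtain ⟨C, hC⟩ := ((isCompact_Icc (a := 0) (b := δ / 2)).prod hK).exists_bound_of_continuousOn
    (hM.continuous.prodMk <| (hM.continuous_fderiv one_ne_zero).prodMk <|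
      (continuous_divAlong_slice (e := e) hM).prodMk
      (continuous_gradAlong_slice (e := e) hG)).continuousOn
  simp only [norm_prod_le_iff] at hC
  exact ⟨M, G, C, min κ₁ κ₂, δ / 2, lt_min hκ₁ hκ₂, half_pos hδ,
    { contDiff := hM
      contDiff_div := hG
      zero_left := hM₀
      mul_divAlong := hdiv
      norm_le := fun ε hε p hp => (hC (ε, p) ⟨hε, hp⟩).1
      norm_fderiv_le := fun ε hε p hp => (hC (ε, p) ⟨hε, hp⟩).2.1
      abs_divAlong_le := fun ε hε p hp => (hC (ε, p) ⟨hε, hp⟩).2.2.1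
      norm_gradAlong_div_le := fun ε hε p hp => (hC (ε, p) ⟨hε, hp⟩).2.2.2
      le_virialForm := fun ε hε p hp => mul_norm_sq_le_virialForm fun ξ hξ =>
        (min_le_left _ _).trans ((hball ε (hδ_mem ε hε)).1 (p, ξ) ⟨hp, hξ⟩)
      le_inner_gradAlong := fun ε hε p hp =>
        (min_le_right _ _).trans ((hball ε (hδ_mem ε hε)).2 p hp) }⟩

end RegularizedField

section SingularWeight

variable {E V : Type*} [NormedAddCommGroup E] [NormedSpace ℝ E]
  [NormedAddCommGroup V] [InnerProductSpace ℝ V] {e₀ : E} {e : V →L[ℝ] E} {t : E →L[ℝ] ℝ}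
  {A : E → V →L[ℝ] V} {f : E → ℝ} {Y : E → V} {K S : Set E} {M : ℝ × E → V} {G : ℝ × E → ℝ}
  {p : E} {τ N C C' κ δ θ : ℝ}

lemma contDiffAt_div_clm {n : ℕ∞} (hp : t p ≠ 0) : ContDiffAt ℝ n (fun q => τ / t q) p :=
  contDiffAt_const.div t.contDiff.contDiffAt hp

lemma differentiableAt_div_clm (hp : t p ≠ 0) : DifferentiableAt ℝ (fun q => τ / t q) p :=
  (contDiffAt_div_clm (n := 1) hp).differentiableAt one_ne_zero

lemma fderiv_div_clm_apply (hτ : τ ≠ 0) (hp : t p ≠ 0) (x : E) :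
    fderiv ℝ (fun q => τ / t q) p x = -((τ / t p) ^ 2 / τ) * t x := by
  have hinv : HasFDerivAt (fun q => (t q)⁻¹) (-(t p ^ 2)⁻¹ • t) p :=
    (hasDerivAt_inv hp).comp_hasFDerivAt p t.hasFDerivAt
  simp only [div_eq_mul_inv τ]
  rw [(hinv.const_mul τ).fderiv]
  simp only [_root_.smul_apply, smul_eq_mul]
  field_simp

lemma fderiv_div_clm_smul {Y : Type*} [NormedAddCommGroup Y] [NormedSpace ℝ Y] {g : E → Y}
    (hτ : τ ≠ 0) (hp : t p ≠ 0) (hg : DifferentiableAt ℝ g p) (x : E) :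
    fderiv ℝ (fun q => (τ / t q) • g q) p x
      = (τ / t p) • fderiv ℝ g p x - ((τ / t p) ^ 2 / τ * t x) • g p := by
  rw [fderiv_fun_smul (differentiableAt_div_clm hp) hg]
  simp only [_root_.add_apply, _root_.smul_apply, ContinuousLinearMap.smulRight_apply,
    fderiv_div_clm_apply hτ hp]
  module

lemma fderiv_div_clm_mul (hτ : τ ≠ 0) (hp : t p ≠ 0) (hf : DifferentiableAt ℝ f p) (x : E) :
    fderiv ℝ (fun q => τ / t q * f q) p x
      = τ / t p * fderiv ℝ f p x - (τ / t p) ^ 2 / τ * t x * f p :=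
  fderiv_div_clm_smul hτ hp hf x

lemma virialForm_div_clm_smul (hte : ∀ v, t (e v) = 0) (hτ : τ ≠ 0) (hp : t p ≠ 0)
    (hY : DifferentiableAt ℝ Y p) (ξ : V) :
    virialForm e A (fun q => (τ / t q) • Y q) p ξ = τ / t p * virialForm e A Y p ξ := by
  simp only [virialForm, fderiv_div_clm_smul hτ hp hY, hte, mul_zero, zero_smul, sub_zero,
    map_smul, _root_.smul_apply, real_inner_smul_left]
  ring

/-- The regularized field at the scale proportional to `t`, multiplied by the large parameter
`τ / t`. With this choice of scale the divergence of the field is of size `τ / t`, and its gradient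
of size `(τ / t)² / N`. -/
def scaledField (t : E →L[ℝ] ℝ) (M : ℝ × E → V) (N τ : ℝ) (p : E) : V :=
  (τ / t p) • M (N / τ * t p, p)

lemma fderiv_comp_scale {Y : Type*} [NormedAddCommGroup Y] [NormedSpace ℝ Y] {Φ : ℝ × E → Y}
    (hΦ : ContDiff ℝ 1 Φ) (c : ℝ) (p x : E) :
    fderiv ℝ (fun q => Φ (c * t q, q)) p x = fderiv ℝ Φ (c * t p, p) (c * t x, x) := by
  have hscale : HasFDerivAt (fun q => (c * t q, q)) ((c • t).prod (.id ℝ E)) p :=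
    (t.hasFDerivAt.const_mul c).prodMk (hasFDerivAt_id p)
  have hcomp : HasFDerivAt (fun q => Φ (c * t q, q))
      ((fderiv ℝ Φ (c * t p, p)).comp ((c • t).prod (.id ℝ E))) p :=
    (hΦ.differentiable one_ne_zero _).hasFDerivAt.comp p hscale
  simp [hcomp.fderiv]

lemma fderiv_comp_scale_spatial {Y : Type*} [NormedAddCommGroup Y] [NormedSpace ℝ Y]
    {Φ : ℝ × E → Y} (hte : ∀ v, t (e v) = 0) (hΦ : ContDiff ℝ 1 Φ) (c : ℝ) (p : E) (v : V) :
    fderiv ℝ (fun q => Φ (c * t q, q)) p (e v)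
      = fderiv ℝ (fun q => Φ (c * t p, q)) p (e v) := by
  rw [fderiv_comp_scale hΦ, (hasFDerivAt_slice_right hΦ _ p).fderiv]
  simp [hte]

lemma contDiff_comp_scale {Y : Type*} [NormedAddCommGroup Y] [NormedSpace ℝ Y] {Φ : ℝ × E → Y}
    (hΦ : ContDiff ℝ 1 Φ) (c : ℝ) : ContDiff ℝ 1 fun q => Φ (c * t q, q) :=
  hΦ.comp (by fun_prop)

lemma contDiffAt_scaledField (hM : ContDiff ℝ 1 M) (hp : t p ≠ 0) :
    ContDiffAt ℝ 1 (scaledField t M N τ) p :=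
  (contDiffAt_div_clm hp).smul (contDiff_comp_scale hM _).contDiffAt

lemma virialForm_scaledField (hte : ∀ v, t (e v) = 0) (hM : ContDiff ℝ 1 M) (hτ : τ ≠ 0)
    (hp : t p ≠ 0) (ξ : V) :
    virialForm e A (scaledField t M N τ) p ξ
      = τ / t p * virialForm e A (fun q => M (N / τ * t p, q)) p ξ := by
  unfold scaledField
  rw [virialForm_div_clm_smul hte hτ hp ((contDiff_comp_scale hM _).differentiable one_ne_zero p)]
  simp only [virialForm, fderiv_comp_scale_spatial hte hM]

lemma norm_fderiv_scaledField_le (hte₀ : t e₀ = 1) (hM : ContDiff ℝ 1 M) (hτ : 0 < τ)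
    (hp : 0 < t p) (hN : |N| ≤ τ) (hMC : ‖M (N / τ * t p, p)‖ ≤ C)
    (hMC' : ‖fderiv ℝ M (N / τ * t p, p)‖ ≤ C) :
    ‖fderiv ℝ (scaledField t M N τ) p e₀‖
      ≤ (C + C * (1 + ‖e₀‖) * t p) / τ * (τ / t p) ^ 2 := by
  have hdir : ‖((N / τ, e₀) : ℝ × E)‖ ≤ 1 + ‖e₀‖ := by
    refine norm_prod_le_iff.2 ⟨?_, ?_⟩
    · have : |N| / τ ≤ 1 := (div_le_one hτ).2 hN
      simpa [abs_div, abs_of_pos hτ] using this.trans (le_add_of_nonneg_right (norm_nonneg e₀))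
    · exact le_add_of_nonneg_left zero_le_one
  unfold scaledField
  rw [fderiv_div_clm_smul hτ.ne' hp.ne' ((contDiff_comp_scale hM _).differentiable one_ne_zero p),
    fderiv_comp_scale hM, hte₀, mul_one, mul_one]
  calc _ ≤ ‖(τ / t p) • fderiv ℝ M (N / τ * t p, p) (N / τ, e₀)‖
          + ‖((τ / t p) ^ 2 / τ) • M (N / τ * t p, p)‖ := norm_sub_le _ _
    _ = τ / t p * ‖fderiv ℝ M (N / τ * t p, p) (N / τ, e₀)‖
          + (τ / t p) ^ 2 / τ * ‖M (N / τ * t p, p)‖ := by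
        rw [norm_smul, norm_smul, norm_of_nonneg (by positivity), norm_of_nonneg (by positivity)]
    _ ≤ τ / t p * (C * (1 + ‖e₀‖)) + (τ / t p) ^ 2 / τ * C := by
        gcongr
        exact (ContinuousLinearMap.le_opNorm_of_le _ hdir).trans (by gcongr)
    _ = _ := by field_simp; ring

variable [FiniteDimensional ℝ V]

lemma gradAlong_div_clm_mul (hte : ∀ v, t (e v) = 0) (hτ : τ ≠ 0) (hp : t p ≠ 0)
    (hf : DifferentiableAt ℝ f p) :
    gradAlong e (fun q => τ / t q * f q) p = (τ / t p) • gradAlong e f p :=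
  gradAlong_eq_of_forall_fderiv fun v => by
    rw [fderiv_div_clm_mul hτ hp hf, hte, real_inner_smul_left, inner_gradAlong]
    ring

lemma divAlong_div_clm_smul (hte : ∀ v, t (e v) = 0) (hτ : τ ≠ 0) (hp : t p ≠ 0)
    (hY : DifferentiableAt ℝ Y p) :
    divAlong e (fun q => (τ / t q) • Y q) p = τ / t p * divAlong e Y p := by
  simp only [divAlong_eq_sum_inner (stdOrthonormalBasis ℝ V), fderiv_div_clm_smul hτ hp hY, hte,
    mul_zero, zero_smul, sub_zero, real_inner_smul_right, Finset.mul_sum]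

lemma divAlong_scaledField (hte : ∀ v, t (e v) = 0) (hM : ContDiff ℝ 1 M) (hτ : τ ≠ 0)
    (hp : t p ≠ 0) :
    divAlong e (scaledField t M N τ) p
      = τ / t p * divAlong e (fun q => M (N / τ * t p, q)) p := by
  unfold scaledField
  rw [divAlong_div_clm_smul hte hτ hp ((contDiff_comp_scale hM _).differentiable one_ne_zero p)]
  simp only [divAlong_eq_sum_inner (stdOrthonormalBasis ℝ V), fderiv_comp_scale_spatial hte hM]

end SingularWeight

section Multiplier

variable {E V : Type*} [NormedAddCommGroup E] [NormedSpace ℝ E]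
  [NormedAddCommGroup V] [InnerProductSpace ℝ V] [FiniteDimensional ℝ V] {e₀ : E} {e : V →L[ℝ] E}
  {t : E →L[ℝ] ℝ} {A : E → V →L[ℝ] V} {f : E → ℝ} {K S : Set E} {M : ℝ × E → V}
  {G : ℝ × E → ℝ} {p : E} {τ N C C' κ δ θ : ℝ}

lemma eventually_clm_ne_zero (hp : t p ≠ 0) : ∀ᶠ q in 𝓝 p, t q ≠ 0 :=
  t.continuous.continuousAt.eventually_ne hp

lemma differentiable_fderiv_apply (hf : ContDiff ℝ 2 f) (x : E) :
    Differentiable ℝ fun q => fderiv ℝ f q x :=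
  ((hf.fderiv_right (m := 1) le_rfl).clm_apply contDiff_const).differentiable one_ne_zero

lemma fderiv_div_clm_mul_time (hte₀ : t e₀ = 1) (hτ : τ ≠ 0) (hp : t p ≠ 0)
    (hf : DifferentiableAt ℝ f p) :
    fderiv ℝ (fun q => τ / t q * f q) p e₀
      = τ / t p * (fderiv ℝ f p e₀ - 1 / t p * f p) := by
  rw [fderiv_div_clm_mul hτ hp hf, hte₀]
  field_simp

lemma gradAlong_fderiv_div_clm_mul (hte₀ : t e₀ = 1) (hte : ∀ v, t (e v) = 0) (hτ : τ ≠ 0)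
    (hp : t p ≠ 0) (hf : ContDiff ℝ 2 f) :
    gradAlong e (fun q => fderiv ℝ (fun q => τ / t q * f q) q e₀) p
      = (τ / t p) • (gradAlong e (fun q => fderiv ℝ f q e₀) p - (1 / t p) • gradAlong e f p) := by
  have hf₁ := hf.differentiable two_ne_zero
  have hft := differentiable_fderiv_apply hf e₀
  have hquot : DifferentiableAt ℝ (fun q => 1 / t q * f q) p :=
    (differentiableAt_div_clm hp).fun_mul (hf₁ p)
  rw [gradAlong_congr ((eventually_clm_ne_zero hp).mono fun q hq =>
    fderiv_div_clm_mul_time hte₀ hτ hq (hf₁ q)),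
    gradAlong_div_clm_mul hte hτ hp ((hft p).fun_sub hquot)]
  congr 1
  refine gradAlong_eq_of_forall_fderiv fun v => ?_
  rw [fderiv_fun_sub (hft p) hquot, inner_sub_left,
    ← gradAlong_div_clm_mul hte one_ne_zero hp (hf₁ p), inner_gradAlong, inner_gradAlong]
  rfl

lemma fderiv_fderiv_div_clm_mul (hte₀ : t e₀ = 1) (hτ : τ ≠ 0) (hp : t p ≠ 0)
    (hf : ContDiff ℝ 2 f) :
    fderiv ℝ (fun q => fderiv ℝ (fun q => τ / t q * f q) q e₀) p e₀
      = τ / t p * (fderiv ℝ (fun q => fderiv ℝ f q e₀) p e₀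
        - 2 / t p * fderiv ℝ f p e₀ + 2 / t p ^ 2 * f p) := by
  have hf₁ := hf.differentiable two_ne_zero
  have hft := differentiable_fderiv_apply hf e₀
  have hquot : DifferentiableAt ℝ (fun q => 1 / t q * f q) p :=
    (differentiableAt_div_clm hp).fun_mul (hf₁ p)
  have hcongr : (fun q => fderiv ℝ (fun q => τ / t q * f q) q e₀) =ᶠ[𝓝 p]
      fun q => τ / t q * (fderiv ℝ f q e₀ - 1 / t q * f q) :=
    (eventually_clm_ne_zero hp).mono fun q hq => fderiv_div_clm_mul_time hte₀ hτ hq (hf₁ q)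
  rw [hcongr.fderiv_eq, fderiv_div_clm_mul_time hte₀ hτ hp ((hft p).fun_sub hquot),
    fderiv_fun_sub (hft p) hquot, _root_.sub_apply,
    fderiv_div_clm_mul_time hte₀ one_ne_zero hp (hf₁ p)]
  field_simp
  ring

/-- The coefficient `A`, the time function `t`, and the weight `f` with the derivatives of `f` that
enter the Carleman estimate are bounded by `C` on `K`. -/
structure IsBoundedWeight (e₀ : E) (e : V →L[ℝ] E) (t : E →L[ℝ] ℝ) (A : E → V →L[ℝ] V)
    (f : E → ℝ) (C : ℝ) (K : Set E) : Prop where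
  norm_coeff_le : ∀ p ∈ K, ‖A p‖ ≤ C
  abs_time_le : ∀ p ∈ K, |t p| ≤ C
  abs_le : ∀ p ∈ K, |f p| ≤ C
  norm_gradAlong_le : ∀ p ∈ K, ‖gradAlong e f p‖ ≤ C
  abs_fderiv_le : ∀ p ∈ K, |fderiv ℝ f p e₀| ≤ C
  norm_gradAlong_fderiv_le : ∀ p ∈ K, ‖gradAlong e (fun q => fderiv ℝ f q e₀) p‖ ≤ C
  abs_fderiv_fderiv_le : ∀ p ∈ K, |fderiv ℝ (fun q => fderiv ℝ f q e₀) p e₀| ≤ C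

lemma exists_isBoundedWeight (hK : IsCompact K) (hA : ContDiff ℝ 1 A) (hf : ContDiff ℝ 2 f) :
    ∃ C, IsBoundedWeight e₀ e t A f C K := by
  have hft : ContDiff ℝ 1 fun q => fderiv ℝ f q e₀ :=
    (hf.fderiv_right (m := 1) le_rfl).clm_apply contDiff_const
  have hftt : Continuous fun q => fderiv ℝ (fun q => fderiv ℝ f q e₀) q e₀ :=
    (hft.continuous_fderiv one_ne_zero).clm_apply continuous_const
  obtain ⟨C, hC⟩ := hK.exists_bound_of_continuousOn
    (hA.continuous.prodMk <| t.continuous.prodMk <| hf.continuous.prodMk <|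
      (continuous_gradAlong (e := e) (hf.of_le one_le_two)).prodMk <| hft.continuous.prodMk <|
      (continuous_gradAlong (e := e) hft).prodMk hftt).continuousOn
  simp only [norm_prod_le_iff] at hC
  exact ⟨C,
    { norm_coeff_le := fun p hp => (hC p hp).1
      abs_time_le := fun p hp => (hC p hp).2.1
      abs_le := fun p hp => (hC p hp).2.2.1
      norm_gradAlong_le := fun p hp => (hC p hp).2.2.2.1
      abs_fderiv_le := fun p hp => (hC p hp).2.2.2.2.1
      norm_gradAlong_fderiv_le := fun p hp => (hC p hp).2.2.2.2.2.1
      abs_fderiv_fderiv_le := fun p hp => (hC p hp).2.2.2.2.2.2 }⟩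

namespace IsBoundedWeight

lemma norm_gradAlong_fderiv_weight_le (hw : IsBoundedWeight e₀ e t A f C K) (hte₀ : t e₀ = 1)
    (hte : ∀ v, t (e v) = 0) (hf : ContDiff ℝ 2 f) (hpK : p ∈ K) (hτ : 0 < τ) (hp : 0 < t p)
    (hθ : C * (C + 1) ≤ θ * τ) :
    ‖gradAlong e (fun q => fderiv ℝ (fun q => τ / t q * f q) q e₀) p‖
      ≤ θ * (τ / t p) ^ 2 := by
  have htC : t p ≤ C := (le_abs_self _).trans (hw.abs_time_le p hpK)
  have hC : 0 ≤ C := hp.le.trans htC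
  rw [gradAlong_fderiv_div_clm_mul hte₀ hte hτ.ne' hp.ne' hf, norm_smul,
    norm_of_nonneg (by positivity)]
  calc _ ≤ τ / t p * (C + 1 / t p * C) := by
        gcongr
        refine (norm_sub_le _ _).trans (add_le_add (hw.norm_gradAlong_fderiv_le p hpK) ?_)
        rw [norm_smul, norm_of_nonneg (by positivity)]
        gcongr
        exact hw.norm_gradAlong_le p hpK
    _ = C * (t p + 1) / τ * (τ / t p) ^ 2 := by field_simp
    _ ≤ θ * (τ / t p) ^ 2 := by
        gcongr
        exact (div_le_iff₀ hτ).2 (le_trans (by gcongr) hθ)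

lemma abs_fderiv_fderiv_weight_le (hw : IsBoundedWeight e₀ e t A f C K) (hte₀ : t e₀ = 1)
    (hf : ContDiff ℝ 2 f) (hpK : p ∈ K) (hτ : 0 < τ) (hp : 0 < t p)
    (hθ : C * (C ^ 2 + 2 * C + 2) ≤ θ * τ ^ 2) :
    |fderiv ℝ (fun q => fderiv ℝ (fun q => τ / t q * f q) q e₀) p e₀|
      ≤ θ * (τ / t p) ^ 3 := by
  have htC : t p ≤ C := (le_abs_self _).trans (hw.abs_time_le p hpK)
  have hC : 0 ≤ C := hp.le.trans htC
  have hfirst : |2 / t p * fderiv ℝ f p e₀| ≤ 2 / t p * C := by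
    rw [abs_mul, abs_of_nonneg (by positivity)]; gcongr; exact hw.abs_fderiv_le p hpK
  have hzeroth : |2 / t p ^ 2 * f p| ≤ 2 / t p ^ 2 * C := by
    rw [abs_mul, abs_of_nonneg (by positivity)]; gcongr; exact hw.abs_le p hpK
  rw [fderiv_fderiv_div_clm_mul hte₀ hτ.ne' hp.ne' hf, abs_mul, abs_of_nonneg (by positivity)]
  calc _ ≤ τ / t p * (C + 2 / t p * C + 2 / t p ^ 2 * C) := by
        gcongr
        exact (abs_add_le _ _).trans (add_le_add ((abs_sub _ _).trans
          (add_le_add (hw.abs_fderiv_fderiv_le p hpK) hfirst)) hzeroth)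
    _ = C * (t p ^ 2 + 2 * t p + 2) / τ ^ 2 * (τ / t p) ^ 3 := by field_simp
    _ ≤ θ * (τ / t p) ^ 3 := by
        gcongr
        exact (div_le_iff₀ (by positivity)).2 (le_trans (by gcongr) hθ)

end IsBoundedWeight

end Multiplier

section CarlemanOfPseudoconvex

variable {E V : Type*} [NormedAddCommGroup E] [NormedSpace ℝ E]
  [NormedAddCommGroup V] [InnerProductSpace ℝ V] [FiniteDimensional ℝ V] {e₀ : E} {e : V →L[ℝ] E}
  {t : E →L[ℝ] ℝ} {A : E → V →L[ℝ] V} {f : E → ℝ} {K S : Set E} {M : ℝ × E → V}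
  {G : ℝ × E → ℝ} {p : E} {τ N C C' κ δ θ : ℝ}

lemma coeff_gradAlong_div_clm_mul (hte : ∀ v, t (e v) = 0) (hτ : τ ≠ 0) (hp : t p ≠ 0)
    (hf : DifferentiableAt ℝ f p) :
    A p (gradAlong e (fun q => τ / t q * f q) p) = (τ / t p) • A p (gradAlong e f p) := by
  rw [gradAlong_div_clm_mul hte hτ hp hf, map_smul]

lemma divGrad_div_clm_mul (hte : ∀ v, t (e v) = 0) (hτ : τ ≠ 0) (hp : t p ≠ 0)
    (hA : DifferentiableAt ℝ A p) (hf : ContDiff ℝ 2 f) :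
    divGrad e A (fun q => τ / t q * f q) p = τ / t p * divGrad e A f p := by
  rw [divGrad, divAlong_congr ((eventually_clm_ne_zero hp).mono fun q hq =>
    coeff_gradAlong_div_clm_mul hte hτ hq (hf.differentiable two_ne_zero q)),
    divAlong_div_clm_smul hte hτ hp (hA.clm_apply (differentiableAt_gradAlong hf.contDiffAt)),
    divGrad]

lemma gradAlong_inner_div_clm_mul (hte : ∀ v, t (e v) = 0) (hτ : τ ≠ 0) (hp : t p ≠ 0)
    (hA : DifferentiableAt ℝ A p) (hf : ContDiff ℝ 2 f) :
    gradAlong e (fun q => ⟪A q (gradAlong e (fun q => τ / t q * f q) q),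
        gradAlong e (fun q => τ / t q * f q) q⟫_ℝ) p
      = (τ / t p) ^ 2 • gradAlong e (fun q => ⟪A q (gradAlong e f q), gradAlong e f q⟫_ℝ) p := by
  have hgrad : DifferentiableAt ℝ (gradAlong e f) p := differentiableAt_gradAlong hf.contDiffAt
  have hform : DifferentiableAt ℝ (fun q => ⟪A q (gradAlong e f q), gradAlong e f q⟫_ℝ) p :=
    (hA.clm_apply hgrad).inner ℝ hgrad
  have hcongr : (fun q => ⟪A q (gradAlong e (fun q => τ / t q * f q) q),
      gradAlong e (fun q => τ / t q * f q) q⟫_ℝ) =ᶠ[𝓝 p]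
      fun q => τ / t q * (τ / t q * ⟪A q (gradAlong e f q), gradAlong e f q⟫_ℝ) := by
    filter_upwards [eventually_clm_ne_zero hp] with q hq
    rw [gradAlong_div_clm_mul hte hτ hq (hf.differentiable two_ne_zero q), map_smul,
      real_inner_smul_left, real_inner_smul_right]
  rw [gradAlong_congr hcongr,
    gradAlong_div_clm_mul hte hτ hp ((differentiableAt_div_clm hp).fun_mul hform),
    gradAlong_div_clm_mul hte hτ hp hform, smul_smul, pow_two]

namespace IsRegularizedField

lemma divAlong_scaledField_eq (hM : IsRegularizedField e A f K M G C' κ δ)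
    (hte : ∀ v, t (e v) = 0) (hN : N ≠ 0) (hτ : τ ≠ 0) (hp : t p ≠ 0) :
    divAlong e (scaledField t M N τ) p
      = τ / t p * (τ / t p * (N⁻¹ * G (N / τ * t p, p))) := by
  rw [divAlong_scaledField hte hM.contDiff hτ hp, ← hM.mul_divAlong]
  field_simp

lemma contDiffAt_divAlong_scaledField (hM : IsRegularizedField e A f K M G C' κ δ)
    (hte : ∀ v, t (e v) = 0) (hN : N ≠ 0) (hτ : τ ≠ 0) (hp : t p ≠ 0) :
    ContDiffAt ℝ 1 (divAlong e (scaledField t M N τ)) p :=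
  ((contDiffAt_div_clm hp).mul ((contDiffAt_div_clm hp).mul (contDiffAt_const.mul
    (contDiff_comp_scale hM.contDiff_div (N / τ)).contDiffAt))).congr_of_eventuallyEq <|
    (eventually_clm_ne_zero hp).mono fun _ hq => hM.divAlong_scaledField_eq hte hN hτ hq

lemma gradAlong_divAlong_scaledField (hM : IsRegularizedField e A f K M G C' κ δ)
    (hte : ∀ v, t (e v) = 0) (hN : N ≠ 0) (hτ : τ ≠ 0) (hp : t p ≠ 0) :
    gradAlong e (divAlong e (scaledField t M N τ)) p
      = ((τ / t p) ^ 2 / N) • gradAlong e (fun q => G (N / τ * t p, q)) p := by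
  have hG := (contDiff_comp_scale (t := t) hM.contDiff_div (N / τ)).differentiable one_ne_zero p
  rw [gradAlong_congr ((eventually_clm_ne_zero hp).mono fun _ hq =>
      hM.divAlong_scaledField_eq hte hN hτ hq),
    gradAlong_div_clm_mul hte hτ hp ((differentiableAt_div_clm hp).fun_mul (hG.const_mul N⁻¹)),
    gradAlong_div_clm_mul hte hτ hp (hG.const_mul N⁻¹), smul_smul, ← pow_two,
    div_eq_mul_inv _ N, mul_smul]
  congr 1
  refine gradAlong_eq_of_forall_fderiv fun v => ?_
  rw [fderiv_const_mul hG, _root_.smul_apply, fderiv_comp_scale_spatial hte hM.contDiff_div,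
    real_inner_smul_left, inner_gradAlong, smul_eq_mul]

lemma norm_scaledField_sub_le (hM : IsRegularizedField e A f K M G C' κ δ)
    (hte : ∀ v, t (e v) = 0) (hf : DifferentiableAt ℝ f p) (hpK : p ∈ K) (hτ : 0 < τ)
    (hp : 0 < t p) (hδ : N / τ * t p ∈ Icc 0 δ) :
    ‖scaledField t M N τ p - A p (gradAlong e (fun q => τ / t q * f q) p)‖ ≤ C' * N := by
  have hderiv : ∀ ε ∈ Icc 0 (N / τ * t p), HasDerivWithinAt (fun ε => M (ε, p))
      (fderiv ℝ M (ε, p) (1, 0)) (Icc 0 (N / τ * t p)) ε := fun ε _ =>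
    ((hM.contDiff.differentiable one_ne_zero (ε, p)).hasFDerivAt.comp_hasDerivAt ε
      ((hasDerivAt_id ε).prodMk (hasDerivAt_const ε p))).hasDerivWithinAt
  have hbound : ∀ ε ∈ Ico 0 (N / τ * t p), ‖fderiv ℝ M (ε, p) (1, 0)‖ ≤ C' := fun ε hε => by
    simpa using ContinuousLinearMap.le_of_opNorm_le_of_le _
      (hM.norm_fderiv_le ε ⟨hε.1, hε.2.le.trans hδ.2⟩ p hpK) (le_refl ‖((1 : ℝ), (0 : E))‖)
  have hmvt := norm_image_sub_le_of_norm_deriv_le_segment' hderiv hbound _ (right_mem_Icc.2 hδ.1)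
  rw [coeff_gradAlong_div_clm_mul hte hτ.ne' hp.ne' hf, ← hM.zero_left, scaledField, ← smul_sub,
    norm_smul, norm_of_nonneg (by positivity)]
  calc τ / t p * ‖M (N / τ * t p, p) - M (0, p)‖ ≤ τ / t p * (C' * (N / τ * t p - 0)) := by gcongr
    _ = C' * N := by field_simp; ring

lemma abs_divAlong_scaledField_sub_le (hM : IsRegularizedField e A f K M G C' κ δ)
    (hte : ∀ v, t (e v) = 0) (hA : DifferentiableAt ℝ A p) (hf : ContDiff ℝ 2 f) (hpK : p ∈ K)
    (hτ : 0 < τ) (hp : 0 < t p) (hδ : N / τ * t p ∈ Icc 0 δ) :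
    |divAlong e (scaledField t M N τ) p - divGrad e A (fun q => τ / t q * f q) p|
      ≤ 2 * C' * (τ / t p) := by
  have hdivGrad : divGrad e A f p = divAlong e (fun q => M (0, q)) p := by
    simp only [divGrad, hM.zero_left]
  rw [divAlong_scaledField hte hM.contDiff hτ.ne' hp.ne',
    divGrad_div_clm_mul hte hτ.ne' hp.ne' hA hf, hdivGrad, ← mul_sub, abs_mul,
    abs_of_nonneg (by positivity), mul_comm]
  gcongr
  refine (abs_sub _ _).trans ?_
  linarith [hM.abs_divAlong_le _ hδ p hpK,
    hM.abs_divAlong_le 0 ⟨le_rfl, hδ.1.trans hδ.2⟩ p hpK]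

lemma le_virialForm_scaledField (hM : IsRegularizedField e A f K M G C' κ δ)
    (hte : ∀ v, t (e v) = 0) (hpK : p ∈ K) (hτ : 0 < τ) (hp : 0 < t p)
    (hδ : N / τ * t p ∈ Icc 0 δ) (ξ : V) :
    κ * (τ / t p) * ‖ξ‖ ^ 2 ≤ virialForm e A (scaledField t M N τ) p ξ := by
  rw [virialForm_scaledField hte hM.contDiff hτ.ne' hp.ne']
  linarith [mul_le_mul_of_nonneg_left (hM.le_virialForm _ hδ p hpK ξ) (div_pos hτ hp).le]

lemma le_inner_scaledField_gradAlong (hM : IsRegularizedField e A f K M G C' κ δ)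
    (hte : ∀ v, t (e v) = 0) (hA : DifferentiableAt ℝ A p) (hf : ContDiff ℝ 2 f) (hpK : p ∈ K)
    (hτ : 0 < τ) (hp : 0 < t p) (hδ : N / τ * t p ∈ Icc 0 δ) :
    κ * (τ / t p) ^ 3 ≤ ⟪scaledField t M N τ p,
      gradAlong e (fun q => ⟪A q (gradAlong e (fun q => τ / t q * f q) q),
        gradAlong e (fun q => τ / t q * f q) q⟫_ℝ) p⟫_ℝ := by
  rw [gradAlong_inner_div_clm_mul hte hτ.ne' hp.ne' hA hf, scaledField, real_inner_smul_left,
    real_inner_smul_right]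
  linarith [mul_le_mul_of_nonneg_left (hM.le_inner_gradAlong _ hδ p hpK)
    (pow_pos (div_pos hτ hp) 3).le]

lemma norm_gradAlong_divAlong_scaledField_le (hM : IsRegularizedField e A f K M G C' κ δ)
    (hte : ∀ v, t (e v) = 0) (hpK : p ∈ K) (hN : 0 < N) (hNθ : C' ≤ θ * N) (hτ : 0 < τ)
    (hp : 0 < t p) (hδ : N / τ * t p ∈ Icc 0 δ) :
    ‖gradAlong e (divAlong e (scaledField t M N τ)) p‖ ≤ θ * (τ / t p) ^ 2 := by
  rw [hM.gradAlong_divAlong_scaledField hte hN.ne' hτ.ne' hp.ne', norm_smul,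
    norm_of_nonneg (by positivity), div_mul_eq_mul_div, div_le_iff₀ hN]
  linarith [mul_le_mul_of_nonneg_left ((hM.norm_gradAlong_div_le _ hδ p hpK).trans hNθ)
    (pow_pos (div_pos hτ hp) 2).le]

lemma norm_fderiv_scaledField_time_le (hM : IsRegularizedField e A f K M G C' κ δ)
    (hte₀ : t e₀ = 1) (hpK : p ∈ K) (hC' : 0 ≤ C') (hN : 0 < N) (hτ : 0 < τ) (hNτ : N ≤ τ)
    (hp : 0 < t p) (htC : t p ≤ C) (hX : C' + C' * (1 + ‖e₀‖) * C ≤ θ * τ)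
    (hδ : N / τ * t p ∈ Icc 0 δ) :
    ‖fderiv ℝ (scaledField t M N τ) p e₀‖ ≤ θ * (τ / t p) ^ 2 := by
  refine (norm_fderiv_scaledField_le hte₀ hM.contDiff hτ hp (by rwa [abs_of_pos hN])
    (hM.norm_le _ hδ p hpK) (hM.norm_fderiv_le _ hδ p hpK)).trans ?_
  gcongr
  exact (div_le_iff₀ hτ).2 (le_trans (by gcongr) hX)

theorem isCarlemanMultiplier_scaledField (hM : IsRegularizedField e A f K M G C' κ δ)
    (hw : IsBoundedWeight e₀ e t A f C K) (hte₀ : t e₀ = 1) (hte : ∀ v, t (e v) = 0)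
    (hA : ContDiff ℝ 1 A) (hf : ContDiff ℝ 2 f) (hS : ∀ p ∈ S, p ∈ K ∧ 0 < t p)
    (hC' : 0 ≤ C') (hN : 0 < N) (hNθ : C' ≤ θ * N) (hτ : 0 < τ) (hNτ : N ≤ τ)
    (hδ : N * C ≤ δ * τ) (hX : C' + C' * (1 + ‖e₀‖) * C ≤ θ * τ) (hη : C * (C + 1) ≤ θ * τ)
    (hη' : C * (C ^ 2 + 2 * C + 2) ≤ θ * τ ^ 2) :
    IsCarlemanMultiplier e₀ e A (fun q => τ / t q * f q) (scaledField t M N τ) (fun q => τ / t q)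
      C (C' * (N + 2)) κ θ S := by
  have htC : ∀ p ∈ S, t p ≤ C := fun p hp =>
    (le_abs_self _).trans (hw.abs_time_le p (hS p hp).1)
  have hε : ∀ p ∈ S, N / τ * t p ∈ Icc 0 δ := fun p hp => by
    have ht := (hS p hp).2
    refine ⟨by positivity, ?_⟩
    rw [div_mul_eq_mul_div, div_le_iff₀ hτ]
    exact le_trans (by gcongr; exact htC p hp) hδ
  have hA₁ := hA.differentiable one_ne_zero
  have hf₁ := hf.differentiable two_ne_zero
  constructor
  all_goals intro p hp; obtain ⟨hpK, ht⟩ := hS p hp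
  case contDiffAt_weight => exact (contDiffAt_div_clm ht.ne').mul hf.contDiffAt
  case contDiffAt_field => exact contDiffAt_scaledField hM.contDiff ht.ne'
  case contDiffAt_div => exact hM.contDiffAt_divAlong_scaledField hte hN.ne' hτ.ne' ht.ne'
  case norm_coeff_le => exact hw.norm_coeff_le p hpK
  case norm_gradAlong_weight_le =>
    rw [gradAlong_div_clm_mul hte hτ.ne' ht.ne' (hf₁ p), norm_smul,
      norm_of_nonneg (div_pos hτ ht).le, mul_comm]
    gcongr
    exact hw.norm_gradAlong_le p hpK
  case norm_field_sub_le =>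
    refine (hM.norm_scaledField_sub_le hte (hf₁ p) hpK hτ ht (hε p hp)).trans ?_
    gcongr; linarith
  case abs_div_sub_le =>
    refine (hM.abs_divAlong_scaledField_sub_le hte (hA₁ p) hf hpK hτ ht (hε p hp)).trans ?_
    rw [mul_comm 2]
    gcongr; linarith
  case le_virialForm => exact hM.le_virialForm_scaledField hte hpK hτ ht (hε p hp)
  case le_inner_gradAlong =>
    exact hM.le_inner_scaledField_gradAlong hte (hA₁ p) hf hpK hτ ht (hε p hp)
  case norm_gradAlong_div_le =>
    exact hM.norm_gradAlong_divAlong_scaledField_le hte hpK hN hNθ hτ ht (hε p hp)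
  case norm_fderiv_field_le =>
    exact hM.norm_fderiv_scaledField_time_le hte₀ hpK hC' hN hτ hNτ ht (htC p hp) hX (hε p hp)
  case norm_gradAlong_fderiv_le =>
    exact hw.norm_gradAlong_fderiv_weight_le hte₀ hte hf hpK hτ ht hη
  case abs_fderiv_fderiv_le => exact hw.abs_fderiv_fderiv_weight_le hte₀ hf hpK hτ ht hη'

end IsRegularizedField

lemma eventually_le_mul_atTop {a : ℝ} (ha : 0 < a) (b : ℝ) : ∀ᶠ τ in atTop, b ≤ a * τ :=
  (tendsto_id.const_mul_atTop ha).eventually_ge_atTop b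

theorem exists_eventually_isCarlemanMultiplier [FiniteDimensional ℝ E] (hK : IsCompact K)
    (hK₀ : K.Nonempty) (hte₀ : t e₀ = 1) (hte : ∀ v, t (e v) = 0) (hA : ContDiff ℝ 1 A)
    (hf : ContDiff ℝ 2 f) (hpsc : IsStronglyPseudoconvexOn e A f K) :
    ∃ C R κ θ, 0 < κ ∧ 0 ≤ θ ∧ (C + 1) * θ ≤ κ / 2 ∧ (∀ p ∈ K, t p ≤ C) ∧
      ∀ᶠ τ in atTop, ∀ S, (∀ p ∈ S, p ∈ K ∧ 0 < t p) → ∃ X,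
        IsCarlemanMultiplier e₀ e A (fun q => τ / t q * f q) X (fun q => τ / t q) C R κ θ S := by
  obtain ⟨M, G, C', κ, δ, hκ, hδ, hM⟩ := exists_isRegularizedField hK hA hf hpsc
  obtain ⟨C, hw⟩ := exists_isBoundedWeight (e₀ := e₀) (e := e) (t := t) hK hA hf
  obtain ⟨p₀, hp₀⟩ := hK₀
  have hC : 0 ≤ C := (abs_nonneg _).trans (hw.abs_le p₀ hp₀)
  have hC' : 0 ≤ C' := (norm_nonneg _).trans (hM.norm_le 0 ⟨le_rfl, hδ.le⟩ p₀ hp₀)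
  set θ := κ / (2 * (C + 1)) with hθ_def
  have hθ : 0 < θ := by positivity
  set N := C' / θ + 1 with hN_def
  have hN : 0 < N := by positivity
  have hNθ : C' ≤ θ * N := by
    rw [hN_def, mul_add, mul_div_cancel₀ _ hθ.ne']
    linarith
  refine ⟨C, C' * (N + 2), κ, θ, hκ, hθ.le, ?_,
    fun p hp => (le_abs_self _).trans (hw.abs_time_le p hp), ?_⟩
  · rw [hθ_def]
    field_simp
    rfl
  filter_upwards [eventually_gt_atTop 0, eventually_ge_atTop 1, eventually_ge_atTop N,
    eventually_le_mul_atTop hδ (N * C), eventually_le_mul_atTop hθ (C' + C' * (1 + ‖e₀‖) * C),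
    eventually_le_mul_atTop hθ (C * (C + 1)), eventually_le_mul_atTop hθ (C * (C ^ 2 + 2 * C + 2))]
    with τ hτ hτ₁ hNτ hδτ hXτ hητ hητ' S hS
  exact ⟨_, hM.isCarlemanMultiplier_scaledField hw hte₀ hte hA hf hS hC' hN hNθ hτ hNτ hδτ hXτ
    hητ (hητ'.trans (by gcongr; exact le_self_pow₀ hτ₁ two_ne_zero))⟩

theorem exists_eventually_setIntegral_weightedEnergy_le [FiniteDimensional ℝ E]
    [MeasurableSpace E] [BorelSpace E] (μ : Measure E) [μ.IsAddHaarMeasure] {B : ℝ}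
    (hK : IsCompact K) (hsymm : ∀ p x y, ⟪A p x, y⟫_ℝ = ⟪x, A p y⟫_ℝ)
    (hte₀ : t e₀ = 1) (hte : ∀ v, t (e v) = 0) (hA : ContDiff ℝ 1 A) (hf : ContDiff ℝ 2 f)
    (hpsc : IsStronglyPseudoconvexOn e A f K) (hB : 0 ≤ B) :
    ∃ C > 0, ∀ᶠ τ in atTop, ∀ (S : Set E) (z₁ z₂ F : E → ℝ), IsCompact S →
      (∀ p ∈ S, p ∈ K ∧ 0 < t p) → ContDiff ℝ 2 z₁ → ContDiff ℝ 2 z₂ → tsupport z₁ ⊆ S →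
      tsupport z₂ ⊆ S → IntegrableOn (fun p => F p * exp (2 * (τ / t p * f p))) S μ →
      (∀ p ∈ S,
        (-fderiv ℝ z₂ p e₀ - divGrad e A z₁ p) ^ 2 + (fderiv ℝ z₁ p e₀ - divGrad e A z₂ p) ^ 2
          ≤ 2 * F p
            + B * (‖gradAlong e z₁ p‖ ^ 2 + ‖gradAlong e z₂ p‖ ^ 2 + z₁ p ^ 2 + z₂ p ^ 2)) →
      ∫ p in S, weightedEnergy e (fun q => τ / t q) z₁ z₂ p * exp (2 * (τ / t p * f p)) ∂μ
        ≤ C * ∫ p in S, F p * exp (2 * (τ / t p * f p)) ∂μ := by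
  rcases K.eq_empty_or_nonempty with rfl | hK₀
  · refine ⟨1, one_pos, .of_forall fun τ S z₁ z₂ F _ hS _ _ _ _ _ _ => ?_⟩
    simp [eq_empty_of_forall_notMem fun p hp => (hS p hp).1]
  obtain ⟨C, R, κ, θ, hκ, hθ, hCθ, htC, hmult⟩ :=
    exists_eventually_isCarlemanMultiplier hK hK₀ hte₀ hte hA hf hpsc
  refine ⟨4 * (2 + 2 * C ^ 2) / κ, by positivity, ?_⟩
  filter_upwards [hmult, eventually_ge_atTop C,
    eventually_le_mul_atTop hκ ((16 * R ^ 2 + 2 * B * (3 + 2 * C ^ 2)) * C)]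
    with τ hmult hCτ hRτ S z₁ z₂ F hS hSK hz₁ hz₂ hz₁S hz₂S hFint hF
  obtain ⟨X, hX⟩ := hmult S hSK
  refine hX.setIntegral_weightedEnergy_le hS hsymm hA hκ hθ hCθ hB (fun p hp => ?_)
    (fun p hp => ?_) hz₁ hz₂ hz₁S hz₂S hFint hF
  · exact (one_le_div (hSK p hp).2).2 ((htC p (hSK p hp).1).trans hCτ)
  · rw [← mul_div_assoc, le_div_iff₀ (hSK p hp).2]
    exact le_trans (by gcongr; exact htC p (hSK p hp).1) hRτ

end CarlemanOfPseudoconvex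

section Convexification

lemma eventually_forall_pos_add_mul_sq {X : Type*} [TopologicalSpace X] {K : Set X} {g h : X → ℝ}
    (hK : IsCompact K) (hg : ContinuousOn g K) (hh : ContinuousOn h K)
    (hpos : ∀ x ∈ K, h x = 0 → 0 < g x) :
    ∀ᶠ l in atTop, ∀ x ∈ K, 0 < g x + l * h x ^ 2 := by
  obtain ⟨c, hc, hcK⟩ := hK.exists_forall_le' (a := 0) (f := fun x => max (g x) (h x ^ 2))
    (hg.sup (hh.pow 2)) fun x hx => by
      rcases eq_or_ne (h x) 0 with h₀ | h₀
      · exact lt_max_of_lt_left (hpos x hx h₀)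
      · exact lt_max_of_lt_right (by positivity)
  obtain ⟨m, hm⟩ := hK.exists_bound_of_continuousOn hg
  filter_upwards [eventually_gt_atTop (m / c), eventually_ge_atTop 0] with l hl hl₀ x hx
  rcases le_max_iff.1 (hcK x hx) with hgx | hhx
  · have := hc.trans_le hgx
    positivity
  · have := (abs_le.1 (hm x hx)).1
    have : m < l * c := (div_lt_iff₀ hc).1 hl
    have : l * c ≤ l * h x ^ 2 := by gcongr
    linarith

variable {E V : Type*} [NormedAddCommGroup E] [NormedSpace ℝ E]
  [NormedAddCommGroup V] [InnerProductSpace ℝ V] {e : V →L[ℝ] E}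
  {A : E → V →L[ℝ] V} {X : E → V} {f ψ : E → ℝ} {K : Set E} {p : E} {l c : ℝ}

lemma virialForm_pos_of_forall_sphere
    (h : ∀ ξ ∈ Metric.sphere (0 : V) 1, 0 < virialForm e A X p ξ) {ξ : V} (hξ : ξ ≠ 0) :
    0 < virialForm e A X p ξ := by
  have hunit := h (‖ξ‖⁻¹ • ξ) (by simp [norm_smul, hξ])
  rw [virialForm_smul] at hunit
  exact pos_of_mul_pos_right hunit (sq_nonneg _)

lemma virialForm_fun_smul (hf : DifferentiableAt ℝ f p) (hX : DifferentiableAt ℝ X p) (ξ : V) :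
    virialForm e A (fun q => f q • X q) p ξ
      = f p * virialForm e A X p ξ + 2 * fderiv ℝ f p (e (A p ξ)) * ⟪X p, ξ⟫_ℝ := by
  simp only [virialForm, fderiv_fun_smul hf hX, _root_.add_apply, _root_.smul_apply,
    ContinuousLinearMap.smulRight_apply, map_smul, inner_add_left, real_inner_smul_left]
  ring

variable [FiniteDimensional ℝ V]

lemma gradAlong_exp_sub_const (hψ : DifferentiableAt ℝ ψ p) :
    gradAlong e (fun q => exp (l * ψ q) - c) p = (l * exp (l * ψ p)) • gradAlong e ψ p :=
  gradAlong_eq_of_forall_fderiv fun v => by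
    rw [fderiv_sub_const, fderiv_exp (hψ.const_mul l), fderiv_const_mul hψ, real_inner_smul_left,
      inner_gradAlong, _root_.smul_apply, _root_.smul_apply, smul_eq_mul, smul_eq_mul]
    ring

lemma virialForm_exp_sub_const (hsymm : ∀ x y, ⟪A p x, y⟫_ℝ = ⟪x, A p y⟫_ℝ)
    (hA : DifferentiableAt ℝ A p) (hψ : ContDiff ℝ 2 ψ) (ξ : V) :
    virialForm e A (fun q => A q (gradAlong e (fun q => exp (l * ψ q) - c) q)) p ξ
      = l * exp (l * ψ p) * (virialForm e A (fun q => A q (gradAlong e ψ q)) p ξ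
        + 2 * l * ⟪A p (gradAlong e ψ p), ξ⟫_ℝ ^ 2) := by
  have hψ₁ := hψ.differentiable two_ne_zero
  have hexp : DifferentiableAt ℝ (fun q => l * exp (l * ψ q)) p :=
    ((hψ₁ p).const_mul l).exp.const_mul l
  simp only [gradAlong_exp_sub_const (hψ₁ _), map_smul]
  rw [virialForm_fun_smul hexp (hA.clm_apply (differentiableAt_gradAlong hψ.contDiffAt)),
    fderiv_const_mul ((hψ₁ p).const_mul l).exp, fderiv_exp ((hψ₁ p).const_mul l),
    fderiv_const_mul (hψ₁ p)]
  simp only [_root_.smul_apply, smul_eq_mul, ← inner_gradAlong, hsymm]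
  ring

lemma inner_gradAlong_inner_exp_sub_const (hA : DifferentiableAt ℝ A p) (hψ : ContDiff ℝ 2 ψ) :
    ⟪A p (gradAlong e (fun q => exp (l * ψ q) - c) p),
      gradAlong e (fun q => ⟪A q (gradAlong e (fun q => exp (l * ψ q) - c) q),
        gradAlong e (fun q => exp (l * ψ q) - c) q⟫_ℝ) p⟫_ℝ
      = (l * exp (l * ψ p)) ^ 3 * (⟪A p (gradAlong e ψ p),
          gradAlong e (fun q => ⟪A q (gradAlong e ψ q), gradAlong e ψ q⟫_ℝ) p⟫_ℝ
        + 2 * l * ⟪A p (gradAlong e ψ p), gradAlong e ψ p⟫_ℝ ^ 2) := by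
  have hψ₁ := hψ.differentiable two_ne_zero
  have hgrad : DifferentiableAt ℝ (gradAlong e ψ) p := differentiableAt_gradAlong hψ.contDiffAt
  have hexp : DifferentiableAt ℝ (fun q => exp (l * ψ q)) p := ((hψ₁ p).const_mul l).exp
  have hexp_grad : gradAlong e (fun q => l * exp (l * ψ q)) p
      = (l ^ 2 * exp (l * ψ p)) • gradAlong e ψ p :=
    gradAlong_eq_of_forall_fderiv fun v => by
      rw [fderiv_const_mul hexp, fderiv_exp ((hψ₁ p).const_mul l), fderiv_const_mul (hψ₁ p),
        real_inner_smul_left, inner_gradAlong]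
      simp only [_root_.smul_apply, smul_eq_mul]
      ring
  simp only [gradAlong_exp_sub_const (hψ₁ _), map_smul, real_inner_smul_left,
    real_inner_smul_right]
  have hl := hexp.const_mul l
  have hform := (hA.clm_apply hgrad).inner ℝ hgrad
  rw [gradAlong_mul hl (hl.fun_mul hform), gradAlong_mul hl hform, hexp_grad]
  simp only [inner_add_right, real_inner_smul_right]
  ring

theorem eventually_isStronglyPseudoconvexOn_exp_sub_const (hK : IsCompact K)
    (hsymm : ∀ p x y, ⟪A p x, y⟫_ℝ = ⟪x, A p y⟫_ℝ) (hA : ContDiff ℝ 1 A) (hψ : ContDiff ℝ 2 ψ)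
    (hnonchar : ∀ p ∈ K, ⟪A p (gradAlong e ψ p), gradAlong e ψ p⟫_ℝ ≠ 0)
    (hvirial : ∀ p ∈ K, ∀ ξ ≠ 0, ⟪A p (gradAlong e ψ p), ξ⟫_ℝ = 0 →
      0 < virialForm e A (fun q => A q (gradAlong e ψ q)) p ξ) :
    ∀ᶠ l in atTop, ∀ c, IsStronglyPseudoconvexOn e A (fun q => exp (l * ψ q) - c) K := by
  have hgrad : ContDiff ℝ 1 (gradAlong e ψ) := contDiff_gradAlong hψ
  have hfield : ContDiff ℝ 1 fun q => A q (gradAlong e ψ q) := hA.clm_apply hgrad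
  have hvirial_cont : Continuous fun q : E × V =>
      virialForm e A (fun x => A x (gradAlong e ψ x)) q.1 q.2 :=
    (continuous_virialForm_slice hA (hfield.comp contDiff_snd)).comp (.prodMk_right (0 : ℝ))
  have hinner_cont := hfield.continuous.inner (𝕜 := ℝ)
    (continuous_gradAlong (e := e) (hfield.inner ℝ hgrad))
  have hdouble : Tendsto (fun l : ℝ => 2 * l) atTop atTop :=
    tendsto_id.const_mul_atTop two_pos
  filter_upwards [eventually_gt_atTop 0,
    hdouble.eventually (eventually_forall_pos_add_mul_sq (hK.prod (isCompact_sphere (0 : V) 1))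
      hvirial_cont.continuousOn
      ((hfield.continuous.comp continuous_fst).inner continuous_snd).continuousOn
      fun q hq => hvirial q.1 hq.1 q.2 (Metric.ne_of_mem_sphere hq.2 one_ne_zero)),
    hdouble.eventually (eventually_forall_pos_add_mul_sq hK hinner_cont.continuousOn
      (hfield.continuous.inner hgrad.continuous).continuousOn
      fun p hp h₀ => (hnonchar p hp h₀).elim)] with l hl hvirial hinner c
  refine ⟨fun p hp ξ hξ => virialForm_pos_of_forall_sphere (fun ξ hξ => ?_) hξ, fun p hp => ?_⟩
  · rw [virialForm_exp_sub_const (hsymm p) (hA.differentiable one_ne_zero p) hψ]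
    exact mul_pos (by positivity) (hvirial (p, ξ) ⟨hp, hξ⟩)
  · rw [inner_gradAlong_inner_exp_sub_const (hA.differentiable one_ne_zero p) hψ]
    exact mul_pos (by positivity) (hinner p hp)

end Convexification

section Coordinates

lemma fderiv_clm_comp_apply {E F G : Type*} [NormedAddCommGroup E] [NormedSpace ℝ E]
    [NormedAddCommGroup F] [NormedSpace ℝ F] [NormedAddCommGroup G] [NormedSpace ℝ G]
    (L : F →L[ℝ] G) {g : E → F} {p : E} (hg : DifferentiableAt ℝ g p) (v : E) :
    fderiv ℝ (fun q => L (g q)) p v = L (fderiv ℝ g p v) :=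
  congrArg (fun L' => L' v) (L.hasFDerivAt.comp p hg.hasFDerivAt).fderiv

/-- The inclusion of the spatial directions into space-time, with space
Euclidean. -/
def spatialIncl (n : ℕ) : EuclideanSpace ℝ (Fin n) →L[ℝ] ℝ × (Fin n → ℝ) :=
  (ContinuousLinearMap.inr ℝ ℝ (Fin n → ℝ)).comp
    (EuclideanSpace.equiv (Fin n) ℝ : EuclideanSpace ℝ (Fin n) →L[ℝ] Fin n → ℝ)

/-- The coefficients `a_{kj}` as a field of operators on Euclidean space. -/
def coeffOp {n : ℕ} (a : Fin n → Fin n → ℝ → (Fin n → ℝ) → ℝ) (p : ℝ × (Fin n → ℝ)) :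
    EuclideanSpace ℝ (Fin n) →L[ℝ] EuclideanSpace ℝ (Fin n) :=
  Matrix.toEuclideanCLM (𝕜 := ℝ) (Matrix.of fun k j => a k j p.1 p.2)

variable {n : ℕ} {F : Type*} [NormedAddCommGroup F] [NormedSpace ℝ F]
  {a : Fin n → Fin n → ℝ → (Fin n → ℝ) → ℝ} {f u : ℝ × (Fin n → ℝ) → ℝ}
  {X : ℝ × (Fin n → ℝ) → EuclideanSpace ℝ (Fin n)} {p : ℝ × (Fin n → ℝ)}

lemma pd_slice {g : ℝ × (Fin n → ℝ) → F} {t : ℝ} {x : Fin n → ℝ}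
    (hg : DifferentiableAt ℝ g (t, x)) (k : Fin n) :
    pd k (fun y => g (t, y)) x = fderiv ℝ g (t, x) (0, Pi.single k 1) :=
  congrArg (fun L => L (Pi.single k 1))
    (hg.hasFDerivAt.comp x (hasFDerivAt_prodMk_right t x)).fderiv

lemma deriv_slice {g : ℝ × (Fin n → ℝ) → F} {t : ℝ} {x : Fin n → ℝ}
    (hg : DifferentiableAt ℝ g (t, x)) :
    deriv (fun s => g (s, x)) t = fderiv ℝ g (t, x) (1, 0) :=
  (hg.hasFDerivAt.comp_hasDerivAt t ((hasDerivAt_id t).prodMk (hasDerivAt_const t x))).deriv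

lemma spatialIncl_single (k : Fin n) :
    spatialIncl n (EuclideanSpace.single k 1) = (0, Pi.single k 1) := by
  ext <;> simp [spatialIncl, Pi.single_apply]

lemma spatialIncl_eq_sum (v : EuclideanSpace ℝ (Fin n)) :
    spatialIncl n v = ∑ k, v k • ((0 : ℝ), (Pi.single k 1 : Fin n → ℝ)) := by
  simp only [← spatialIncl_single, ← map_smul, ← map_sum]
  congr 1
  ext i
  simp [Finset.sum_apply, Pi.single_apply]

lemma gradAlong_spatialIncl_apply (k : Fin n) :
    gradAlong (spatialIncl n) f p k = fderiv ℝ f p (0, Pi.single k 1) := by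
  rw [← spatialIncl_single, ← inner_gradAlong, EuclideanSpace.inner_single_right]
  simp

lemma fderiv_euclidean_apply (hX : DifferentiableAt ℝ X p) (k : Fin n) (v : ℝ × (Fin n → ℝ)) :
    fderiv ℝ X p v k = fderiv ℝ (fun q => X q k) p v :=
  (fderiv_clm_comp_apply (EuclideanSpace.proj (𝕜 := ℝ) k) hX v).symm

lemma divAlong_spatialIncl (hX : DifferentiableAt ℝ X p) :
    divAlong (spatialIncl n) X p = ∑ k, fderiv ℝ (fun q => X q k) p (0, Pi.single k 1) := by
  rw [divAlong_eq_sum_inner (EuclideanSpace.basisFun (Fin n) ℝ)]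
  refine Finset.sum_congr rfl fun k _ => ?_
  rw [← fderiv_euclidean_apply hX, ← spatialIncl_single, EuclideanSpace.basisFun_apply,
    EuclideanSpace.inner_single_left]
  simp

lemma coeffOp_apply (v : EuclideanSpace ℝ (Fin n)) (k : Fin n) :
    coeffOp a p v k = ∑ j, a k j p.1 p.2 * v j := by
  simp [coeffOp, Matrix.mulVec, dotProduct]

lemma inner_coeffOp (v w : EuclideanSpace ℝ (Fin n)) :
    ⟪coeffOp a p v, w⟫_ℝ = aF a p.1 p.2 w v := by
  simp only [PiLp.inner_apply, coeffOp_apply, aF, RCLike.inner_apply, conj_trivial, Finset.mul_sum]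
  exact Finset.sum_congr rfl fun k _ => Finset.sum_congr rfl fun j _ => by ring

lemma coeffOp_symm (ha : ∀ k j, a k j = a j k) (p : ℝ × (Fin n → ℝ))
    (v w : EuclideanSpace ℝ (Fin n)) : ⟪coeffOp a p v, w⟫_ℝ = ⟪v, coeffOp a p w⟫_ℝ := by
  rw [real_inner_comm _ v, inner_coeffOp, inner_coeffOp, aF, aF, Finset.sum_comm]
  refine Finset.sum_congr rfl fun k _ => Finset.sum_congr rfl fun j _ => ?_
  rw [ha j k]
  ring

lemma contDiff_coeffOp (ha : ∀ k j, ContDiff ℝ 1 fun p : ℝ × (Fin n → ℝ) => a k j p.1 p.2) :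
    ContDiff ℝ 1 (coeffOp a) :=
  contDiff_clm_apply_iff.2 fun v => contDiff_euclidean.2 fun k => by
    simp only [coeffOp_apply]
    exact ContDiff.sum fun j _ => (ha k j).mul contDiff_const

lemma inner_fderiv_coeffOp_spatialIncl
    (ha : ∀ k j, ContDiff ℝ 1 fun p : ℝ × (Fin n → ℝ) => a k j p.1 p.2)
    (v u w : EuclideanSpace ℝ (Fin n)) :
    ⟪fderiv ℝ (coeffOp a) p (spatialIncl n v) u, w⟫_ℝ = ∑ k, v k * aD a k p.1 p.2 w u := by
  have hA := (contDiff_coeffOp ha).differentiable one_ne_zero p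
  have hdiff : ∀ i j, DifferentiableAt ℝ (fun q : ℝ × (Fin n → ℝ) => a i j q.1 q.2) p :=
    fun i j => (ha i j).differentiable one_ne_zero p
  have happly : ∀ (x : ℝ × (Fin n → ℝ)) i, fderiv ℝ (coeffOp a) p x u i
      = ∑ j, fderiv ℝ (fun q : ℝ × (Fin n → ℝ) => a i j q.1 q.2) p x * u j := fun x i => by
    have h := fderiv_euclidean_apply (hA.clm_apply (differentiableAt_const u)) i x
    simp only [coeffOp_apply] at h
    rw [fderiv_fun_sum fun j _ => (hdiff i j).mul_const (u j)] at h
    simpa [fderiv_clm_apply hA (differentiableAt_const u), fderiv_mul_const (hdiff i _),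
      mul_comm] using h
  have hpd : ∀ i j k, pd k (fun y => a i j p.1 y) p.2
      = fderiv ℝ (fun q : ℝ × (Fin n → ℝ) => a i j q.1 q.2) p (0, Pi.single k 1) :=
    fun i j k => pd_slice (g := fun q : ℝ × (Fin n → ℝ) => a i j q.1 q.2) (hdiff i j) k
  rw [spatialIncl_eq_sum, map_sum, _root_.sum_apply, sum_inner]
  refine Finset.sum_congr rfl fun k _ => ?_
  rw [map_smul, _root_.smul_apply, real_inner_smul_left]
  simp only [PiLp.inner_apply, happly, aD, hpd, RCLike.inner_apply, conj_trivial, Finset.mul_sum]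
  exact Finset.sum_congr rfl fun i _ => Finset.sum_congr rfl fun j _ => by ring

lemma divGrad_coeffOp
    (ha : ∀ k j, ContDiff ℝ 1 fun p : ℝ × (Fin n → ℝ) => a k j p.1 p.2) (hu : ContDiff ℝ 2 u) :
    divGrad (spatialIncl n) (coeffOp a) u p = ∑ l, ∑ j, fderiv ℝ (fun q =>
      a l j q.1 q.2 * fderiv ℝ u q (0, Pi.single j 1)) p (0, Pi.single l 1) := by
  rw [divGrad, divAlong_spatialIncl (((contDiff_coeffOp ha).differentiable one_ne_zero p).clm_apply
    (differentiableAt_gradAlong hu.contDiffAt))]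
  simp only [coeffOp_apply, gradAlong_spatialIncl_apply]
  refine Finset.sum_congr rfl fun l _ => ?_
  rw [fderiv_fun_sum fun j _ => ((ha l j).differentiable one_ne_zero p).fun_mul
    (differentiable_fderiv_apply hu _ p), _root_.sum_apply]

end Coordinates

section CoordinatePseudoconvexity

lemma virialForm_clm_apply_gradAlong {E V : Type*} [NormedAddCommGroup E] [NormedSpace ℝ E]
    [NormedAddCommGroup V] [InnerProductSpace ℝ V] [FiniteDimensional ℝ V] {e : V →L[ℝ] E}
    {A : E → V →L[ℝ] V} {f : E → ℝ} {p : E} (hsymm : ∀ x y, ⟪A p x, y⟫_ℝ = ⟪x, A p y⟫_ℝ)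
    (hA : DifferentiableAt ℝ A p) (hf : ContDiffAt ℝ 2 f p) (ξ : V) :
    virialForm e A (fun q => A q (gradAlong e f q)) p ξ
      = 2 * fderiv ℝ (fderiv ℝ f) p (e (A p ξ)) (e (A p ξ))
        - ⟪fderiv ℝ A p (e (A p (gradAlong e f p))) ξ, ξ⟫_ℝ
        + 2 * ⟪fderiv ℝ A p (e (A p ξ)) (gradAlong e f p), ξ⟫_ℝ := by
  rw [virialForm, fderiv_clm_apply hA (differentiableAt_gradAlong hf)]
  simp only [_root_.add_apply, ContinuousLinearMap.comp_apply, ContinuousLinearMap.flip_apply,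
    inner_add_left, hsymm, inner_fderiv_gradAlong hf]
  ring

variable {n : ℕ} {a : Fin n → Fin n → ℝ → (Fin n → ℝ) → ℝ} {ψ : ℝ → (Fin n → ℝ) → ℝ}

lemma gradAlong_spatialIncl_eq_gradx (hψ : Differentiable ℝ fun p : ℝ × (Fin n → ℝ) => ψ p.1 p.2)
    (p : ℝ × (Fin n → ℝ)) :
    gradAlong (spatialIncl n) (fun q => ψ q.1 q.2) p = WithLp.toLp 2 (gradx ψ p.1 p.2) := by
  ext k
  rw [gradAlong_spatialIncl_apply]
  exact (pd_slice (g := fun q : ℝ × (Fin n → ℝ) => ψ q.1 q.2) (hψ p) k).symm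

lemma fderiv_fderiv_spatialIncl (hψ : ContDiff ℝ 2 fun p : ℝ × (Fin n → ℝ) => ψ p.1 p.2)
    (p : ℝ × (Fin n → ℝ)) (v w : EuclideanSpace ℝ (Fin n)) :
    fderiv ℝ (fderiv ℝ fun q : ℝ × (Fin n → ℝ) => ψ q.1 q.2) p (spatialIncl n v) (spatialIncl n w)
      = ∑ k, w k * ∑ l, v l * hessx ψ p.1 p.2 k l := by
  have hdiff : Differentiable ℝ fun q : ℝ × (Fin n → ℝ) => ψ q.1 q.2 :=
    hψ.differentiable two_ne_zero
  have hfderiv := (hψ.fderiv_right (m := 1) le_rfl).differentiable one_ne_zero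
  have hhess : ∀ k l, hessx ψ p.1 p.2 l k = fderiv ℝ (fderiv ℝ fun q : ℝ × (Fin n → ℝ) =>
      ψ q.1 q.2) p (0, Pi.single k 1) (0, Pi.single l 1) := fun k l => by
    have hgrad : (fun y => pd l (ψ p.1) y) = fun y => fderiv ℝ (fun q : ℝ × (Fin n → ℝ) =>
        ψ q.1 q.2) (p.1, y) (0, Pi.single l 1) :=
      funext fun y => pd_slice (g := fun q : ℝ × (Fin n → ℝ) => ψ q.1 q.2) (hdiff (p.1, y)) l
    rw [hessx, hgrad, pd_slice (differentiable_fderiv_apply hψ _ (p.1, p.2)),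
      fderiv_clm_apply (hfderiv _) (differentiableAt_const _)]
    simp
  simp only [spatialIncl_eq_sum, map_sum, map_smul, _root_.sum_apply, _root_.smul_apply,
    smul_eq_mul, hhess, Finset.mul_sum]

lemma pseudoconvexity_expr_eq_two_mul_virialForm (ha_symm : ∀ k j, a k j = a j k)
    (ha : ∀ k j, ContDiff ℝ 1 fun p : ℝ × (Fin n → ℝ) => a k j p.1 p.2)
    (hψ : ContDiff ℝ 2 fun p : ℝ × (Fin n → ℝ) => ψ p.1 p.2) (p : ℝ × (Fin n → ℝ))
    (ξ : EuclideanSpace ℝ (Fin n)) :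
    4 * ∑ m, ∑ m', ∑ k, ∑ l, a m k p.1 p.2 * a m' l p.1 p.2 * ξ m * ξ m' * hessx ψ p.1 p.2 k l
        - 2 * ∑ m, ∑ k, a m k p.1 p.2 * gradx ψ p.1 p.2 m * aD a k p.1 p.2 ξ ξ
        + 4 * ∑ m, ∑ k, a m k p.1 p.2 * ξ m * aD a k p.1 p.2 ξ (gradx ψ p.1 p.2)
      = 2 * virialForm (spatialIncl n) (coeffOp a)
          (fun q => coeffOp a q (gradAlong (spatialIncl n) (fun q => ψ q.1 q.2) q)) p ξ := by
  have hcoeff : ∀ (v : EuclideanSpace ℝ (Fin n)) k, coeffOp a p v k = ∑ m, a m k p.1 p.2 * v m :=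
    fun v k => by simp only [coeffOp_apply, ha_symm k]
  have hfirst : ∀ (v : EuclideanSpace ℝ (Fin n)) (d : Fin n → ℝ),
      ∑ m, ∑ k, a m k p.1 p.2 * v m * d k = ∑ k, coeffOp a p v k * d k := fun v d => by
    rw [Finset.sum_comm]
    simp only [hcoeff, Finset.sum_mul]
  have hsecond : ∑ m, ∑ m', ∑ k, ∑ l,
        a m k p.1 p.2 * a m' l p.1 p.2 * ξ m * ξ m' * hessx ψ p.1 p.2 k l
      = ∑ k, coeffOp a p ξ k * ∑ l, coeffOp a p ξ l * hessx ψ p.1 p.2 k l := by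
    rw [← hfirst ξ fun k => ∑ l, coeffOp a p ξ l * hessx ψ p.1 p.2 k l]
    simp only [← hfirst, Finset.mul_sum]
    refine Finset.sum_congr rfl fun m _ => ?_
    rw [Finset.sum_comm]
    exact Finset.sum_congr rfl fun k _ => Finset.sum_congr rfl fun m' _ =>
      Finset.sum_congr rfl fun l _ => by ring
  rw [virialForm_clm_apply_gradAlong (coeffOp_symm ha_symm p)
      ((contDiff_coeffOp ha).differentiable one_ne_zero p) hψ.contDiffAt,
    fderiv_fderiv_spatialIncl hψ, inner_fderiv_coeffOp_spatialIncl ha,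
    inner_fderiv_coeffOp_spatialIncl ha,
    gradAlong_spatialIncl_eq_gradx (hψ.differentiable two_ne_zero), hsecond, hfirst ξ,
    hfirst (WithLp.toLp 2 (gradx ψ p.1 p.2))]
  ring

lemma inner_coeffOp_self_pos_of_mem_closure {Q : Set (ℝ × (Fin n → ℝ))} {β : ℝ} (hβ : 0 < β)
    (ha : ∀ k j, Continuous fun p : ℝ × (Fin n → ℝ) => a k j p.1 p.2)
    (hell : ∀ p ∈ Q, ∀ η : Fin n → ℝ, β * ∑ i, η i ^ 2 ≤ ∑ k, ∑ j, a k j p.1 p.2 * η k * η j)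
    {p : ℝ × (Fin n → ℝ)} (hp : p ∈ closure Q) {v : EuclideanSpace ℝ (Fin n)} (hv : v ≠ 0) :
    0 < ⟪coeffOp a p v, v⟫_ℝ := by
  have hclosed : IsClosed {q : ℝ × (Fin n → ℝ) |
      β * ∑ i, v i ^ 2 ≤ ∑ k, ∑ j, a k j q.1 q.2 * v k * v j} :=
    isClosed_le continuous_const (by fun_prop)
  have hle := closure_minimal (fun q hq => hell q hq v) hclosed hp
  calc 0 < β * ‖v‖ ^ 2 := by positivity
    _ = β * ∑ i, v i ^ 2 := by simp [EuclideanSpace.norm_sq_eq]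
    _ ≤ ⟪coeffOp a p v, v⟫_ℝ := le_of_le_of_eq hle (inner_coeffOp v v).symm

theorem eventually_isStronglyPseudoconvexOn_coeffOp {K : Set (ℝ × (Fin n → ℝ))} (hK : IsCompact K)
    (ha_symm : ∀ k j, a k j = a j k)
    (ha : ∀ k j, ContDiff ℝ 1 fun p : ℝ × (Fin n → ℝ) => a k j p.1 p.2)
    (hell : ∀ p ∈ K, ∀ v ≠ 0, 0 < ⟪coeffOp a p v, v⟫_ℝ)
    (hψ : ContDiff ℝ 2 fun p : ℝ × (Fin n → ℝ) => ψ p.1 p.2)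
    (hgrad : ∀ p ∈ K, gradx ψ p.1 p.2 ≠ 0)
    (hpos : ∀ p ∈ K, ∀ ξ ≠ 0, aF a p.1 p.2 (gradx ψ p.1 p.2) ξ = 0 →
      0 < 4 * ∑ m, ∑ m', ∑ k, ∑ l,
            a m k p.1 p.2 * a m' l p.1 p.2 * ξ m * ξ m' * hessx ψ p.1 p.2 k l
        - 2 * ∑ m, ∑ k, a m k p.1 p.2 * gradx ψ p.1 p.2 m * aD a k p.1 p.2 ξ ξ
        + 4 * ∑ m, ∑ k, a m k p.1 p.2 * ξ m * aD a k p.1 p.2 ξ (gradx ψ p.1 p.2)) :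
    ∀ᶠ l in atTop, ∀ c, IsStronglyPseudoconvexOn (spatialIncl n) (coeffOp a)
      (fun q => exp (l * ψ q.1 q.2) - c) K := by
  have hgradAlong := gradAlong_spatialIncl_eq_gradx (hψ.differentiable two_ne_zero)
  refine eventually_isStronglyPseudoconvexOn_exp_sub_const hK (coeffOp_symm ha_symm)
    (contDiff_coeffOp ha) hψ (fun p hp => (hell p hp _ ?_).ne') fun p hp ξ hξ hchar => ?_
  · rw [hgradAlong]
    simpa using hgrad p hp
  · rw [hgradAlong, coeffOp_symm ha_symm, real_inner_comm, inner_coeffOp] at hchar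
    have h := hpos p hp ξ (by simpa using hξ) hchar
    rw [pseudoconvexity_expr_eq_two_mul_virialForm ha_symm ha hψ] at h
    exact pos_of_mul_pos_right h two_pos.le

end CoordinatePseudoconvexity

section SchrodingerOperator

lemma norm_sum_mul_add_mul_sq_le {ι R : Type*} [Fintype ι] [NormedRing R] {b u : ι → R} {c w : R}
    {B : ℝ} (hb : ∀ i, ‖b i‖ ≤ B) (hc : ‖c‖ ≤ B) :
    ‖∑ i, b i * u i + c * w‖ ^ 2
      ≤ (Fintype.card ι + 1) * B ^ 2 * (∑ i, ‖u i‖ ^ 2 + ‖w‖ ^ 2) := by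
  have hnorm : ‖∑ i, b i * u i + c * w‖ ≤ B * (∑ i, ‖u i‖ + ‖w‖) := by
    rw [mul_add, Finset.mul_sum]
    refine (norm_add_le _ _).trans (add_le_add (norm_sum_le_of_le _ fun i _ => ?_) ?_)
    · exact (norm_mul_le _ _).trans (by gcongr; exact hb i)
    · exact (norm_mul_le _ _).trans (by gcongr)
  have hcauchy : (∑ i, ‖u i‖ + ‖w‖) ^ 2 ≤ (Fintype.card ι + 1) * (∑ i, ‖u i‖ ^ 2 + ‖w‖ ^ 2) := by
    simpa [add_comm] using sq_sum_le_card_mul_sum_sq (s := Finset.univ)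
      (f := fun o : Option ι => o.elim ‖w‖ fun i => ‖u i‖)
  calc ‖∑ i, b i * u i + c * w‖ ^ 2 ≤ (B * (∑ i, ‖u i‖ + ‖w‖)) ^ 2 := by gcongr
    _ = B ^ 2 * (∑ i, ‖u i‖ + ‖w‖) ^ 2 := mul_pow _ _ _
    _ ≤ B ^ 2 * ((Fintype.card ι + 1) * (∑ i, ‖u i‖ ^ 2 + ‖w‖ ^ 2)) := by gcongr
    _ = (Fintype.card ι + 1) * B ^ 2 * (∑ i, ‖u i‖ ^ 2 + ‖w‖ ^ 2) := by ring

lemma norm_sq_le_two_mul_add {G : Type*} [SeminormedAddCommGroup G] (x y : G) :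
    ‖x‖ ^ 2 ≤ 2 * ‖y‖ ^ 2 + 2 * ‖x - y‖ ^ 2 := by
  calc ‖x‖ ^ 2 ≤ (‖y‖ + ‖x - y‖) ^ 2 := by gcongr; exact norm_le_norm_add_norm_sub' x y
    _ ≤ 2 * (‖y‖ ^ 2 + ‖x - y‖ ^ 2) := add_sq_le
    _ = 2 * ‖y‖ ^ 2 + 2 * ‖x - y‖ ^ 2 := mul_add _ _ _

variable {n : ℕ} {a : Fin n → Fin n → ℝ → (Fin n → ℝ) → ℝ} {b : Fin n → ℝ → (Fin n → ℝ) → ℂ}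
  {c : ℝ → (Fin n → ℝ) → ℂ} {z : ℝ × (Fin n → ℝ) → ℂ} {p : ℝ × (Fin n → ℝ)} {B : ℝ}

lemma SchOp_sub_SchOp_zero : SchOp a b c z p - SchOp a 0 0 z p
    = ∑ l, b l p.1 p.2 * pd l (fun y => z (p.1, y)) p.2 + c p.1 p.2 * z p := by
  simp only [SchOp, Pi.zero_apply, zero_mul, Finset.sum_const_zero]
  ring

lemma norm_SchOp_sub_SchOp_zero_sq_le (hb : ∀ l, ‖b l p.1 p.2‖ ≤ B) (hc : ‖c p.1 p.2‖ ≤ B) :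
    ‖SchOp a b c z p - SchOp a 0 0 z p‖ ^ 2
      ≤ (n + 1) * B ^ 2 * (∑ j, ‖pd j (fun y => z (p.1, y)) p.2‖ ^ 2 + ‖z p‖ ^ 2) := by
  simpa only [SchOp_sub_SchOp_zero, Fintype.card_fin] using norm_sum_mul_add_mul_sq_le hb hc

lemma pd_slice_of_contDiff (hz : ContDiff ℝ 2 z) (j : Fin n) (p : ℝ × (Fin n → ℝ)) :
    pd j (fun y => z (p.1, y)) p.2 = fderiv ℝ z p (0, Pi.single j 1) :=
  pd_slice (hz.differentiable two_ne_zero p) j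

lemma contDiff_coeff_mul_fderiv_apply
    (ha : ∀ k j, ContDiff ℝ 1 fun p : ℝ × (Fin n → ℝ) => a k j p.1 p.2) (hz : ContDiff ℝ 2 z)
    (k j : Fin n) (v : ℝ × (Fin n → ℝ)) :
    ContDiff ℝ 1 fun q => (a k j q.1 q.2 : ℂ) * fderiv ℝ z q v :=
  (Complex.ofRealCLM.contDiff.comp (ha k j)).mul
    ((hz.fderiv_right (m := 1) le_rfl).clm_apply contDiff_const)

lemma SchOp_zero_eq_fderiv
    (ha : ∀ k j, ContDiff ℝ 1 fun p : ℝ × (Fin n → ℝ) => a k j p.1 p.2) (hz : ContDiff ℝ 2 z) :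
    SchOp a 0 0 z p = Complex.I * fderiv ℝ z p (1, 0)
      - ∑ l, ∑ j, fderiv ℝ (fun q => (a l j q.1 q.2 : ℂ) * fderiv ℝ z q (0, Pi.single j 1)) p
          (0, Pi.single l 1) := by
  have hpd : ∀ y j, pd j (fun y => z (p.1, y)) y = fderiv ℝ z (p.1, y) (0, Pi.single j 1) :=
    fun y j => pd_slice_of_contDiff hz j (p.1, y)
  simp only [SchOp, Pi.zero_apply, zero_mul, Finset.sum_const_zero, add_zero, hpd,
    deriv_slice (hz.differentiable two_ne_zero (p.1, p.2))]
  congr 1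
  refine Finset.sum_congr rfl fun l _ => Finset.sum_congr rfl fun j _ => ?_
  exact pd_slice (g := fun q : ℝ × (Fin n → ℝ) =>
    (a l j q.1 q.2 : ℂ) * fderiv ℝ z q (0, Pi.single j 1))
    ((contDiff_coeff_mul_fderiv_apply ha hz l j _).differentiable one_ne_zero _) l

lemma continuous_SchOp_zero
    (ha : ∀ k j, ContDiff ℝ 1 fun p : ℝ × (Fin n → ℝ) => a k j p.1 p.2) (hz : ContDiff ℝ 2 z) :
    Continuous (SchOp a 0 0 z) := by
  have hSchOp := funext fun p => SchOp_zero_eq_fderiv (p := p) ha hz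
  change SchOp a 0 0 z = _ at hSchOp
  rw [hSchOp]
  exact (continuous_const.mul ((hz.continuous_fderiv two_ne_zero).clm_apply continuous_const)).sub
    (continuous_finsetSum _ fun l _ => continuous_finsetSum _ fun j _ =>
      ((contDiff_coeff_mul_fderiv_apply ha hz l j _).continuous_fderiv one_ne_zero).clm_apply
        continuous_const)

lemma continuous_pd_slice (hz : ContDiff ℝ 2 z) (j : Fin n) :
    Continuous fun p : ℝ × (Fin n → ℝ) => pd j (fun y => z (p.1, y)) p.2 := by
  simp only [pd_slice_of_contDiff hz]
  exact (hz.continuous_fderiv two_ne_zero).clm_apply continuous_const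

lemma measurable_SchOp (ha : ∀ k j, ContDiff ℝ 1 fun p : ℝ × (Fin n → ℝ) => a k j p.1 p.2)
    (hb : ∀ l, Measurable fun p : ℝ × (Fin n → ℝ) => b l p.1 p.2)
    (hc : Measurable fun p : ℝ × (Fin n → ℝ) => c p.1 p.2) (hz : ContDiff ℝ 2 z) :
    Measurable (SchOp a b c z) := by
  rw [funext fun p => eq_add_of_sub_eq' (SchOp_sub_SchOp_zero (a := a) (b := b) (c := c) (z := z)
    (p := p))]
  exact (continuous_SchOp_zero ha hz).measurable.add ((Finset.measurable_sum _ fun l _ =>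
    (hb l).mul (continuous_pd_slice hz l).measurable).add (hc.mul hz.continuous.measurable))

lemma pd_slice_eq_zero_of_notMem_tsupport (hz : ContDiff ℝ 2 z) (hp : p ∉ tsupport z)
    (j : Fin n) : pd j (fun y => z (p.1, y)) p.2 = 0 := by
  rw [pd_slice_of_contDiff hz, fderiv_of_notMem_tsupport ℝ hp, _root_.zero_apply]

lemma SchOp_eq_zero_of_notMem_tsupport
    (ha : ∀ k j, ContDiff ℝ 1 fun p : ℝ × (Fin n → ℝ) => a k j p.1 p.2) (hz : ContDiff ℝ 2 z)
    (hp : p ∉ tsupport z) : SchOp a b c z p = 0 := by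
  have hflux : ∀ k j v, fderiv ℝ (fun q : ℝ × (Fin n → ℝ) =>
      (a k j q.1 q.2 : ℂ) * fderiv ℝ z q v) p = 0 := fun k j v =>
    fderiv_of_notMem_tsupport ℝ fun h =>
      hp (tsupport_fderiv_apply_subset ℝ v (tsupport_mul_subset_right h))
  rw [eq_add_of_sub_eq' SchOp_sub_SchOp_zero, SchOp_zero_eq_fderiv ha hz]
  simp [hflux, fderiv_of_notMem_tsupport ℝ hp, pd_slice_eq_zero_of_notMem_tsupport hz hp,
    image_eq_zero_of_notMem_tsupport hp]

lemma clm_apply_SchOp_zero (L : ℂ →L[ℝ] ℝ)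
    (ha : ∀ k j, ContDiff ℝ 1 fun p : ℝ × (Fin n → ℝ) => a k j p.1 p.2) (hz : ContDiff ℝ 2 z) :
    L (SchOp a 0 0 z p) = L (Complex.I * fderiv ℝ z p (1, 0))
      - divGrad (spatialIncl n) (coeffOp a) (fun q => L (z q)) p := by
  have hLz : ContDiff ℝ 2 fun q => L (z q) := L.contDiff.comp hz
  have hreal : ∀ (r : ℝ) w, r * L w = L (r * w) := fun r w => by
    rw [← Complex.real_smul, map_smul, smul_eq_mul]
  rw [SchOp_zero_eq_fderiv ha hz, divGrad_coeffOp ha hLz]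
  simp only [map_sub, map_sum, fderiv_clm_comp_apply L (hz.differentiable two_ne_zero _), hreal,
    fderiv_clm_comp_apply L
      ((contDiff_coeff_mul_fderiv_apply ha hz _ _ _).differentiable one_ne_zero _)]

lemma norm_SchOp_zero_sq
    (ha : ∀ k j, ContDiff ℝ 1 fun p : ℝ × (Fin n → ℝ) => a k j p.1 p.2) (hz : ContDiff ℝ 2 z) :
    ‖SchOp a 0 0 z p‖ ^ 2
      = (-fderiv ℝ (fun q => (z q).im) p (1, 0)
          - divGrad (spatialIncl n) (coeffOp a) (fun q => (z q).re) p) ^ 2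
        + (fderiv ℝ (fun q => (z q).re) p (1, 0)
          - divGrad (spatialIncl n) (coeffOp a) (fun q => (z q).im) p) ^ 2 := by
  have hz₁ := hz.differentiable two_ne_zero p
  have hre := clm_apply_SchOp_zero (p := p) Complex.reCLM ha hz
  have him := clm_apply_SchOp_zero (p := p) Complex.imCLM ha hz
  have hdre : fderiv ℝ (fun q => (z q).re) p (1, 0) = (fderiv ℝ z p (1, 0)).re :=
    fderiv_clm_comp_apply Complex.reCLM hz₁ _
  have hdim : fderiv ℝ (fun q => (z q).im) p (1, 0) = (fderiv ℝ z p (1, 0)).im :=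
    fderiv_clm_comp_apply Complex.imCLM hz₁ _
  simp only [Complex.reCLM_apply, Complex.imCLM_apply, Complex.I_mul_re, Complex.I_mul_im]
    at hre him
  rw [Complex.sq_norm, Complex.normSq_apply, hre, him, hdre, hdim]
  ring

lemma sum_norm_pd_sq (hz : ContDiff ℝ 2 z) :
    ∑ j, ‖pd j (fun y => z (p.1, y)) p.2‖ ^ 2
      = ‖gradAlong (spatialIncl n) (fun q => (z q).re) p‖ ^ 2
        + ‖gradAlong (spatialIncl n) (fun q => (z q).im) p‖ ^ 2 := by
  have hz₁ := hz.differentiable two_ne_zero p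
  have hre : ∀ v, fderiv ℝ (fun q => (z q).re) p v = (fderiv ℝ z p v).re :=
    fderiv_clm_comp_apply Complex.reCLM hz₁
  have him : ∀ v, fderiv ℝ (fun q => (z q).im) p v = (fderiv ℝ z p v).im :=
    fderiv_clm_comp_apply Complex.imCLM hz₁
  simp only [EuclideanSpace.norm_sq_eq, gradAlong_spatialIncl_apply, hre, him,
    pd_slice_of_contDiff hz, norm_eq_abs, sq_abs, ← Finset.sum_add_distrib, Complex.sq_norm,
    Complex.normSq_apply, ← sq]

end SchrodingerOperator

section CarlemanEstimate

lemma setIntegral_eq_setIntegral_of_subset {X F : Type*} [MeasurableSpace X] {μ : Measure X}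
    [NormedAddCommGroup F] [NormedSpace ℝ F] {S Q : Set X} {u : X → F} (hSQ : S ⊆ Q)
    (hu : ∀ p ∉ S, u p = 0) : ∫ p in Q, u p ∂μ = ∫ p in S, u p ∂μ := by
  rw [setIntegral_eq_integral_of_forall_compl_eq_zero fun p hp => hu p fun h => hp (hSQ h),
    setIntegral_eq_integral_of_forall_compl_eq_zero hu]

variable {n : ℕ} {a : Fin n → Fin n → ℝ → (Fin n → ℝ) → ℝ} {b : Fin n → ℝ → (Fin n → ℝ) → ℂ}
  {c : ℝ → (Fin n → ℝ) → ℂ} {z : ℝ × (Fin n → ℝ) → ℂ} {p : ℝ × (Fin n → ℝ)} {B : ℝ}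
  {K Q S : Set (ℝ × (Fin n → ℝ))}

lemma continuousOn_weightedEnergy {E V : Type*} [NormedAddCommGroup E] [NormedSpace ℝ E]
    [NormedAddCommGroup V] [InnerProductSpace ℝ V] [FiniteDimensional ℝ V] {e : V →L[ℝ] E}
    {s z₁ z₂ : E → ℝ} {S : Set E} (hs : ContinuousOn s S) (hz₁ : ContDiff ℝ 1 z₁)
    (hz₂ : ContDiff ℝ 1 z₂) : ContinuousOn (weightedEnergy e s z₁ z₂) S := by
  have hg₁ := (continuous_gradAlong (e := e) hz₁).continuousOn (s := S)
  have hg₂ := (continuous_gradAlong (e := e) hz₂).continuousOn (s := S)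
  have hc₁ := hz₁.continuous.continuousOn (s := S)
  have hc₂ := hz₂.continuous.continuousOn (s := S)
  unfold weightedEnergy
  fun_prop

lemma integrableOn_norm_SchOp_sq_mul
    (ha : ∀ k j, ContDiff ℝ 1 fun p : ℝ × (Fin n → ℝ) => a k j p.1 p.2)
    (hb : ∀ l, Measurable fun p : ℝ × (Fin n → ℝ) => b l p.1 p.2)
    (hc : Measurable fun p : ℝ × (Fin n → ℝ) => c p.1 p.2) (hz : ContDiff ℝ 2 z)
    (hbB : ∀ p ∈ S, ∀ l, ‖b l p.1 p.2‖ ≤ B) (hcB : ∀ p ∈ S, ‖c p.1 p.2‖ ≤ B) (hS : IsCompact S)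
    {w : ℝ × (Fin n → ℝ) → ℝ} (hw : ContinuousOn w S) :
    IntegrableOn (fun p => ‖SchOp a b c z p‖ ^ 2 * w p) S := by
  have hmajorant : Continuous fun p : ℝ × (Fin n → ℝ) => 2 * ‖SchOp a 0 0 z p‖ ^ 2
      + 2 * ((n + 1) * B ^ 2 * (∑ j, ‖pd j (fun y => z (p.1, y)) p.2‖ ^ 2 + ‖z p‖ ^ 2)) := by
    have hSchOp := continuous_SchOp_zero ha hz
    have hpd := continuous_pd_slice hz
    have hzc := hz.continuous
    fun_prop
  refine IntegrableOn.mul_continuousOn ?_ hw hS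
  refine (hmajorant.continuousOn.integrableOn_compact hS).mono'
    ((measurable_SchOp ha hb hc hz).norm.pow_const 2).aestronglyMeasurable ?_
  filter_upwards [ae_restrict_mem hS.measurableSet] with p hp
  rw [norm_of_nonneg (sq_nonneg _)]
  refine (norm_sq_le_two_mul_add _ (SchOp a 0 0 z p)).trans ?_
  gcongr
  exact norm_SchOp_sub_SchOp_zero_sq_le (hbB p hp) (hcB p hp)

lemma sq_add_sq_le_norm_SchOp_sq
    (ha : ∀ k j, ContDiff ℝ 1 fun p : ℝ × (Fin n → ℝ) => a k j p.1 p.2) (hz : ContDiff ℝ 2 z)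
    (hbB : ∀ l, ‖b l p.1 p.2‖ ≤ B) (hcB : ‖c p.1 p.2‖ ≤ B) :
    (-fderiv ℝ (fun q => (z q).im) p (1, 0)
        - divGrad (spatialIncl n) (coeffOp a) (fun q => (z q).re) p) ^ 2
      + (fderiv ℝ (fun q => (z q).re) p (1, 0)
        - divGrad (spatialIncl n) (coeffOp a) (fun q => (z q).im) p) ^ 2
      ≤ 2 * ‖SchOp a b c z p‖ ^ 2 + 2 * ((n + 1) * B ^ 2)
        * (‖gradAlong (spatialIncl n) (fun q => (z q).re) p‖ ^ 2
          + ‖gradAlong (spatialIncl n) (fun q => (z q).im) p‖ ^ 2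
          + (z p).re ^ 2 + (z p).im ^ 2) := by
  have hlower := norm_SchOp_sub_SchOp_zero_sq_le (a := a) (z := z) hbB hcB
  have hsplit := norm_sq_le_two_mul_add (SchOp a 0 0 z p) (SchOp a b c z p)
  rw [norm_sub_rev, norm_SchOp_zero_sq ha hz] at hsplit
  rw [sum_norm_pd_sq hz, Complex.sq_norm (z p), Complex.normSq_apply] at hlower
  linarith

lemma continuousOn_div_fst {X : Type*} [TopologicalSpace X] {f : ℝ × X → ℝ} {S : Set (ℝ × X)}
    (hf : Continuous f) (ht : ∀ p ∈ S, 0 < p.1) : ContinuousOn (fun p => f p / p.1) S :=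
  hf.continuousOn.div continuousOn_fst fun p hp => (ht p hp).ne'

lemma continuousOn_exp_two_mul_div_fst_mul {X : Type*} [TopologicalSpace X] {τ : ℝ}
    {f : ℝ × X → ℝ} {S : Set (ℝ × X)} (hf : Continuous f) (ht : ∀ p ∈ S, 0 < p.1) :
    ContinuousOn (fun p => exp (2 * (τ / p.1 * f p))) S :=
  (continuousOn_const.mul ((continuousOn_div_fst continuous_const ht).mul hf.continuousOn)).rexp

lemma carleman_integrand_le {τ t g G X Z : ℝ} (hτ : 0 ≤ τ) (ht : 0 ≤ t) (hX : 0 ≤ X) (hZ : 0 ≤ Z)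
    (hg : g ≤ G) (hg₃ : g ^ 3 ≤ G) :
    τ * (g / t) * X + τ ^ 3 * (g / t) ^ 3 * Z ≤ G * (τ / t * X + (τ / t) ^ 3 * Z) := by
  calc τ * (g / t) * X + τ ^ 3 * (g / t) ^ 3 * Z
      = g * (τ / t * X) + g ^ 3 * ((τ / t) ^ 3 * Z) := by ring
    _ ≤ G * (τ / t * X) + G * ((τ / t) ^ 3 * Z) := by gcongr
    _ = G * (τ / t * X + (τ / t) ^ 3 * Z) := by ring

lemma setIntegral_carleman_integrand_le {τ G : ℝ} {f g : ℝ × (Fin n → ℝ) → ℝ}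
    (hf : Continuous f) (hg : Continuous g) (hz : ContDiff ℝ 2 z) (hS : IsCompact S) (hτ : 0 ≤ τ)
    (ht : ∀ p ∈ S, 0 < p.1) (hgG : ∀ p ∈ S, g p ≤ G) (hgG₃ : ∀ p ∈ S, g p ^ 3 ≤ G) :
    ∫ p in S, (τ * (g p / p.1) * ∑ j, ‖pd j (fun y => z (p.1, y)) p.2‖ ^ 2
        + τ ^ 3 * (g p / p.1) ^ 3 * ‖z p‖ ^ 2) * exp (2 * (τ / p.1 * f p))
      ≤ G * ∫ p in S, weightedEnergy (spatialIncl n) (fun q => τ / q.1) (fun q => (z q).re)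
          (fun q => (z q).im) p * exp (2 * (τ / p.1 * f p)) := by
  have hweight := continuousOn_exp_two_mul_div_fst_mul (τ := τ) hf ht
  have hz₁ : ContDiff ℝ 1 z := hz.of_le one_le_two
  have henergy := continuousOn_weightedEnergy (e := spatialIncl n)
    (continuousOn_div_fst (continuous_const (y := τ)) ht)
    (Complex.reCLM.contDiff.comp hz₁) (Complex.imCLM.contDiff.comp hz₁)
  have hlhs : ContinuousOn (fun p => τ * (g p / p.1) * ∑ j, ‖pd j (fun y => z (p.1, y)) p.2‖ ^ 2
      + τ ^ 3 * (g p / p.1) ^ 3 * ‖z p‖ ^ 2) S := by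
    have hφ := continuousOn_div_fst hg ht
    have hpd := fun j => (continuous_pd_slice hz j).continuousOn (s := S)
    have hzc := hz.continuous.continuousOn (s := S)
    fun_prop
  rw [← integral_const_mul]
  refine setIntegral_mono_on ((hlhs.mul hweight).integrableOn_compact hS)
    (((henergy.mul hweight).integrableOn_compact hS).const_mul G) hS.measurableSet fun p hp => ?_
  rw [← mul_assoc G]
  gcongr
  rw [weightedEnergy, ← sum_norm_pd_sq hz, sq (z p).re, sq (z p).im, ← Complex.normSq_apply,
    ← Complex.sq_norm]
  exact carleman_integrand_le hτ (ht p hp).le (by positivity) (sq_nonneg _) (hgG p hp) (hgG₃ p hp)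

theorem exists_eventually_carleman_estimate {g : ℝ × (Fin n → ℝ) → ℝ} {r : ℝ}
    (ha_symm : ∀ k j, a k j = a j k)
    (ha : ∀ k j, ContDiff ℝ 1 fun p : ℝ × (Fin n → ℝ) => a k j p.1 p.2)
    (hb : ∀ l, Measurable fun p : ℝ × (Fin n → ℝ) => b l p.1 p.2)
    (hc : Measurable fun p : ℝ × (Fin n → ℝ) => c p.1 p.2)
    (hbB : ∀ p ∈ Q, ∀ l, ‖b l p.1 p.2‖ ≤ B) (hcB : ∀ p ∈ Q, ‖c p.1 p.2‖ ≤ B)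
    (hK : IsCompact K) (hQK : Q ⊆ K) (hQt : ∀ p ∈ Q, 0 < p.1) (hg : ContDiff ℝ 2 g)
    (hpsc : IsStronglyPseudoconvexOn (spatialIncl n) (coeffOp a) (fun q => g q - r) K) :
    ∃ C > 0, ∀ᶠ τ in atTop, ∀ z : ℝ × (Fin n → ℝ) → ℂ, ContDiff ℝ 2 z → HasCompactSupport z →
      tsupport z ⊆ Q →
      ∫ p in Q, (τ * (g p / p.1) * ∑ j, ‖pd j (fun y => z (p.1, y)) p.2‖ ^ 2
          + τ ^ 3 * (g p / p.1) ^ 3 * ‖z p‖ ^ 2) * exp (2 * τ * ((g p - r) / p.1))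
        ≤ C * ∫ p in Q, ‖SchOp a b c z p‖ ^ 2 * exp (2 * τ * ((g p - r) / p.1)) := by
  have hf : ContDiff ℝ 2 fun q => g q - r := hg.sub contDiff_const
  obtain ⟨G₁, hG₁⟩ := hK.bddAbove_image hg.continuous.continuousOn
  obtain ⟨G₃, hG₃⟩ := hK.bddAbove_image (hg.continuous.pow 3).continuousOn
  set G := max 1 (max G₁ G₃)
  have hgG : ∀ p ∈ K, g p ≤ G := fun p hp => (hG₁ ⟨p, hp, rfl⟩).trans (by simp [G])
  have hgG₃ : ∀ p ∈ K, g p ^ 3 ≤ G := fun p hp => (hG₃ ⟨p, hp, rfl⟩).trans (by simp [G])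
  have hG : 0 < G := one_pos.trans_le (le_max_left _ _)
  have hHaar : (volume : Measure (ℝ × (Fin n → ℝ))).IsAddHaarMeasure :=
    Measure.prod.instIsAddHaarMeasure _ _
  obtain ⟨C, hC, hcarleman⟩ := exists_eventually_setIntegral_weightedEnergy_le volume
    (t := ContinuousLinearMap.fst ℝ ℝ (Fin n → ℝ)) (e₀ := (1, 0)) (B := 2 * ((n + 1) * B ^ 2)) hK
    (coeffOp_symm ha_symm) rfl (fun v => rfl) (contDiff_coeffOp ha) hf hpsc (by positivity)
  refine ⟨G * C, by positivity, ?_⟩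
  filter_upwards [hcarleman, eventually_ge_atTop 0] with τ hcarleman hτ z hz hzS hzQ
  have hexponent : ∀ p : ℝ × (Fin n → ℝ), 2 * τ * ((g p - r) / p.1) = 2 * (τ / p.1 * (g p - r)) :=
    fun p => by ring
  have hS : IsCompact (tsupport z) := hzS
  simp only [hexponent]
  rw [setIntegral_eq_setIntegral_of_subset hzQ fun p hp => by
      simp [pd_slice_eq_zero_of_notMem_tsupport hz hp, image_eq_zero_of_notMem_tsupport hp],
    setIntegral_eq_setIntegral_of_subset hzQ fun p hp => by
      simp [SchOp_eq_zero_of_notMem_tsupport ha hz hp], mul_assoc]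
  refine (setIntegral_carleman_integrand_le hf.continuous hg.continuous hz hS hτ
    (fun p hp => hQt p (hzQ hp)) (fun p hp => hgG p (hQK (hzQ hp)))
    fun p hp => hgG₃ p (hQK (hzQ hp))).trans (mul_le_mul_of_nonneg_left ?_ hG.le)
  exact hcarleman _ _ _ _ hS (fun p hp => ⟨hQK (hzQ hp), hQt p (hzQ hp)⟩)
    (Complex.reCLM.contDiff.comp hz) (Complex.imCLM.contDiff.comp hz)
    (tsupport_comp_subset Complex.zero_re z) (tsupport_comp_subset Complex.zero_im z)
    (integrableOn_norm_SchOp_sq_mul ha hb hc hz (fun p hp => hbB p (hzQ hp))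
      (fun p hp => hcB p (hzQ hp)) hS
      (continuousOn_exp_two_mul_div_fst_mul hf.continuous fun p hp => hQt p (hzQ hp)))
    fun p hp => sq_add_sq_le_norm_SchOp_sq ha hz (hbB p (hzQ hp)) (hcB p (hzQ hp))

lemma exists_pos_forall_ge_of_eventually_atTop {P : ℝ → Prop} (h : ∀ᶠ x in atTop, P x) :
    ∃ x₀ > 0, ∀ x ≥ x₀, P x := by
  obtain ⟨x₀, hx₀⟩ := (h.and (eventually_gt_atTop 0)).exists_forall_of_atTop
  exact ⟨x₀, (hx₀ x₀ le_rfl).2, fun x hx => (hx₀ x hx).1⟩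

end CarlemanEstimate

end

theorem statement7
    (n : ℕ) (Ω : Set (Fin n → ℝ)) (hΩ : Bornology.IsBounded Ω) (T : ℝ) (hT : 0 < T)
    (a : Fin n → Fin n → ℝ → (Fin n → ℝ) → ℝ)
    (ha_symm : ∀ k j, a k j = a j k)
    (ha_reg : ∀ k j, ContDiff ℝ 1 (fun p : ℝ × (Fin n → ℝ) => a k j p.1 p.2))
    (β : ℝ) (hβ : 0 < β)
    (ha_ell : ∀ t ∈ Set.Ioo (0:ℝ) T, ∀ x ∈ Ω, ∀ η : Fin n → ℝ,
      β * ∑ i, η i ^ 2 ≤ ∑ k, ∑ j, a k j t x * η k * η j)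
    -- `b_ℓ, c ∈ L^∞(Q)`, complex valued
    (b : Fin n → ℝ → (Fin n → ℝ) → ℂ) (c : ℝ → (Fin n → ℝ) → ℂ)
    (hb_meas : ∀ l, Measurable (fun p : ℝ × (Fin n → ℝ) => b l p.1 p.2))
    (hc_meas : Measurable (fun p : ℝ × (Fin n → ℝ) => c p.1 p.2))
    (B : ℝ)
    (hbB : ∀ l, ∀ t ∈ Set.Ioo (0:ℝ) T, ∀ x ∈ Ω, ‖b l t x‖ ≤ B)
    (hcB : ∀ t ∈ Set.Ioo (0:ℝ) T, ∀ x ∈ Ω, ‖c t x‖ ≤ B)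
    (ψ : ℝ → (Fin n → ℝ) → ℝ)
    (hψ : ContDiff ℝ 2 (fun p : ℝ × (Fin n → ℝ) => ψ p.1 p.2))
    (hgrad : ∀ t ∈ Set.Icc (0:ℝ) T, ∀ x ∈ closure Ω, gradx ψ t x ≠ 0)
    -- the pseudo-convexity inequality (ramsai) on the characteristic set
    (hpos : ∀ t ∈ Set.Icc (0:ℝ) T, ∀ x ∈ closure Ω, ∀ ξ : Fin n → ℝ, ξ ≠ 0 →
      aF a t x (gradx ψ t x) ξ = 0 →
        0 < 4 * ∑ m, ∑ m', ∑ k, ∑ l, a m k t x * a m' l t x * ξ m * ξ m'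
              * hessx ψ t x k l
          - 2 * ∑ m, ∑ k, a m k t x * gradx ψ t x m * aD a k t x ξ ξ
          + 4 * ∑ m, ∑ k, a m k t x * ξ m * aD a k t x ξ (gradx ψ t x))
    -- `M = ‖ψ‖_{C⁰(Q̄)}`
    (M : ℝ)
    (hM : M = sSup ((fun p : ℝ × (Fin n → ℝ) => |ψ p.1 p.2|) ''
      (Set.Icc 0 T ×ˢ closure Ω))) :
    ∃ lamHat > (0:ℝ), ∀ lam ≥ lamHat, ∃ τ₀ > (0:ℝ), ∃ C > (0:ℝ), ∀ τ ≥ τ₀,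
      ∀ z : ℝ × (Fin n → ℝ) → ℂ, ContDiff ℝ (⊤ : ℕ∞) z → HasCompactSupport z →
        tsupport z ⊆ Set.Ioo (0:ℝ) T ×ˢ Ω →
        (∫ p in Set.Ioo (0:ℝ) T ×ˢ Ω,
            (τ * (Real.exp (lam * ψ p.1 p.2) / p.1)
                * ∑ j, ‖pd j (fun y => z (p.1, y)) p.2‖ ^ 2
              + τ ^ 3 * (Real.exp (lam * ψ p.1 p.2) / p.1) ^ 3 * ‖z p‖ ^ 2)
            * Real.exp (2 * τ * ((Real.exp (lam * ψ p.1 p.2)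
                - Real.exp (2 * lam * M)) / p.1)))
        ≤ C * ∫ p in Set.Ioo (0:ℝ) T ×ˢ Ω,
            ‖SchOp a b c z p‖ ^ 2
            * Real.exp (2 * τ * ((Real.exp (lam * ψ p.1 p.2)
                - Real.exp (2 * lam * M)) / p.1)) := by
  set Q := Ioo 0 T ×ˢ Ω
  set K := Icc 0 T ×ˢ closure Ω
  have hQK : closure Q = K := by rw [closure_prod_eq, closure_Ioo hT.ne]
  have hK : IsCompact K := isCompact_Icc.prod hΩ.isCompact_closure
  have hell : ∀ p ∈ K, ∀ v ≠ 0, 0 < ⟪coeffOp a p v, v⟫_ℝ := fun p hp v hv =>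
    inner_coeffOp_self_pos_of_mem_closure hβ (fun k j => (ha_reg k j).continuous)
      (fun q hq => ha_ell q.1 hq.1 q.2 hq.2) (hQK.ge hp) hv
  have hpsc := eventually_isStronglyPseudoconvexOn_coeffOp hK ha_symm ha_reg hell hψ
    (fun p hp => hgrad p.1 hp.1 p.2 hp.2) fun p hp => hpos p.1 hp.1 p.2 hp.2
  obtain ⟨lamHat, hlamHat, hpsc⟩ := exists_pos_forall_ge_of_eventually_atTop hpsc
  refine ⟨lamHat, hlamHat, fun lam hlam => ?_⟩
  have hg : ContDiff ℝ 2 fun p : ℝ × (Fin n → ℝ) => exp (lam * ψ p.1 p.2) :=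
    (contDiff_const.mul hψ).exp
  obtain ⟨C, hC, hcarleman⟩ := exists_eventually_carleman_estimate ha_symm ha_reg hb_meas hc_meas
    (fun p hp l => hbB l p.1 hp.1 p.2 hp.2) (fun p hp => hcB p.1 hp.1 p.2 hp.2) hK
    (subset_closure.trans hQK.le) (fun p hp => hp.1.1) hg (hpsc lam hlam (exp (2 * lam * M)))
  obtain ⟨τ₀, hτ₀, hcarleman⟩ := exists_pos_forall_ge_of_eventually_atTop hcarleman
  exact ⟨τ₀, hτ₀, C, hC, fun τ hτ z hz => hcarleman τ hτ z (contDiff_infty.1 hz 2)⟩
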